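/- Let A and B be C*-algebras. If x is an element of the operator space projective tensor product A ⊗̂ B such that R_φ(x) = 0 for every bounded linear functional φ ∈ A*, then x = 0; that is, the family of right slice maps {R_φ : φ ∈ A*} is total on A ⊗̂ B. -/

import Mathlib

open scoped TensorProduct
open Pointwise

universe u

noncomputable section

/-- A C⋆-norm on a complex `*`-algebra.  On a matrix algebra over a C⋆-algebra such a
norm is unique, namely the canonical C⋆-norm. -/
structure IsCStarNorm {M : Type*} [NonUnitalRing M] [StarRing M] [Module ℂ M]
    (N : M → ℝ) : Prop where
  add_le : ∀ x y, N (x + y) ≤ N x + N y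
  smul_eq : ∀ (c : ℂ) (x : M), N (c • x) = ‖c‖ * N x
  eq_zero_of : ∀ x, N x = 0 → x = 0
  mul_le : ∀ x y, N (x * y) ≤ N x * N y
  star_mul_self : ∀ x, N (star x * x) = N x * N x

/-- The operator space projective tensor norm `‖·‖_∧` on the algebraic tensor product
`A ⊗ B`, relative to given families of matrix norms on `A` and `B`:
`‖u‖_∧ = inf { ‖α‖ ‖v‖ ‖w‖ ‖β‖ : u = α (v ⊗ w) β }` where `v ∈ M_p(A)`, `w ∈ M_q(B)`,
`α ∈ M_{1,pq}(ℂ)` and `β ∈ M_{pq,1}(ℂ)` (row and column vectors carrying the Euclidean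
norm, which is their norm as scalar matrices). -/
noncomputable def osProjNorm {A B : Type u}
    [AddCommGroup A] [Module ℂ A] [AddCommGroup B] [Module ℂ B]
    (NA : ∀ p : ℕ, Matrix (Fin p) (Fin p) A → ℝ)
    (NB : ∀ q : ℕ, Matrix (Fin q) (Fin q) B → ℝ) (u : A ⊗[ℂ] B) : ℝ :=
  sInf { r : ℝ | ∃ (p q : ℕ) (α : Fin p × Fin q → ℂ) (v : Matrix (Fin p) (Fin p) A)
      (w : Matrix (Fin q) (Fin q) B) (β : Fin p × Fin q → ℂ),
      u = ∑ ik : Fin p × Fin q, ∑ jl : Fin p × Fin q,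
            (α ik * β jl) • (v ik.1 jl.1 ⊗ₜ[ℂ] w ik.2 jl.2) ∧
      r = Real.sqrt (∑ ik, ‖α ik‖ ^ 2) * NA p v * NB q w *
            Real.sqrt (∑ jl, ‖β jl‖ ^ 2) }

/-- `X` is a completion of the algebraic tensor product `A ⊗ B` with respect to the
norm `ν`, via the (necessarily isometric) dense embedding `ι`, and the multiplication and
involution of `X` are the canonical ones induced from `A` and `B`.  Applied with
`ν = osProjNorm NA NB` (for the canonical matrix C⋆-norms `NA`, `NB`) this characterizes
the Banach `*`-algebra `A ⊗̂ B` (the operator space projective tensor product) up to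
isometric `*`-isomorphism; applied with `ν = bsProjNorm` it characterizes the Banach
space projective tensor product `A ⊗_γ B`. -/
structure IsTensorCompletion {A B : Type u} [NonUnitalRing A] [StarRing A] [Module ℂ A]
    [NonUnitalRing B] [StarRing B] [Module ℂ B] (ν : A ⊗[ℂ] B → ℝ)
    (X : Type u) [NonUnitalNormedRing X] [StarRing X] [NormedSpace ℂ X] [CompleteSpace X]
    (ι : A ⊗[ℂ] B →ₗ[ℂ] X) : Prop where
  norm_eq : ∀ u, ‖ι u‖ = ν u
  dense : DenseRange ι
  mul_tmul : ∀ (a c : A) (b d : B),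
    ι (a ⊗ₜ[ℂ] b) * ι (c ⊗ₜ[ℂ] d) = ι ((a * c) ⊗ₜ[ℂ] (b * d))
  star_tmul : ∀ (a : A) (b : B), star (ι (a ⊗ₜ[ℂ] b)) = ι (star a ⊗ₜ[ℂ] star b)

/-- The product ideal `S ⊗̂ T`: the closure in `X` (a completion of `A ⊗ B`) of the span of
elementary tensors `a ⊗ b` with `a ∈ S`, `b ∈ T`. -/
def tensorIdeal {A B : Type u} [NonUnitalRing A] [StarRing A] [Module ℂ A]
    [NonUnitalRing B] [StarRing B] [Module ℂ B]
    {X : Type u} [NonUnitalNormedRing X] [StarRing X] [NormedSpace ℂ X] [CompleteSpace X]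
    (ι : A ⊗[ℂ] B →ₗ[ℂ] X) (S : Set A) (T : Set B) : Set X :=
  closure (ι '' (Submodule.span ℂ (Set.image2 (fun a b => a ⊗ₜ[ℂ] b) S T)))

/-- A closed prime (two-sided) ideal of a Banach algebra: a proper closed two-sided ideal `K`
such that whenever the product of two closed two-sided ideals is contained in `K`, one of them
is contained in `K`. -/
def IsClosedPrimeIdeal {Y : Type u} [NonUnitalNormedRing Y] (K : TwoSidedIdeal Y) : Prop :=
  IsClosed (K : Set Y) ∧ (K : Set Y) ≠ Set.univ ∧
    ∀ I J : TwoSidedIdeal Y, IsClosed (I : Set Y) → IsClosed (J : Set Y) →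
      (∀ x ∈ I, ∀ y ∈ J, x * y ∈ K) → (I : Set Y) ⊆ (K : Set Y) ∨ (J : Set Y) ⊆ (K : Set Y)

/-- An irreducible continuous `*`-representation of a Banach `*`-algebra `Y` on a complex
Hilbert space. -/
structure IrreducibleRepOn (Y : Type u)
    [NonUnitalNormedRing Y] [StarRing Y] [NormedSpace ℂ Y] where
  H : Type u
  [normH : NormedAddCommGroup H]
  [ipsH : InnerProductSpace ℂ H]
  [csH : CompleteSpace H]
  π : Y →⋆ₙₐ[ℂ] (H →L[ℂ] H)
  continuous : Continuous π
  nonzero : ∃ y, π y ≠ 0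
  irreducible : ∀ S : Submodule ℂ H, IsClosed (S : Set H) →
    (∀ y : Y, ∀ v ∈ S, π y v ∈ S) → S = ⊥ ∨ S = ⊤

/-- A primitive ideal: the kernel of an irreducible `*`-representation. -/
def IsPrimitiveIdeal {Y : Type u} [NonUnitalNormedRing Y] [StarRing Y] [NormedSpace ℂ Y]
    (K : TwoSidedIdeal Y) : Prop :=
  ∃ ρ : IrreducibleRepOn Y, ∀ y, y ∈ K ↔ ρ.π y = 0

/-- A subset `K` of a ring is modular (as an ideal) if there is a relative unit `e`
with `x * e - x ∈ K` and `e * x - x ∈ K` for every `x`. -/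
def IsModularIdealSet {Y : Type u} [NonUnitalRing Y] (K : Set Y) : Prop :=
  ∃ e : Y, ∀ x : Y, x * e - x ∈ K ∧ e * x - x ∈ K

/-- A maximal modular (two-sided) ideal: a modular ideal which is proper and maximal among
proper two-sided ideals. -/
def IsMaximalModularIdeal {Y : Type u} [NonUnitalRing Y] (K : TwoSidedIdeal Y) : Prop :=
  IsModularIdealSet (K : Set Y) ∧ (K : Set Y) ≠ Set.univ ∧
    ∀ L : TwoSidedIdeal Y, (K : Set Y) ⊆ (L : Set Y) →
      (L : Set Y) = (K : Set Y) ∨ (L : Set Y) = Set.univ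

/-- The operator norm of a `p × p` matrix of bounded operators on a Hilbert space `H`,
viewed as an operator on the `ℓ²`-direct sum `H ⊕ ⋯ ⊕ H`. -/
noncomputable def opMatrixNorm {H : Type u} [NormedAddCommGroup H] [InnerProductSpace ℂ H]
    {p : ℕ} (T : Matrix (Fin p) (Fin p) (H →L[ℂ] H)) : ℝ :=
  sSup { r : ℝ | ∃ x : Fin p → H, (∑ i, ‖x i‖ ^ 2) ≤ 1 ∧
      r = Real.sqrt (∑ i, ‖∑ j, (T i j) (x j)‖ ^ 2) }

/-- An operator algebra structure on a Banach algebra `Y`: a bicontinuous algebra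
homomorphism of `Y` into the bounded operators on some Hilbert space. -/
structure OperatorAlgebraEmbedding (Y : Type u) [NonUnitalNormedRing Y] [NormedSpace ℂ Y] where
  H : Type u
  [normH : NormedAddCommGroup H]
  [ipsH : InnerProductSpace ℂ H]
  [csH : CompleteSpace H]
  ρ : Y →ₙₐ[ℂ] (H →L[ℂ] H)
  c : ℝ
  C : ℝ
  c_pos : 0 < c
  lower : ∀ y, c * ‖y‖ ≤ ‖ρ y‖
  upper : ∀ y, ‖ρ y‖ ≤ C * ‖y‖

/-- The matrix norms on `Y` induced by an operator algebra embedding, giving `Y` its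
operator space structure: the norm of `v ∈ M_p(Y)` is the operator norm of the matrix
of operators obtained by applying the embedding entrywise. -/
noncomputable def OperatorAlgebraEmbedding.matrixNorm {Y : Type u}
    [NonUnitalNormedRing Y] [NormedSpace ℂ Y] (e : OperatorAlgebraEmbedding Y)
    (p : ℕ) (v : Matrix (Fin p) (Fin p) Y) : ℝ :=
  letI := e.normH; letI := e.ipsH
  opMatrixNorm (v.map e.ρ)

/-- The Banach space projective tensor norm `‖·‖_γ` on the algebraic tensor product. -/
noncomputable def bsProjNorm {A B : Type u} [NonUnitalNormedRing A] [NormedSpace ℂ A]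
    [NonUnitalNormedRing B] [NormedSpace ℂ B] (u : A ⊗[ℂ] B) : ℝ :=
  sInf { r : ℝ | ∃ (n : ℕ) (a : Fin n → A) (b : Fin n → B),
      u = ∑ i, a i ⊗ₜ[ℂ] b i ∧ r = ∑ i, ‖a i‖ * ‖b i‖ }

/-- A C⋆-algebra `A` is subhomogeneous if there is `n : ℕ` bounding the (finite)
dimensions of all its irreducible `*`-representations. -/
def IsSubhomogeneous (A : Type u) [NonUnitalCStarAlgebra A] : Prop :=
  ∃ n : ℕ, ∀ ρ : IrreducibleRepOn A,
    letI := ρ.normH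
    letI := ρ.ipsH
    FiniteDimensional ℂ ρ.H ∧ Module.finrank ℂ ρ.H ≤ n

/-!
Up to a universal constant, a norm-one functional on `A ⊗̂ B` is at most `r` on every tensor `z`
such that both `z` and its flip have Haagerup norm at most `r`. Indeed a simultaneous singular
value decomposition gives a single representation `z = ∑ xᵢ ⊗ yᵢ` with weights `sᵢ` witnessing both
bounds. The weights are absorbed into matrix entries: a unit vector with equal mass on many dyadic
levels turns the functional into bilinear forms on `M_p(A) × M_p(B)`, to which the noncommutative
Grothendieck inequality applies.

If all slice maps vanish on `x = lim y m`, then `φ ⊗ ψ` tends to `0` along `y` for all `φ` and `ψ`.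
Injectivity of the Haagerup norm then makes the Haagerup norms of `y m` and of its flip eventually
small, so every functional vanishes on `x`.
-/

section Unitary

variable {𝒜 : Type*} [CStarAlgebra 𝒜] [PartialOrder 𝒜] [StarOrderedRing 𝒜]

/-- The element `√(1 - s²)`: for a selfadjoint contraction `s = sin θ` it plays the role of
`cos θ`, so that `cosPart s + i s` is unitary. -/
def cosPart (s : 𝒜) : 𝒜 := CFC.sqrt (1 - s ^ 2)

lemma cosPart_neg (s : 𝒜) : cosPart (-s) = cosPart s := by
  rw [cosPart, cosPart, neg_sq]

lemma cosPart_nonneg (s : 𝒜) : 0 ≤ cosPart s := CFC.sqrt_nonneg _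

lemma one_sub_sq_nonneg_of_norm_le_one {s : 𝒜} (hs : IsSelfAdjoint s) (hs1 : ‖s‖ ≤ 1) :
    0 ≤ 1 - s ^ 2 := by
  rw [sub_nonneg, ← CStarAlgebra.norm_le_one_iff_of_nonneg (s ^ 2) hs.sq_nonneg, sq,
    hs.norm_mul_self]
  exact pow_le_one₀ (norm_nonneg _) hs1

lemma cosPart_sq {s : 𝒜} (hs : IsSelfAdjoint s) (hs1 : ‖s‖ ≤ 1) :
    cosPart s ^ 2 = 1 - s ^ 2 := by
  rw [sq, cosPart, CFC.sqrt_mul_sqrt_self _ (one_sub_sq_nonneg_of_norm_le_one hs hs1)]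

lemma cosPart_le_one {s : 𝒜} (hs : IsSelfAdjoint s) (hs1 : ‖s‖ ≤ 1) : cosPart s ≤ 1 := by
  have hsq : cosPart s ^ 2 ≤ 1 := by
    rw [cosPart_sq hs hs1]
    exact sub_le_self _ hs.sq_nonneg
  have hsa := (cosPart_nonneg s).isSelfAdjoint
  rw [← CStarAlgebra.norm_le_one_iff_of_nonneg _ hsa.sq_nonneg, sq, hsa.norm_mul_self,
    sq_le_one_iff₀ (norm_nonneg _)] at hsq
  exact (CStarAlgebra.norm_le_one_iff_of_nonneg _ (cosPart_nonneg s)).1 hsq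

lemma sq_le_self_of_nonneg_of_le_one {q : 𝒜} (hq : 0 ≤ q) (hq1 : q ≤ 1) : q ^ 2 ≤ q := by
  simpa only [pow_one] using CStarAlgebra.pow_antitone hq hq1 one_le_two

lemma one_sub_cosPart_le_sq {s : 𝒜} (hs : IsSelfAdjoint s) (hs1 : ‖s‖ ≤ 1) :
    1 - cosPart s ≤ s ^ 2 := by
  have hle := sq_le_self_of_nonneg_of_le_one (cosPart_nonneg s) (cosPart_le_one hs hs1)
  rw [cosPart_sq hs hs1] at hle
  exact sub_le_comm.1 hle

lemma norm_one_sub_cosPart_le {s : 𝒜} (hs : IsSelfAdjoint s) (hs1 : ‖s‖ ≤ 1) :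
    ‖1 - cosPart s‖ ≤ ‖s‖ ^ 2 :=
  (CStarAlgebra.norm_le_norm_of_nonneg_of_le (sub_nonneg.2 (cosPart_le_one hs hs1))
    (one_sub_cosPart_le_sq hs hs1)).trans_eq (by rw [sq, hs.norm_mul_self])

omit [PartialOrder 𝒜] [StarOrderedRing 𝒜] in
lemma I_smul_one_mem_unitary : Complex.I • (1 : 𝒜) ∈ unitary 𝒜 := by
  rw [Unitary.mem_iff]
  simp [smul_smul]

lemma cosPart_add_I_smul_mem_unitary {s : 𝒜} (hs : IsSelfAdjoint s) (hs1 : ‖s‖ ≤ 1) :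
    cosPart s + Complex.I • s ∈ unitary 𝒜 := by
  have hmem := mul_mem (Unitary.star_mem I_smul_one_mem_unitary)
    (hs.neg.self_add_I_smul_cfcSqrt_sub_sq_mem_unitary _ ((norm_neg s).trans_le hs1))
  convert hmem using 1
  simp [cosPart, smul_smul]

lemma re_le_of_forall_unitary_re_le (f : 𝒜 →L[ℂ] ℂ) {r : ℝ} (hf : ∀ u ∈ unitary 𝒜, (f u).re ≤ r)
    {s : 𝒜} (hs : IsSelfAdjoint s) (hs1 : ‖s‖ ≤ 1) : (f s).re ≤ r := by
  have hu := hs.self_add_I_smul_cfcSqrt_sub_sq_mem_unitary _ hs1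
  have h₁ := hf _ hu
  have h₂ := hf _ (Unitary.star_mem hu)
  simp only [star_add, star_smul, hs.star_eq, (CFC.sqrt_nonneg (1 - s ^ 2)).star_eq, map_add,
    map_smul, Complex.add_re, smul_eq_mul, Complex.star_def, Complex.conj_I, neg_mul,
    Complex.neg_re] at h₁ h₂
  linarith

end Unitary

lemma le_of_forall_pos_le_add_mul {a b K δ : ℝ} (hδ : 0 < δ)
    (h : ∀ r, 0 < r → r ≤ δ → a ≤ b + r * K) : a ≤ b := by
  have hlim : Filter.Tendsto (fun r : ℝ ↦ b + r * K) (nhdsWithin 0 (Set.Ioi 0)) (nhds b) := by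
    have hcont : Continuous fun r : ℝ ↦ b + r * K := by fun_prop
    simpa using (hcont.tendsto 0).mono_left nhdsWithin_le_nhds
  refine ge_of_tendsto hlim ?_
  filter_upwards [Ioo_mem_nhdsGT hδ] with r hr using h r hr.1 hr.2.le

lemma norm_smul_le_one_of_le_inv {E : Type*} [SeminormedAddCommGroup E] [NormedSpace ℝ E]
    {x : E} {r M : ℝ} (hr : 0 ≤ r) (hM : 0 < M) (hx : ‖x‖ ≤ M) (hrM : r ≤ M⁻¹) : ‖r • x‖ ≤ 1 := by
  rw [norm_smul, Real.norm_of_nonneg hr]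
  calc r * ‖x‖ ≤ M⁻¹ * M := by gcongr
    _ = 1 := inv_mul_cancel₀ hM.ne'

/-- A bounded bilinear form on a pair of unital C⋆-algebras whose real part is maximal on pairs of
unitaries at `(1, 1)`, with value `1` there. -/
structure IsMaximalAtOne {𝒜 ℬ : Type*} [CStarAlgebra 𝒜] [CStarAlgebra ℬ]
    (V : 𝒜 →L[ℂ] ℬ →L[ℂ] ℂ) : Prop where
  one_one : V 1 1 = 1
  re_le_one : ∀ u ∈ unitary 𝒜, ∀ v ∈ unitary ℬ, (V u v).re ≤ 1

namespace IsMaximalAtOne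

variable {𝒜 : Type*} [CStarAlgebra 𝒜] [PartialOrder 𝒜] [StarOrderedRing 𝒜]
variable {ℬ : Type*} [CStarAlgebra ℬ] [PartialOrder ℬ] [StarOrderedRing ℬ]
variable {V : 𝒜 →L[ℂ] ℬ →L[ℂ] ℂ}

omit [PartialOrder 𝒜] [StarOrderedRing 𝒜] [PartialOrder ℬ] [StarOrderedRing ℬ] in
lemma flip (h : IsMaximalAtOne V) : IsMaximalAtOne V.flip where
  one_one := h.one_one
  re_le_one u hu v hv := h.re_le_one v hv u hu

omit [PartialOrder ℬ] [StarOrderedRing ℬ] in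
lemma re_apply_one_nonneg (h : IsMaximalAtOne V) {p : 𝒜} (hp : 0 ≤ p) : 0 ≤ (V p 1).re := by
  have hcontr : ∀ q : 𝒜, 0 ≤ q → ‖q‖ ≤ 1 → 0 ≤ (V q 1).re := by
    intro q hq hq1
    have hq1' : 0 ≤ 1 - q :=
      sub_nonneg.2 ((CStarAlgebra.norm_le_one_iff_of_nonneg q hq).1 hq1)
    have hle := re_le_of_forall_unitary_re_le (V.flip 1)
      (fun v hv ↦ h.re_le_one v hv 1 (one_mem _)) hq1'.isSelfAdjoint
      ((CStarAlgebra.norm_le_one_iff_of_nonneg _ hq1').2 (sub_le_self 1 hq))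
    simpa [h.one_one] using hle
  rcases eq_or_ne p 0 with rfl | hp0
  · simp
  have hpos : 0 < ‖p‖⁻¹ := inv_pos.2 (norm_pos_iff.2 hp0)
  have hscaled := hcontr (‖p‖⁻¹ • p) (smul_nonneg hpos.le hp)
    (norm_smul_le_one_of_le_inv hpos.le (norm_pos_iff.2 hp0) le_rfl le_rfl)
  rw [ContinuousLinearMap.map_smul_of_tower, smul_apply, Complex.smul_re] at hscaled
  exact nonneg_of_mul_nonneg_right hscaled hpos

omit [PartialOrder ℬ] [StarOrderedRing ℬ] in
lemma re_apply_one_mono (h : IsMaximalAtOne V) {p q : 𝒜} (hpq : p ≤ q) :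
    (V p 1).re ≤ (V q 1).re := by
  simpa using h.re_apply_one_nonneg (sub_nonneg.2 hpq)

lemma neg_re_le_cosPart (h : IsMaximalAtOne V) {s : 𝒜} {t : ℬ} (hs : IsSelfAdjoint s)
    (hs1 : ‖s‖ ≤ 1) (ht : IsSelfAdjoint t) (ht1 : ‖t‖ ≤ 1) :
    -(V s t).re ≤ (V (1 - cosPart s) 1).re + (V 1 (1 - cosPart t)).re
      - (V (1 - cosPart s) (1 - cosPart t)).re := by
  have hpos := h.re_le_one _ (cosPart_add_I_smul_mem_unitary hs hs1) _
    (cosPart_add_I_smul_mem_unitary ht ht1)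
  have hneg := h.re_le_one _ (cosPart_add_I_smul_mem_unitary hs.neg (by rwa [norm_neg])) _
    (cosPart_add_I_smul_mem_unitary ht.neg (by rwa [norm_neg]))
  simp [h.one_one, cosPart_neg] at hpos hneg ⊢
  linarith

lemma abs_re_le_cosPart (h : IsMaximalAtOne V) {s : 𝒜} {t : ℬ} (hs : IsSelfAdjoint s)
    (hs1 : ‖s‖ ≤ 1) (ht : IsSelfAdjoint t) (ht1 : ‖t‖ ≤ 1) :
    |(V s t).re| ≤ (V (1 - cosPart s) 1).re + (V 1 (1 - cosPart t)).re
      - (V (1 - cosPart s) (1 - cosPart t)).re := by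
  have hpos := h.neg_re_le_cosPart hs hs1 ht ht1
  have hneg := h.neg_re_le_cosPart hs.neg (by rwa [norm_neg]) ht ht1
  rw [cosPart_neg, map_neg, neg_apply, Complex.neg_re, neg_neg] at hneg
  exact abs_le.2 ⟨by linarith, hneg⟩

lemma abs_re_le_of_norm_le_one (h : IsMaximalAtOne V) {s : 𝒜} {t : ℬ} (hs : IsSelfAdjoint s)
    (hs1 : ‖s‖ ≤ 1) (ht : IsSelfAdjoint t) (ht1 : ‖t‖ ≤ 1) :
    |(V s t).re| ≤ (V (s ^ 2) 1).re + (V 1 (t ^ 2)).re + ‖V‖ * (‖s‖ ^ 2 * ‖t‖ ^ 2) := by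
  have hV : ‖V (1 - cosPart s) (1 - cosPart t)‖ ≤ ‖V‖ * (‖s‖ ^ 2 * ‖t‖ ^ 2) := by
    refine (V.le_opNorm₂ _ _).trans ?_
    rw [mul_assoc]
    gcongr
    exacts [norm_one_sub_cosPart_le hs hs1, norm_one_sub_cosPart_le ht ht1]
  have hre := (abs_le.1 ((Complex.abs_re_le_norm _).trans hV)).1
  have hleft := h.re_apply_one_mono (one_sub_cosPart_le_sq hs hs1)
  have hright := h.flip.re_apply_one_mono (one_sub_cosPart_le_sq ht ht1)
  simp only [ContinuousLinearMap.flip_apply] at hright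
  linarith [h.abs_re_le_cosPart hs hs1 ht ht1]

lemma abs_re_le (h : IsMaximalAtOne V) {s : 𝒜} {t : ℬ} (hs : IsSelfAdjoint s)
    (ht : IsSelfAdjoint t) : |(V s t).re| ≤ (V (s ^ 2) 1).re + (V 1 (t ^ 2)).re := by
  -- Apply the previous bound to `r s` and `r t` and let `r → 0`: the error is of order `r⁴`.
  set M := ‖s‖ + ‖t‖ + 1
  have hM0 : 0 < M := by positivity
  refine le_of_forall_pos_le_add_mul (K := ‖V‖ * (‖s‖ ^ 2 * ‖t‖ ^ 2)) (δ := min 1 M⁻¹)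
    (by positivity) fun r hr hrδ ↦ ?_
  have hs1 : ‖r • s‖ ≤ 1 := norm_smul_le_one_of_le_inv hr.le hM0
    (by linarith [norm_nonneg t]) (hrδ.trans (min_le_right _ _))
  have ht1 : ‖r • t‖ ≤ 1 := norm_smul_le_one_of_le_inv hr.le hM0
    (by linarith [norm_nonneg s]) (hrδ.trans (min_le_right _ _))
  have hscaled := h.abs_re_le_of_norm_le_one (.smul (.all r) hs) hs1 (.smul (.all r) ht) ht1
  simp only [smul_pow, ContinuousLinearMap.map_smul_of_tower, smul_apply, Complex.smul_re,
    smul_eq_mul, abs_mul, abs_of_pos hr, norm_smul, Real.norm_eq_abs, mul_pow] at hscaled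
  have hr1 : r ^ 2 ≤ r := pow_le_of_le_one hr.le (hrδ.trans (min_le_left _ _)) two_ne_zero
  have herr : r ^ 2 * (‖V‖ * (‖s‖ ^ 2 * ‖t‖ ^ 2)) ≤ r * (‖V‖ * (‖s‖ ^ 2 * ‖t‖ ^ 2)) := by gcongr
  refine le_of_mul_le_mul_left (a := r ^ 2) ?_ (by positivity)
  nlinarith [mul_le_mul_of_nonneg_left herr (sq_nonneg r)]

omit [PartialOrder ℬ] [StarOrderedRing ℬ] in
lemma im_apply_one_eq_zero (h : IsMaximalAtOne V) {s : 𝒜} (hs : IsSelfAdjoint s) :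
    (V s 1).im = 0 := by
  have hneg : ∀ s : 𝒜, IsSelfAdjoint s → -(V s 1).im ≤ 0 := by
    intro s hs
    refine le_of_forall_pos_le_add_mul (K := (V (s ^ 2) 1).re) (δ := (‖s‖ + 1)⁻¹)
      (by positivity) fun r hr hrδ ↦ ?_
    have hrs : IsSelfAdjoint (r • s) := .smul (.all r) hs
    have hrs1 : ‖r • s‖ ≤ 1 :=
      norm_smul_le_one_of_le_inv hr.le (by positivity) (le_add_of_nonneg_right zero_le_one) hrδ
    have hunit := h.re_le_one _ (cosPart_add_I_smul_mem_unitary hrs hrs1) 1 (one_mem _)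
    have hcos := h.re_apply_one_mono (one_sub_cosPart_le_sq hrs hrs1)
    simp only [map_add, map_sub, map_smul, ContinuousLinearMap.map_smul_of_tower, add_apply,
      sub_apply, smul_apply, Complex.add_re,
      Complex.sub_re, smul_pow, Complex.smul_re, smul_eq_mul, Complex.I_mul_re, Complex.smul_im,
      h.one_one, Complex.one_re] at hunit hcos
    refine le_of_mul_le_mul_left (a := r) ?_ hr
    linarith
  refine le_antisymm ?_ (neg_nonpos.1 (hneg s hs))
  simpa using hneg (-s) hs.neg

lemma im_le (h : IsMaximalAtOne V) {s : 𝒜} {q : ℬ} (hs : IsSelfAdjoint s) (hs1 : ‖s‖ ≤ 1)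
    (hq : 0 ≤ q) (hq1 : q ≤ 1) :
    (V s q).im ≤ 2 * (V (s ^ 2) 1).re + 2 * (V 1 q).re := by
  have hcos0 : 0 ≤ 1 - cosPart s := sub_nonneg.2 (cosPart_le_one hs hs1)
  have hunit : (V (cosPart s + Complex.I • s) (1 - q)).re ≤ 1 := by
    refine re_le_of_forall_unitary_re_le _ (fun v hv ↦ h.re_le_one _
      (cosPart_add_I_smul_mem_unitary hs hs1) v hv) (sub_nonneg.2 hq1).isSelfAdjoint ?_
    exact (CStarAlgebra.norm_le_one_iff_of_nonneg _ (sub_nonneg.2 hq1)).2 (sub_le_self 1 hq)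
  have hre := neg_le_of_abs_le (h.abs_re_le hcos0.isSelfAdjoint hq.isSelfAdjoint)
  have hcos := h.re_apply_one_mono (one_sub_cosPart_le_sq hs hs1)
  have hcosSq := h.re_apply_one_mono
    (sq_le_self_of_nonneg_of_le_one hcos0 (sub_le_self 1 (cosPart_nonneg s)))
  have hqSq := h.flip.re_apply_one_mono (sq_le_self_of_nonneg_of_le_one hq hq1)
  have him := h.im_apply_one_eq_zero hs
  simp only [map_add, map_sub, map_smul, add_apply,
    sub_apply, smul_apply, Complex.add_re, Complex.sub_re,
    smul_eq_mul, Complex.I_mul_re, ContinuousLinearMap.flip_apply, h.one_one, Complex.one_re]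
    at hunit hre hcos hcosSq hqSq
  linarith

lemma abs_im_le_of_le_one (h : IsMaximalAtOne V) {p : 𝒜} {q : ℬ} (hp : 0 ≤ p) (hp1 : p ≤ 1)
    (hq : 0 ≤ q) (hq1 : q ≤ 1) {r : ℝ} (hr : 0 < r) (hr1 : r ≤ 1) :
    |(V p q).im| ≤ 2 * r * (V p 1).re + 2 * r⁻¹ * (V 1 q).re := by
  have hrp1 : ‖r • p‖ ≤ 1 := norm_smul_le_one_of_le_inv hr.le one_pos
    ((CStarAlgebra.norm_le_one_iff_of_nonneg p hp).2 hp1) (by simpa)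
  have hrp : IsSelfAdjoint (r • p) := .smul (.all r) hp.isSelfAdjoint
  have hpSq := h.re_apply_one_mono (sq_le_self_of_nonneg_of_le_one hp hp1)
  have hpos := h.im_le hrp hrp1 hq hq1
  have hneg := h.im_le hrp.neg (by rwa [norm_neg]) hq hq1
  simp only [neg_sq, map_neg, smul_pow, ContinuousLinearMap.map_smul_of_tower, smul_apply,
    neg_apply, Complex.smul_re, Complex.neg_im, Complex.smul_im,
    smul_eq_mul] at hpos hneg
  have habs : r * |(V p q).im| ≤ 2 * (r ^ 2 * (V (p ^ 2) 1).re) + 2 * (V 1 q).re := by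
    rw [← abs_of_pos hr, ← abs_mul, abs_of_pos hr]
    exact abs_le.2 ⟨by linarith, hpos⟩
  refine le_of_mul_le_mul_left (a := r) ?_ hr
  calc r * |(V p q).im| ≤ 2 * (r ^ 2 * (V (p ^ 2) 1).re) + 2 * (V 1 q).re := habs
    _ ≤ 2 * (r ^ 2 * (V p 1).re) + 2 * (V 1 q).re := by gcongr
    _ = r * (2 * r * (V p 1).re + 2 * r⁻¹ * (V 1 q).re) := by field_simp

lemma abs_im_le (h : IsMaximalAtOne V) {p : 𝒜} {q : ℬ} (hp : 0 ≤ p) (hp1 : p ≤ 1)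
    (hq : 0 ≤ q) (hq1 : q ≤ 1) {r : ℝ} (hr : 0 < r) :
    |(V p q).im| ≤ 2 * r * (V p 1).re + 2 * r⁻¹ * (V 1 q).re := by
  rcases le_total r 1 with hr1 | hr1
  · exact h.abs_im_le_of_le_one hp hp1 hq hq1 hr hr1
  · have hflip := h.flip.abs_im_le_of_le_one hq hq1 hp hp1 (inv_pos.2 hr)
      (inv_le_one_of_one_le₀ hr1)
    simp only [ContinuousLinearMap.flip_apply, inv_inv] at hflip
    linarith

end IsMaximalAtOne

section Rademacher

/-- The signed sum `∑ εᵢ hᵢ`. Averaged over all signs `ε`, it stands for a Rademacher sum. -/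
def signedSum {n : ℕ} {M : Type*} [AddCommGroup M] (h : Fin n → M) (ε : Fin n → ℤˣ) : M :=
  ∑ i, ε i • h i

variable {M N P : Type*} [AddCommGroup M] [AddCommGroup N] [AddCommGroup P]

lemma signedSum_cons_one {n : ℕ} (h : Fin (n + 1) → M) (ε : Fin n → ℤˣ) :
    signedSum h (Fin.cons 1 ε) = h 0 + signedSum (Fin.tail h) ε := by
  simp [signedSum, Fin.sum_univ_succ, Fin.tail]

lemma signedSum_cons_neg_one {n : ℕ} (h : Fin (n + 1) → M) (ε : Fin n → ℤˣ) :
    signedSum h (Fin.cons (-1) ε) = -h 0 + signedSum (Fin.tail h) ε := by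
  simp [signedSum, Fin.sum_univ_succ, Fin.tail, Units.smul_def]

lemma sum_signs_succ {n : ℕ} (f : (Fin (n + 1) → ℤˣ) → M) :
    ∑ ε, f ε = ∑ ε : Fin n → ℤˣ, (f (Fin.cons 1 ε) + f (Fin.cons (-1) ε)) := by
  rw [← (Fin.consEquiv fun _ ↦ ℤˣ).sum_comp, Fintype.sum_prod_type]
  simp [Finset.sum_add_distrib, Fin.consEquiv]

lemma sum_bilin_signedSum {R : Type*} [CommRing R] [Module R M] [Module R N] [Module R P]
    (Φ : M →ₗ[R] N →ₗ[R] P) {n : ℕ} (h : Fin n → M) (k : Fin n → N) :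
    ∑ ε, Φ (signedSum h ε) (signedSum k ε) = 2 ^ n • ∑ i, Φ (h i) (k i) := by
  induction n with
  | zero => simp [signedSum]
  | succ n ih =>
    have hstep : ∀ ε : Fin n → ℤˣ,
        Φ (signedSum h (Fin.cons 1 ε)) (signedSum k (Fin.cons 1 ε)) +
            Φ (signedSum h (Fin.cons (-1) ε)) (signedSum k (Fin.cons (-1) ε)) =
          2 • (Φ (h 0) (k 0) + Φ (signedSum (Fin.tail h) ε) (signedSum (Fin.tail k) ε)) := by
      intro ε
      simp only [signedSum_cons_one, signedSum_cons_neg_one, map_add, map_neg,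
        LinearMap.add_apply, LinearMap.neg_apply]
      abel
    simp only [sum_signs_succ, hstep, ← Finset.smul_sum, Finset.sum_add_distrib, ih]
    simp [Fin.sum_univ_succ, Fin.tail, pow_succ', mul_smul]

lemma isSelfAdjoint_signedSum [StarAddMonoid M] {n : ℕ} {h : Fin n → M}
    (hh : ∀ i, IsSelfAdjoint (h i)) (ε : Fin n → ℤˣ) : IsSelfAdjoint (signedSum h ε) := by
  refine isSelfAdjoint_sum _ fun i _ ↦ ?_
  rcases Int.units_eq_one_or (ε i) with hi | hi <;> simp [hi, hh i, (hh i).neg, Units.smul_def]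

variable {R : Type*} [Ring R] [StarRing R] [PartialOrder R] [StarOrderedRing R]

lemma add_pow_four_add_neg_add_pow_four_le {g h : R} (hg : IsSelfAdjoint g)
    (hh : IsSelfAdjoint h) :
    (h + g) ^ 4 + (-h + g) ^ 4 ≤ 2 • (g ^ 4 + (h ^ 4 + g ^ 2 * h ^ 2 + h ^ 2 * g ^ 2 +
      2 • (g * (h ^ 2 * g)) + 2 • (h * g ^ 2 * h))) := by
  -- The difference of the two sides is twice `|[g, h]|²`.
  rw [← sub_nonneg]
  convert nsmul_nonneg (star_mul_self_nonneg (g * h - h * g)) 2 using 1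
  simp only [star_sub, star_mul, hg.star_eq, hh.star_eq, two_smul]
  noncomm_ring

omit [StarRing R] [PartialOrder R] [StarOrderedRing R] in
lemma sum_signedSum_mul_mul_signedSum {n : ℕ} (h : Fin n → R) (a : R) :
    ∑ ε, signedSum h ε * (a * signedSum h ε) = 2 ^ n • ∑ i, h i * a * h i := by
  simpa only [LinearMap.mul_apply', LinearMap.compl₂_apply, LinearMap.mulLeft_apply,
    ← mul_assoc] using!
    sum_bilin_signedSum ((LinearMap.mul ℤ R).compl₂ (LinearMap.mulLeft ℤ a)) h h

lemma sum_signedSum_pow_four_succ_le {n : ℕ} (h : Fin (n + 1) → R)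
    (hh : ∀ i, IsSelfAdjoint (h i)) :
    ∑ ε, signedSum h ε ^ 4 ≤
      2 • (∑ ε, signedSum (Fin.tail h) ε ^ 4 + 2 ^ n • (h 0 ^ 4 +
        (∑ i, Fin.tail h i ^ 2) * h 0 ^ 2 + h 0 ^ 2 * ∑ i, Fin.tail h i ^ 2 +
        2 • ∑ i, Fin.tail h i * h 0 ^ 2 * Fin.tail h i +
        2 • (h 0 * (∑ i, Fin.tail h i ^ 2) * h 0))) := by
  set k := Fin.tail h
  have hmul := sum_signedSum_mul_mul_signedSum k 1
  simp only [one_mul, mul_one, ← sq] at hmul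
  calc ∑ ε, signedSum h ε ^ 4
      ≤ ∑ ε : Fin n → ℤˣ, 2 • (signedSum k ε ^ 4 + (h 0 ^ 4 +
          signedSum k ε ^ 2 * h 0 ^ 2 + h 0 ^ 2 * signedSum k ε ^ 2 +
          2 • (signedSum k ε * (h 0 ^ 2 * signedSum k ε)) +
          2 • (h 0 * signedSum k ε ^ 2 * h 0))) := by
        rw [sum_signs_succ]
        simp only [signedSum_cons_one, signedSum_cons_neg_one]
        exact Finset.sum_le_sum fun ε _ ↦ add_pow_four_add_neg_add_pow_four_le
          (isSelfAdjoint_signedSum (fun i ↦ hh i.succ) ε) (hh 0)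
    _ = _ := by
        simp only [Finset.sum_add_distrib, ← Finset.smul_sum, ← Finset.sum_mul,
          ← Finset.mul_sum, hmul, sum_signedSum_mul_mul_signedSum, Finset.sum_const,
          Finset.card_univ, Fintype.card_pi, Fintype.card_units_int, Finset.prod_const,
          Fintype.card_fin, smul_mul_assoc, mul_smul_comm, smul_add, smul_comm (2 ^ n) 2]

lemma sum_signedSum_pow_four_le {n : ℕ} (h : Fin n → R) (hh : ∀ i, IsSelfAdjoint (h i)) :
    ∑ ε, signedSum h ε ^ 4 ≤
      2 ^ n • ((∑ i, h i ^ 2) ^ 2 + 2 • ∑ j, h j * (∑ i, h i ^ 2) * h j) := by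
  induction n with
  | zero => simp [signedSum]
  | succ n ih =>
    refine (sum_signedSum_pow_four_succ_le h hh).trans ?_
    set k := Fin.tail h with hk
    set x := h 0
    set P := ∑ i, k i ^ 2
    set Q := ∑ i, k i * x ^ 2 * k i with hQ
    have hx4 : 0 ≤ x ^ 4 := by
      simpa only [← pow_mul] using! ((hh 0).pow 2).sq_nonneg
    have hsum : ∑ i, h i ^ 2 = x ^ 2 + P := Fin.sum_univ_succ _
    have hconj : ∑ j, h j * (x ^ 2 + P) * h j =
        x * (x ^ 2 + P) * x + (Q + ∑ j, k j * P * k j) := by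
      rw [Fin.sum_univ_succ, hQ, ← Finset.sum_add_distrib]
      simp only [x, hk, Fin.tail, mul_add, add_mul]
    calc 2 • (∑ ε, signedSum k ε ^ 4 +
            2 ^ n • (x ^ 4 + P * x ^ 2 + x ^ 2 * P + 2 • Q + 2 • (x * P * x)))
        ≤ 2 • (2 ^ n • (P ^ 2 + 2 • ∑ j, k j * P * k j) +
            2 ^ n • (x ^ 4 + P * x ^ 2 + x ^ 2 * P + 2 • Q + 2 • (x * P * x)) +
            2 ^ n • 2 • x ^ 4) := by
          refine nsmul_le_nsmul_right (le_add_of_le_of_nonneg ?_ ?_) 2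
          · gcongr
            exact ih k fun i ↦ hh i.succ
          · exact nsmul_nonneg (nsmul_nonneg hx4 2) _
      _ = 2 ^ (n + 1) • ((∑ i, h i ^ 2) ^ 2 + 2 • ∑ j, h j * (∑ i, h i ^ 2) * h j) := by
          rw [hsum, hconj, pow_succ' 2 n, mul_smul, ← smul_add, ← smul_add]
          simp only [two_smul]
          noncomm_ring

end Rademacher

section DyadicLayer

/-- The truncation of the positive part `x⁺` at height `2 ^ k - 1`. -/
def dyadicTrunc (k : ℕ) (x : ℝ) : ℝ := min (max x 0) (2 ^ k - 1)

/-- The part of `x⁺` between the heights `2 ^ k - 1` and `2 ^ (k + 1) - 1`, rescaled to take values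
in `[0, 1]`. -/
def dyadicLayer (k : ℕ) (x : ℝ) : ℝ := (dyadicTrunc (k + 1) x - dyadicTrunc k x) / 2 ^ k

@[fun_prop]
lemma continuous_dyadicLayer (k : ℕ) : Continuous (dyadicLayer k) := by
  unfold dyadicLayer dyadicTrunc
  fun_prop

lemma dyadicLayer_nonneg (k : ℕ) (x : ℝ) : 0 ≤ dyadicLayer k x := by
  refine div_nonneg (sub_nonneg.2 (min_le_min_left _ ?_)) (by positivity)
  gcongr <;> norm_num

lemma dyadicLayer_le_one (k : ℕ) (x : ℝ) : dyadicLayer k x ≤ 1 := by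
  refine div_le_one_of_le₀ ?_ (by positivity)
  unfold dyadicTrunc
  rw [sub_le_iff_le_add', ← min_add_add_right]
  refine min_le_min (le_add_of_nonneg_right (by positivity)) (le_of_eq (by ring))

lemma dyadicLayer_eq_zero {k : ℕ} {x : ℝ} (hx : x ≤ 2 ^ k - 1) : dyadicLayer k x = 0 := by
  have hk : max x 0 ≤ 2 ^ k - 1 := max_le hx (sub_nonneg.2 (one_le_pow₀ one_le_two))
  have hk1 : max x 0 ≤ 2 ^ (k + 1) - 1 := hk.trans (by gcongr <;> norm_num)
  rw [dyadicLayer, dyadicTrunc, dyadicTrunc, min_eq_left hk, min_eq_left hk1, sub_self, zero_div]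

lemma dyadicLayer_le (k : ℕ) (x : ℝ) : dyadicLayer k x ≤ 8 * (1 / 16) ^ k * (1 + x ^ 4) := by
  rcases le_or_gt x (2 ^ k - 1) with hx | hx
  · rw [dyadicLayer_eq_zero hx]
    positivity
  have hpow : (16 : ℝ) ^ k ≤ (1 + x) ^ 4 :=
    calc (16 : ℝ) ^ k = (2 ^ k) ^ 4 := by rw [← pow_mul, mul_comm, pow_mul]; norm_num
      _ ≤ (1 + x) ^ 4 := by gcongr; linarith
  have hconvex : (1 + x) ^ 4 ≤ 8 * (1 + x ^ 4) := by
    nlinarith [sq_nonneg (x ^ 2 - 1), sq_nonneg (x - 1), mul_nonneg (sq_nonneg (x - 1))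
      (add_nonneg (sq_nonneg x) (sq_nonneg (x + 1)))]
  calc dyadicLayer k x ≤ 1 := dyadicLayer_le_one k x
    _ = (1 / 16) ^ k * 16 ^ k := by rw [← mul_pow]; norm_num
    _ ≤ (1 / 16) ^ k * (8 * (1 + x ^ 4)) := by gcongr; exact hpow.trans hconvex
    _ = 8 * (1 / 16) ^ k * (1 + x ^ 4) := by ring

lemma sum_dyadicLayer (L : ℕ) (x : ℝ) :
    ∑ k ∈ Finset.range L, 2 ^ k * dyadicLayer k x = dyadicTrunc L x := by
  have hterm : ∀ k : ℕ, 2 ^ k * dyadicLayer k x = dyadicTrunc (k + 1) x - dyadicTrunc k x :=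
    fun k ↦ mul_div_cancel₀ _ (by positivity)
  simp only [hterm, Finset.sum_range_sub fun k ↦ dyadicTrunc k x]
  simp [dyadicTrunc]

lemma sum_dyadicLayer_sub_neg {L : ℕ} {x : ℝ} (hx : |x| ≤ 2 ^ L - 1) :
    ∑ k ∈ Finset.range L, 2 ^ k * (dyadicLayer k x - dyadicLayer k (-x)) = x := by
  have hL : (0 : ℝ) ≤ 2 ^ L - 1 := (abs_nonneg x).trans hx
  simp only [mul_sub, Finset.sum_sub_distrib, sum_dyadicLayer, dyadicTrunc]
  rw [min_eq_left (max_le (abs_le.1 hx).2 hL), min_eq_left (max_le (neg_le.1 (abs_le.1 hx).1) hL)]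
  exact max_zero_sub_max_neg_zero_eq_self x

variable {𝒜 : Type*} [CStarAlgebra 𝒜]

lemma norm_le_of_mem_spectrum {x : 𝒜} {t : ℝ} (ht : t ∈ spectrum ℝ x) : |t| ≤ ‖x‖ := by
  rcases subsingleton_or_nontrivial 𝒜 with _ | _
  · simp [spectrum.of_subsingleton] at ht
  · exact spectrum.norm_le_norm_of_mem ht

lemma sum_cfc_dyadicLayer {L : ℕ} {x : 𝒜} (hx : IsSelfAdjoint x) (hL : ‖x‖ ≤ 2 ^ L - 1) :
    ∑ k ∈ Finset.range L, (2 ^ k : ℝ) • (cfc (dyadicLayer k) x - cfc (dyadicLayer k) (-x)) = x := by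
  have hterm : ∀ k : ℕ, (2 ^ k : ℝ) • (cfc (dyadicLayer k) x - cfc (dyadicLayer k) (-x)) =
      cfc (fun t ↦ 2 ^ k * (dyadicLayer k t - dyadicLayer k (-t))) x := fun k ↦ by
    rw [cfc_const_mul .., cfc_sub .., ← cfc_comp_neg ..]
  simp only [hterm]
  rw [← cfc_sum _ _ _ fun k _ ↦ by fun_prop]
  conv_rhs => rw [← cfc_id' ℝ x]
  refine cfc_congr fun t ht ↦ ?_
  simpa only [Finset.sum_apply] using
    sum_dyadicLayer_sub_neg ((norm_le_of_mem_spectrum ht).trans hL)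

variable [PartialOrder 𝒜] [StarOrderedRing 𝒜]

lemma cfc_dyadicLayer_nonneg (k : ℕ) (x : 𝒜) : 0 ≤ cfc (dyadicLayer k) x :=
  cfc_nonneg fun t _ ↦ dyadicLayer_nonneg k t

lemma cfc_dyadicLayer_le_one (k : ℕ) (x : 𝒜) : cfc (dyadicLayer k) x ≤ 1 :=
  cfc_le_one _ _ fun t _ ↦ dyadicLayer_le_one k t

lemma cfc_dyadicLayer_le (k : ℕ) {x : 𝒜} (hx : IsSelfAdjoint x) :
    cfc (dyadicLayer k) x ≤ (8 * (1 / 16) ^ k : ℝ) • (1 + x ^ 4) :=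
  calc cfc (dyadicLayer k) x ≤ cfc (fun t : ℝ ↦ 8 * (1 / 16) ^ k * (1 + t ^ 4)) x :=
        cfc_mono fun t _ ↦ dyadicLayer_le k t
    _ = (8 * (1 / 16) ^ k : ℝ) • (1 + x ^ 4) := by
        rw [cfc_const_mul .., cfc_add .., cfc_pow .., cfc_id' ℝ x, cfc_const_one ℝ x]

end DyadicLayer

lemma sum_pow_half_le_two (L : ℕ) : ∑ k ∈ Finset.range L, (1 / 2 : ℝ) ^ k ≤ 2 :=
  (summable_geometric_two.sum_le_tsum _ fun _ _ ↦ by positivity).trans_eq tsum_geometric_two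

namespace IsMaximalAtOne

variable {𝒜 : Type*} [CStarAlgebra 𝒜] [PartialOrder 𝒜] [StarOrderedRing 𝒜]
variable {ℬ : Type*} [CStarAlgebra ℬ] [PartialOrder ℬ] [StarOrderedRing ℬ]
variable {V : 𝒜 →L[ℂ] ℬ →L[ℂ] ℂ}

omit [PartialOrder ℬ] [StarOrderedRing ℬ] in
lemma re_dyadicLayer_le (h : IsMaximalAtOne V) (k : ℕ) {x : 𝒜} (hx : IsSelfAdjoint x) :
    (V (cfc (dyadicLayer k) x) 1).re ≤ 8 * (1 / 16) ^ k * (1 + (V (x ^ 4) 1).re) := by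
  simpa only [ContinuousLinearMap.map_smul_of_tower, map_add, smul_apply, add_apply,
    Complex.smul_re, Complex.add_re, h.one_one, Complex.one_re, smul_eq_mul] using
    h.re_apply_one_mono (cfc_dyadicLayer_le k hx)

lemma abs_im_dyadicLayer_le (h : IsMaximalAtOne V) (a b : ℕ) {x : 𝒜} {y : ℬ}
    (hx : IsSelfAdjoint x) (hy : IsSelfAdjoint y) :
    |(V (cfc (dyadicLayer a) x) (cfc (dyadicLayer b) y)).im| ≤
      16 * (1 / 4) ^ a * (1 / 4) ^ b * (2 + (V (x ^ 4) 1).re + (V 1 (y ^ 4)).re) := by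
  -- The weight `4ᵃ / 4ᵇ` balances the decay rates `16⁻ᵃ` and `16⁻ᵇ` of the two marginals.
  have him := h.abs_im_le (cfc_dyadicLayer_nonneg a x) (cfc_dyadicLayer_le_one a x)
    (cfc_dyadicLayer_nonneg b y) (cfc_dyadicLayer_le_one b y) (r := 4 ^ a * (1 / 4) ^ b)
    (by positivity)
  have hleft := h.re_dyadicLayer_le a hx
  have hright := h.flip.re_dyadicLayer_le b hy
  simp only [ContinuousLinearMap.flip_apply] at hright
  have hcancel : ∀ k : ℕ, (4 : ℝ) ^ k * (1 / 16) ^ k = (1 / 4) ^ k := fun k ↦ by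
    rw [← mul_pow]; norm_num
  have hinv : ((4 : ℝ) ^ a * (1 / 4) ^ b)⁻¹ = (1 / 4) ^ a * 4 ^ b := by
    rw [mul_inv, ← inv_pow, ← inv_pow]; norm_num
  rw [hinv] at him
  calc _ ≤ 2 * (4 ^ a * (1 / 4) ^ b) * (V (cfc (dyadicLayer a) x) 1).re +
        2 * ((1 / 4) ^ a * 4 ^ b) * (V 1 (cfc (dyadicLayer b) y)).re := him
    _ ≤ 2 * (4 ^ a * (1 / 4) ^ b) * (8 * (1 / 16) ^ a * (1 + (V (x ^ 4) 1).re)) +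
        2 * ((1 / 4) ^ a * 4 ^ b) * (8 * (1 / 16) ^ b * (1 + (V 1 (y ^ 4)).re)) := by gcongr
    _ = 16 * (4 ^ a * (1 / 16) ^ a) * (1 / 4) ^ b * (1 + (V (x ^ 4) 1).re) +
        16 * (1 / 4) ^ a * (4 ^ b * (1 / 16) ^ b) * (1 + (V 1 (y ^ 4)).re) := by ring
    _ = _ := by rw [hcancel, hcancel]; ring

lemma abs_im_dyadicLayer_sub_neg_le (h : IsMaximalAtOne V) (a b : ℕ) {x : 𝒜} {y : ℬ}
    (hx : IsSelfAdjoint x) (hy : IsSelfAdjoint y) :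
    |(V (cfc (dyadicLayer a) x - cfc (dyadicLayer a) (-x))
        (cfc (dyadicLayer b) y - cfc (dyadicLayer b) (-y))).im| ≤
      64 * (1 / 4) ^ a * (1 / 4) ^ b * (2 + (V (x ^ 4) 1).re + (V 1 (y ^ 4)).re) := by
  have h₁ := h.abs_im_dyadicLayer_le a b hx hy
  have h₂ := h.abs_im_dyadicLayer_le a b hx.neg hy
  have h₃ := h.abs_im_dyadicLayer_le a b hx hy.neg
  have h₄ := h.abs_im_dyadicLayer_le a b hx.neg hy.neg
  simp only [Even.neg_pow (show Even 4 by decide)] at h₂ h₃ h₄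
  simp only [map_sub, sub_apply, Complex.sub_im]
  rw [abs_le] at *
  constructor <;> linarith

lemma abs_im_le_pow_four (h : IsMaximalAtOne V) {x : 𝒜} {y : ℬ} (hx : IsSelfAdjoint x)
    (hy : IsSelfAdjoint y) :
    |(V x y).im| ≤ 256 * (2 + (V (x ^ 4) 1).re + (V 1 (y ^ 4)).re) := by
  set T := 2 + (V (x ^ 4) 1).re + (V 1 (y ^ 4)).re
  have hT : 0 ≤ T := by
    have hx4 := h.re_apply_one_nonneg (p := x ^ 4) (by simpa [← pow_mul] using (hx.pow 2).sq_nonneg)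
    have hy4 := h.flip.re_apply_one_nonneg (p := y ^ 4)
      (by simpa [← pow_mul] using (hy.pow 2).sq_nonneg)
    rw [ContinuousLinearMap.flip_apply] at hy4
    positivity
  obtain ⟨L, hL⟩ := pow_unbounded_of_one_lt (‖x‖ + ‖y‖ + 1) (one_lt_two (α := ℝ))
  have hxL := sum_cfc_dyadicLayer (L := L) hx (by linarith [norm_nonneg y])
  have hyL := sum_cfc_dyadicLayer (L := L) hy (by linarith [norm_nonneg x])
  have hexpand : (V x y).im = ∑ a ∈ Finset.range L, ∑ b ∈ Finset.range L, 2 ^ a * (2 ^ b *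
      (V (cfc (dyadicLayer a) x - cfc (dyadicLayer a) (-x))
        (cfc (dyadicLayer b) y - cfc (dyadicLayer b) (-y))).im) := by
    conv_lhs => rw [← hxL, ← hyL]
    simp only [map_sum, ContinuousLinearMap.map_smul_of_tower, sum_apply, smul_apply,
      Complex.im_sum, Complex.smul_im, smul_eq_mul]
    exact Finset.sum_comm
  have hterm : ∀ a b : ℕ, |2 ^ a * (2 ^ b *
      (V (cfc (dyadicLayer a) x - cfc (dyadicLayer a) (-x))
        (cfc (dyadicLayer b) y - cfc (dyadicLayer b) (-y))).im)| ≤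
      (1 / 2) ^ a * ((1 / 2) ^ b * (64 * T)) := by
    intro a b
    rw [abs_mul, abs_mul, abs_of_pos (by positivity), abs_of_pos (by positivity)]
    calc _ ≤ (2 : ℝ) ^ a * (2 ^ b * (64 * (1 / 4) ^ a * (1 / 4) ^ b * T)) := by
          gcongr; exact h.abs_im_dyadicLayer_sub_neg_le a b hx hy
      _ = (2 * (1 / 4)) ^ a * ((2 * (1 / 4)) ^ b * (64 * T)) := by rw [mul_pow, mul_pow]; ring
      _ = _ := by norm_num
  calc |(V x y).im| ≤ ∑ a ∈ Finset.range L, ∑ b ∈ Finset.range L,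
        (1 / 2 : ℝ) ^ a * ((1 / 2) ^ b * (64 * T)) := by
        rw [hexpand]
        refine (Finset.abs_sum_le_sum_abs _ _).trans (Finset.sum_le_sum fun a _ ↦ ?_)
        exact (Finset.abs_sum_le_sum_abs _ _).trans (Finset.sum_le_sum fun b _ ↦ hterm a b)
    _ = (∑ a ∈ Finset.range L, (1 / 2 : ℝ) ^ a) *
        ((∑ b ∈ Finset.range L, (1 / 2 : ℝ) ^ b) * (64 * T)) := by
        simp only [Finset.sum_mul, Finset.mul_sum]
        exact Finset.sum_comm
    _ ≤ 2 * (2 * (64 * T)) := by gcongr <;> exact sum_pow_half_le_two L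
    _ = 256 * T := by ring

omit [PartialOrder ℬ] [StarOrderedRing ℬ] in
lemma re_apply_one_le_one (h : IsMaximalAtOne V) {p : 𝒜} (hp : 0 ≤ p) (hp1 : ‖p‖ ≤ 1) :
    (V p 1).re ≤ 1 := by
  simpa only [h.one_one, Complex.one_re] using
    h.re_apply_one_mono ((CStarAlgebra.norm_le_one_iff_of_nonneg p hp).1 hp1)

omit [PartialOrder ℬ] [StarOrderedRing ℬ] in
lemma sum_re_signedSum_pow_four_le (h : IsMaximalAtOne V) {n : ℕ} {x : Fin n → 𝒜}
    (hx : ∀ i, IsSelfAdjoint (x i)) (hP : ‖∑ i, x i ^ 2‖ ≤ 1) :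
    ∑ ε, (V (signedSum x ε ^ 4) 1).re ≤ 2 ^ n * 3 := by
  set P := ∑ i, x i ^ 2
  have hP0 : 0 ≤ P := Finset.sum_nonneg fun i _ ↦ (hx i).sq_nonneg
  have hP1 : P ≤ 1 := (CStarAlgebra.norm_le_one_iff_of_nonneg P hP0).1 hP
  have hconj : ∑ j, x j * P * x j ≤ 1 := by
    refine (Finset.sum_le_sum fun j _ ↦ ?_).trans hP1
    simpa only [mul_one, sq] using (hx j).conjugate_le_conjugate hP1
  have hthree : P ^ 2 + 2 • ∑ j, x j * P * x j ≤ 3 • 1 :=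
    calc P ^ 2 + 2 • ∑ j, x j * P * x j ≤ 1 + 2 • 1 :=
          add_le_add ((sq_le_self_of_nonneg_of_le_one hP0 hP1).trans hP1)
            (nsmul_le_nsmul_right hconj 2)
      _ = 3 • 1 := by abel
  have hmono := h.re_apply_one_mono
    ((sum_signedSum_pow_four_le x hx).trans (nsmul_le_nsmul_right hthree (2 ^ n)))
  have hone : (V (2 ^ n • 3 • 1) 1).re = 2 ^ n * 3 := by
    rw [map_nsmul, map_nsmul, smul_apply, smul_apply, h.one_one, nsmul_eq_mul,
      nsmul_eq_mul, mul_one]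
    norm_cast
  simpa only [map_sum, sum_apply, Complex.re_sum, hone] using hmono

lemma norm_sum_le_of_isSelfAdjoint (h : IsMaximalAtOne V) {n : ℕ} {x : Fin n → 𝒜}
    (hx : ∀ i, IsSelfAdjoint (x i)) (hx1 : ‖∑ i, x i ^ 2‖ ≤ 1) {y : Fin n → ℬ}
    (hy : ∀ i, IsSelfAdjoint (y i)) (hy1 : ‖∑ i, y i ^ 2‖ ≤ 1) :
    ‖∑ i, V (x i) (y i)‖ ≤ 2050 := by
  have him : |(∑ i, V (x i) (y i)).im| ≤ 2048 := by
    have hmean := congrArg Complex.im (sum_bilin_signedSum V.toLinearMap₁₂ x y)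
    rw [nsmul_eq_mul, Nat.cast_pow, Nat.cast_ofNat, ← Complex.ofReal_ofNat, ← Complex.ofReal_pow,
      Complex.im_ofReal_mul] at hmean
    have hxsum := h.sum_re_signedSum_pow_four_le hx hx1
    have hysum := h.flip.sum_re_signedSum_pow_four_le hy hy1
    simp only [ContinuousLinearMap.flip_apply] at hysum
    refine le_of_mul_le_mul_left (a := 2 ^ n) ?_ (by positivity)
    calc (2 : ℝ) ^ n * |(∑ i, V (x i) (y i)).im|
        = |∑ ε, (V (signedSum x ε) (signedSum y ε)).im| := by
          rw [← Complex.im_sum]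
          refine ((congrArg abs hmean).trans ?_).symm
          rw [abs_mul, abs_of_pos (by positivity)]
          rfl
      _ ≤ ∑ ε, 256 * (2 + (V (signedSum x ε ^ 4) 1).re + (V 1 (signedSum y ε ^ 4)).re) :=
          (Finset.abs_sum_le_sum_abs _ _).trans (Finset.sum_le_sum fun ε _ ↦
            h.abs_im_le_pow_four (isSelfAdjoint_signedSum hx ε) (isSelfAdjoint_signedSum hy ε))
      _ ≤ 256 * (2 ^ n * 2 + 2 ^ n * 3 + 2 ^ n * 3) := by
          rw [← Finset.mul_sum, Finset.sum_add_distrib, Finset.sum_add_distrib]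
          gcongr
          simp
      _ = 2 ^ n * 2048 := by ring
  have hre : |(∑ i, V (x i) (y i)).re| ≤ 2 := by
    have hxP := h.re_apply_one_le_one (Finset.sum_nonneg fun i _ ↦ (hx i).sq_nonneg) hx1
    have hyP := h.flip.re_apply_one_le_one (Finset.sum_nonneg fun i _ ↦ (hy i).sq_nonneg) hy1
    simp only [map_sum, sum_apply, Complex.re_sum, ContinuousLinearMap.flip_apply] at hxP hyP
    calc |(∑ i, V (x i) (y i)).re| ≤ ∑ i, ((V (x i ^ 2) 1).re + (V 1 (y i ^ 2)).re) := by
          rw [Complex.re_sum]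
          exact (Finset.abs_sum_le_sum_abs _ _).trans
            (Finset.sum_le_sum fun i _ ↦ h.abs_re_le (hx i) (hy i))
      _ ≤ 2 := by rw [Finset.sum_add_distrib]; linarith
  linarith [Complex.norm_le_abs_re_add_abs_im (∑ i, V (x i) (y i))]

end IsMaximalAtOne

section RealImaginaryParts

open ComplexStarModule

variable {𝒜 : Type*} [CStarAlgebra 𝒜] [PartialOrder 𝒜] [StarOrderedRing 𝒜]

omit [PartialOrder 𝒜] [StarOrderedRing 𝒜] in
lemma norm_sum_realPart_sq_add_imaginaryPart_sq_le {ι : Type*} [Fintype ι] {a : ι → 𝒜}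
    (hrow : ‖∑ i, a i * star (a i)‖ ≤ 1) (hcol : ‖∑ i, star (a i) * a i‖ ≤ 1) :
    ‖∑ i, (ℜ (a i) : 𝒜) ^ 2 + ∑ i, (ℑ (a i) : 𝒜) ^ 2‖ ≤ 1 := by
  have hdouble : (2 : ℝ) • (∑ i, (ℜ (a i) : 𝒜) ^ 2 + ∑ i, (ℑ (a i) : 𝒜) ^ 2) =
      ∑ i, star (a i) * a i + ∑ i, a i * star (a i) := by
    rw [← Finset.sum_add_distrib, ← Finset.sum_add_distrib, Finset.smul_sum]
    refine Finset.sum_congr rfl fun i _ ↦ ?_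
    rw [star_mul_self_add_self_mul_star, sq, sq, ofNat_smul_eq_nsmul]
  have hnorm := (norm_add_le _ _).trans (add_le_add hcol hrow)
  rw [← hdouble, norm_smul, Real.norm_ofNat] at hnorm
  linarith

lemma norm_sum_realPart_sq_le {ι : Type*} [Fintype ι] {a : ι → 𝒜}
    (hrow : ‖∑ i, a i * star (a i)‖ ≤ 1) (hcol : ‖∑ i, star (a i) * a i‖ ≤ 1) :
    ‖∑ i, (ℜ (a i) : 𝒜) ^ 2‖ ≤ 1 :=
  (CStarAlgebra.norm_le_norm_of_nonneg_of_le
    (Finset.sum_nonneg fun i _ ↦ (ℜ (a i)).2.sq_nonneg) (le_add_of_nonneg_right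
      (Finset.sum_nonneg fun i _ ↦ (ℑ (a i)).2.sq_nonneg))).trans
    (norm_sum_realPart_sq_add_imaginaryPart_sq_le hrow hcol)

lemma norm_sum_imaginaryPart_sq_le {ι : Type*} [Fintype ι] {a : ι → 𝒜}
    (hrow : ‖∑ i, a i * star (a i)‖ ≤ 1) (hcol : ‖∑ i, star (a i) * a i‖ ≤ 1) :
    ‖∑ i, (ℑ (a i) : 𝒜) ^ 2‖ ≤ 1 :=
  (CStarAlgebra.norm_le_norm_of_nonneg_of_le
    (Finset.sum_nonneg fun i _ ↦ (ℑ (a i)).2.sq_nonneg) (le_add_of_nonneg_left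
      (Finset.sum_nonneg fun i _ ↦ (ℜ (a i)).2.sq_nonneg))).trans
    (norm_sum_realPart_sq_add_imaginaryPart_sq_le hrow hcol)

variable {ℬ : Type*} [CStarAlgebra ℬ] [PartialOrder ℬ] [StarOrderedRing ℬ]
variable {V : 𝒜 →L[ℂ] ℬ →L[ℂ] ℂ}

lemma IsMaximalAtOne.norm_sum_le (h : IsMaximalAtOne V) {n : ℕ} {a : Fin n → 𝒜} {b : Fin n → ℬ}
    (ha : ‖∑ i, a i * star (a i)‖ ≤ 1) (ha' : ‖∑ i, star (a i) * a i‖ ≤ 1)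
    (hb : ‖∑ i, b i * star (b i)‖ ≤ 1) (hb' : ‖∑ i, star (b i) * b i‖ ≤ 1) :
    ‖∑ i, V (a i) (b i)‖ ≤ 8200 := by
  have hsplit : ∑ i, V (a i) (b i) =
      ∑ i, V (ℜ (a i)) (ℜ (b i)) - ∑ i, V (ℑ (a i)) (ℑ (b i)) +
        Complex.I * (∑ i, V (ℜ (a i)) (ℑ (b i)) + ∑ i, V (ℑ (a i)) (ℜ (b i))) := by
    rw [← Finset.sum_add_distrib, ← Finset.sum_sub_distrib, Finset.mul_sum,
      ← Finset.sum_add_distrib]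
    refine Finset.sum_congr rfl fun i _ ↦ ?_
    conv_lhs => rw [← realPart_add_I_smul_imaginaryPart (a i),
      ← realPart_add_I_smul_imaginaryPart (b i)]
    simp only [map_add, map_smul, add_apply, smul_apply, smul_eq_mul]
    linear_combination V (ℑ (a i)) (ℑ (b i)) * Complex.I_mul_I
  have hare := norm_sum_realPart_sq_le ha ha'
  have haim := norm_sum_imaginaryPart_sq_le ha ha'
  have hbre := norm_sum_realPart_sq_le hb hb'
  have hbim := norm_sum_imaginaryPart_sq_le hb hb'
  rw [hsplit]
  refine (norm_add_le_of_le (norm_sub_le_of_le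
    (h.norm_sum_le_of_isSelfAdjoint (fun i ↦ (ℜ (a i)).2) hare (fun i ↦ (ℜ (b i)).2) hbre)
    (h.norm_sum_le_of_isSelfAdjoint (fun i ↦ (ℑ (a i)).2) haim (fun i ↦ (ℑ (b i)).2) hbim))
    ?_).trans_eq (show (2050 + 2050 + (2050 + 2050) : ℝ) = 8200 by norm_num)
  rw [norm_mul, Complex.norm_I, one_mul]
  exact norm_add_le_of_le
    (h.norm_sum_le_of_isSelfAdjoint (fun i ↦ (ℜ (a i)).2) hare (fun i ↦ (ℑ (b i)).2) hbim)
    (h.norm_sum_le_of_isSelfAdjoint (fun i ↦ (ℑ (a i)).2) haim (fun i ↦ (ℜ (b i)).2) hbre)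

end RealImaginaryParts

section Ultralimit

open BoundedContinuousFunction Filter Topology

lemma tendsto_limUnder_ultrafilter_of_norm_le {ι E : Type*} [NormedAddCommGroup E] [ProperSpace E]
    (U : Ultrafilter ι) {f : ι → E} {C : ℝ} (hf : ∀ i, ‖f i‖ ≤ C) :
    Tendsto f U (𝓝 (limUnder (U : Filter ι) f)) := by
  obtain ⟨z, -, hz⟩ := (isCompact_closedBall (0 : E) C).ultrafilter_le_nhds (U.map f)
    (le_principal_iff.2 (mem_map.2 (univ_mem' fun i ↦ by simpa using hf i)))
  exact tendsto_nhds_limUnder ⟨z, hz⟩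

lemma exists_forall_tendsto_hyperfilter {E F : Type*} [NormedAddCommGroup E] [NormedSpace ℂ E]
    [NormedAddCommGroup F] [NormedSpace ℂ F] {W : ℕ → E →L[ℂ] F →L[ℂ] ℂ} {C : ℝ}
    (hW : ∀ m, ‖W m‖ ≤ C) :
    ∃ V : (ℕ →ᵇ E) →L[ℂ] (ℕ →ᵇ F) →L[ℂ] ℂ, ∀ x y,
      Tendsto (fun m ↦ W m (x m) (y m)) (hyperfilter ℕ) (𝓝 (V x y)) := by
  have hbound : ∀ (x : ℕ →ᵇ E) (y : ℕ →ᵇ F) (m : ℕ), ‖W m (x m) (y m)‖ ≤ C * ‖x‖ * ‖y‖ :=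
    fun x y m ↦ (W m).le_of_opNorm₂_le_of_le (hW m) (x.norm_coe_le_norm m) (y.norm_coe_le_norm m)
  have hlim : ∀ (x : ℕ →ᵇ E) (y : ℕ →ᵇ F), Tendsto (fun m ↦ W m (x m) (y m)) (hyperfilter ℕ)
      (𝓝 (limUnder (hyperfilter ℕ : Filter ℕ) fun m ↦ W m (x m) (y m))) :=
    fun x y ↦ tendsto_limUnder_ultrafilter_of_norm_le _ (hbound x y)
  let V : (ℕ →ᵇ E) →ₗ[ℂ] (ℕ →ᵇ F) →ₗ[ℂ] ℂ := LinearMap.mk₂ ℂ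
    (fun x y ↦ limUnder (hyperfilter ℕ : Filter ℕ) fun m ↦ W m (x m) (y m))
    (fun x x' y ↦ tendsto_nhds_unique (hlim _ _)
      (((hlim x y).add (hlim x' y)).congr fun m ↦ by simp))
    (fun c x y ↦ tendsto_nhds_unique (hlim _ _)
      (((hlim x y).const_smul c).congr fun m ↦ by simp))
    (fun x y y' ↦ tendsto_nhds_unique (hlim _ _)
      (((hlim x y).add (hlim x y')).congr fun m ↦ by simp))
    (fun c x y ↦ tendsto_nhds_unique (hlim _ _)
      (((hlim x y).const_smul c).congr fun m ↦ by simp))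
  exact ⟨V.mkContinuous₂ C fun x y ↦
    le_of_tendsto (hlim x y).norm (Eventually.of_forall (hbound x y)), hlim⟩

section UnitarySequence

variable {𝒜 : Type*} [CStarAlgebra 𝒜]

lemma exists_mem_unitary_apply_eq_norm (f : 𝒜 →L[ℂ] ℂ) {u : 𝒜} (hu : u ∈ unitary 𝒜) :
    ∃ u' : unitary 𝒜, f u' = ‖f u‖ := by
  obtain ⟨c, hc, hcu⟩ := RCLike.exists_norm_eq_mul_self (f u)
  have hcmem : c ∈ unitary ℂ := by
    rw [Unitary.mem_iff_star_mul_self, RCLike.star_def, RCLike.conj_mul, hc]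
    norm_num
  exact ⟨⟨c • u, Unitary.smul_mem_of_mem hcmem hu⟩, by simpa using hcu.symm⟩

/-- The bounded sequence `m ↦ star (u m) * a`: the element `a` as seen after translating by the
unitaries `u m`. -/
def unitaryTranslate (u : ℕ → unitary 𝒜) (a : 𝒜) : ℕ →ᵇ 𝒜 :=
  BoundedContinuousFunction.ofNormedAddCommGroupDiscrete (fun m ↦ star (u m : 𝒜) * a) ‖a‖
    fun m ↦ (CStarRing.norm_coe_unitary_mul (star (u m)) a).le

lemma unitaryTranslate_apply (u : ℕ → unitary 𝒜) (a : 𝒜) (m : ℕ) :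
    unitaryTranslate u a m = star (u m : 𝒜) * a := rfl

lemma norm_sum_unitaryTranslate_mul_star_le {ι : Type*} [Fintype ι] (u : ℕ → unitary 𝒜)
    (a : ι → 𝒜) :
    ‖∑ i, unitaryTranslate u (a i) * star (unitaryTranslate u (a i))‖ ≤
      ‖∑ i, a i * star (a i)‖ := by
  refine (BoundedContinuousFunction.norm_le (norm_nonneg _)).2 fun m ↦ ?_
  have hconj : (∑ i, unitaryTranslate u (a i) * star (unitaryTranslate u (a i))) m =
      (star (u m) : unitary 𝒜) * (∑ i, a i * star (a i)) * u m := by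
    rw [BoundedContinuousFunction.sum_apply, Finset.mul_sum, Finset.sum_mul]
    refine Finset.sum_congr rfl fun i _ ↦ ?_
    simp [unitaryTranslate_apply, mul_assoc]
  rw [hconj, CStarRing.norm_mul_coe_unitary, CStarRing.norm_coe_unitary_mul]

lemma norm_sum_star_unitaryTranslate_mul_le {ι : Type*} [Fintype ι] (u : ℕ → unitary 𝒜)
    (a : ι → 𝒜) :
    ‖∑ i, star (unitaryTranslate u (a i)) * unitaryTranslate u (a i)‖ ≤
      ‖∑ i, star (a i) * a i‖ := by
  refine (BoundedContinuousFunction.norm_le (norm_nonneg _)).2 fun m ↦ ?_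
  refine (congrArg norm ?_).le
  rw [BoundedContinuousFunction.sum_apply]
  refine Finset.sum_congr rfl fun i _ ↦ ?_
  simp [unitaryTranslate_apply, mul_assoc, ← mul_assoc (u m : 𝒜)]

lemma apply_mem_unitary {x : ℕ →ᵇ 𝒜} (hx : x ∈ unitary (ℕ →ᵇ 𝒜)) (m : ℕ) :
    x m ∈ unitary 𝒜 := by
  rw [Unitary.mem_iff] at hx ⊢
  exact ⟨DFunLike.congr_fun hx.1 m, DFunLike.congr_fun hx.2 m⟩

end UnitarySequence

variable {𝒜 : Type*} [CStarAlgebra 𝒜] {ℬ : Type*} [CStarAlgebra ℬ]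

/-- The supremum of `‖V u v‖` over pairs of unitaries, by which a form is normalised before it is
translated to one that is maximal at `(1, 1)`. -/
def unitaryNorm (V : 𝒜 →L[ℂ] ℬ →L[ℂ] ℂ) : ℝ := ⨆ p : unitary 𝒜 × unitary ℬ, ‖V p.1 p.2‖

lemma norm_coe_unitary_le_one (u : unitary 𝒜) : ‖(u : 𝒜)‖ ≤ 1 := by
  nontriviality 𝒜
  exact (CStarRing.norm_coe_unitary u).le

lemma norm_apply_unitary_le (V : 𝒜 →L[ℂ] ℬ →L[ℂ] ℂ) (u : unitary 𝒜) (v : unitary ℬ) :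
    ‖V u v‖ ≤ ‖V‖ := by
  simpa using V.le_of_opNorm₂_le_of_le le_rfl (norm_coe_unitary_le_one u)
    (norm_coe_unitary_le_one v)

lemma le_unitaryNorm (V : 𝒜 →L[ℂ] ℬ →L[ℂ] ℂ) (u : unitary 𝒜) (v : unitary ℬ) :
    ‖V u v‖ ≤ unitaryNorm V :=
  le_ciSup (f := fun p : unitary 𝒜 × unitary ℬ ↦ ‖V p.1 p.2‖)
    ⟨‖V‖, Set.forall_mem_range.2 fun p ↦ norm_apply_unitary_le V p.1 p.2⟩ (u, v)

lemma unitaryNorm_le (V : 𝒜 →L[ℂ] ℬ →L[ℂ] ℂ) : unitaryNorm V ≤ ‖V‖ :=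
  ciSup_le fun p ↦ norm_apply_unitary_le V p.1 p.2

lemma unitaryNorm_smul (V : 𝒜 →L[ℂ] ℬ →L[ℂ] ℂ) {r : ℝ} (hr : 0 ≤ r) :
    unitaryNorm (r • V) = r * unitaryNorm V := by
  simp [unitaryNorm, abs_of_nonneg hr, Real.mul_iSup_of_nonneg hr]

lemma eq_zero_of_unitaryNorm_le_zero {V : 𝒜 →L[ℂ] ℬ →L[ℂ] ℂ} (hV : unitaryNorm V ≤ 0) :
    V = 0 := by
  refine ContinuousLinearMap.coe_injective
    (LinearMap.ext_on (CStarAlgebra.span_unitary 𝒜) fun u hu ↦ ?_)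
  refine ContinuousLinearMap.coe_injective
    (LinearMap.ext_on (CStarAlgebra.span_unitary ℬ) fun v hv ↦ ?_)
  exact norm_le_zero_iff.1 ((le_unitaryNorm V ⟨u, hu⟩ ⟨v, hv⟩).trans hV)

lemma exists_seq_tendsto_unitaryNorm (V : 𝒜 →L[ℂ] ℬ →L[ℂ] ℂ) :
    ∃ (u : ℕ → unitary 𝒜) (v : ℕ → unitary ℬ),
      Tendsto (fun m ↦ V (u m) (v m)) atTop (𝓝 (unitaryNorm V : ℂ)) := by
  have hbdd : BddAbove (Set.range fun p : unitary 𝒜 × unitary ℬ ↦ ‖V p.1 p.2‖) :=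
    ⟨‖V‖, Set.forall_mem_range.2 fun p ↦ norm_apply_unitary_le V p.1 p.2⟩
  obtain ⟨r, -, hr, hrmem⟩ := exists_seq_tendsto_sSup (Set.range_nonempty _) hbdd
  choose p hp using hrmem
  choose u hu using fun m ↦ exists_mem_unitary_apply_eq_norm (V.flip (p m).2) (p m).1.2
  refine ⟨u, fun m ↦ (p m).2, ((Complex.continuous_ofReal.tendsto _).comp hr).congr fun m ↦ ?_⟩
  rw [Function.comp_apply, ← hp]
  exact (hu m).symm

/-- Translating by a sequence of unitary pairs that almost attains the supremum and passing to an
ultralimit makes the supremum attained at `(1, 1)`. -/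
lemma exists_isMaximalAtOne_unitaryTranslate {V : 𝒜 →L[ℂ] ℬ →L[ℂ] ℂ} (hV : unitaryNorm V = 1) :
    ∃ (u : ℕ → unitary 𝒜) (v : ℕ → unitary ℬ) (W : (ℕ →ᵇ 𝒜) →L[ℂ] (ℕ →ᵇ ℬ) →L[ℂ] ℂ),
      IsMaximalAtOne W ∧ ∀ a b, W (unitaryTranslate u a) (unitaryTranslate v b) = V a b := by
  obtain ⟨u, v, huv⟩ := exists_seq_tendsto_unitaryNorm V
  let T : ℕ → 𝒜 →L[ℂ] ℬ →L[ℂ] ℂ := fun m ↦ V.bilinearComp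
    (ContinuousLinearMap.mul ℂ 𝒜 (u m)) (ContinuousLinearMap.mul ℂ ℬ (v m))
  have hT : ∀ m x y, T m x y = V (u m * x) (v m * y) := fun m x y ↦ rfl
  have hTnorm : ∀ m, ‖T m‖ ≤ ‖V‖ := fun m ↦
    ContinuousLinearMap.opNorm_le_bound₂ _ (norm_nonneg V) fun x y ↦ by
      simpa only [hT, CStarRing.norm_coe_unitary_mul] using V.le_opNorm₂ (u m * x) (v m * y)
  obtain ⟨W, hW⟩ := exists_forall_tendsto_hyperfilter hTnorm
  refine ⟨u, v, W, ⟨?_, fun x hx y hy ↦ ?_⟩, fun a b ↦ ?_⟩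
  · refine tendsto_nhds_unique (hW 1 1) ?_
    simpa [hT, hV] using huv.mono_left Nat.hyperfilter_le_atTop
  · refine le_of_tendsto ((Complex.continuous_re.tendsto _).comp (hW x y))
      (Eventually.of_forall fun m ↦ (Complex.re_le_norm _).trans ?_)
    rw [← hV]
    exact le_unitaryNorm V (u m * ⟨x m, apply_mem_unitary hx m⟩)
      (v m * ⟨y m, apply_mem_unitary hy m⟩)
  · refine tendsto_nhds_unique (hW _ _) (tendsto_const_nhds.congr fun m ↦ ?_)
    simp [hT, unitaryTranslate_apply, ← mul_assoc]

end Ultralimit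

section GrothendieckUnital

lemma norm_sum_smul_mul_smul {A : Type*} [NonUnitalNormedRing A] [NormedSpace ℝ A]
    [IsScalarTower ℝ A A] [SMulCommClass ℝ A A] {ι : Type*} [Fintype ι] (t : ℝ) (c d : ι → A) :
    ‖∑ i, (t • c i) * (t • d i)‖ = t ^ 2 * ‖∑ i, c i * d i‖ := by
  simp only [smul_mul_smul_comm, ← Finset.smul_sum, norm_smul, Real.norm_eq_abs, abs_mul_self, sq]

variable {𝒜 : Type*} [CStarAlgebra 𝒜] {ℬ : Type*} [CStarAlgebra ℬ]

open BoundedContinuousFunction in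
lemma norm_sum_le_of_unitaryNorm_eq_one {V : 𝒜 →L[ℂ] ℬ →L[ℂ] ℂ} (hV : unitaryNorm V = 1) {n : ℕ}
    {a : Fin n → 𝒜} {b : Fin n → ℬ}
    (ha : ‖∑ i, a i * star (a i)‖ ≤ 1) (ha' : ‖∑ i, star (a i) * a i‖ ≤ 1)
    (hb : ‖∑ i, b i * star (b i)‖ ≤ 1) (hb' : ‖∑ i, star (b i) * b i‖ ≤ 1) :
    ‖∑ i, V (a i) (b i)‖ ≤ 8200 := by
  let _ : PartialOrder (ℕ →ᵇ 𝒜) := CStarAlgebra.spectralOrder _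
  let _ : PartialOrder (ℕ →ᵇ ℬ) := CStarAlgebra.spectralOrder _
  have := CStarAlgebra.spectralOrderedRing (ℕ →ᵇ 𝒜)
  have := CStarAlgebra.spectralOrderedRing (ℕ →ᵇ ℬ)
  obtain ⟨u, v, W, hmax, hW⟩ := exists_isMaximalAtOne_unitaryTranslate hV
  simp only [← hW]
  exact hmax.norm_sum_le
    ((norm_sum_unitaryTranslate_mul_star_le u a).trans ha)
    ((norm_sum_star_unitaryTranslate_mul_le u a).trans ha')
    ((norm_sum_unitaryTranslate_mul_star_le v b).trans hb)
    ((norm_sum_star_unitaryTranslate_mul_le v b).trans hb')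

lemma norm_sum_le_unitaryNorm (V : 𝒜 →L[ℂ] ℬ →L[ℂ] ℂ) {n : ℕ} {a : Fin n → 𝒜} {b : Fin n → ℬ}
    (ha : ‖∑ i, a i * star (a i)‖ ≤ 1) (ha' : ‖∑ i, star (a i) * a i‖ ≤ 1)
    (hb : ‖∑ i, b i * star (b i)‖ ≤ 1) (hb' : ‖∑ i, star (b i) * b i‖ ≤ 1) :
    ‖∑ i, V (a i) (b i)‖ ≤ 8200 * unitaryNorm V := by
  rcases le_or_gt (unitaryNorm V) 0 with hV | hV
  · rw [eq_zero_of_unitaryNorm_le_zero hV]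
    simp [unitaryNorm]
  have hone : unitaryNorm ((unitaryNorm V)⁻¹ • V) = 1 := by
    rw [unitaryNorm_smul V (by positivity), inv_mul_cancel₀ hV.ne']
  have hbound := norm_sum_le_of_unitaryNorm_eq_one hone ha ha' hb hb'
  simp only [smul_apply, ← Finset.smul_sum, norm_smul, Real.norm_of_nonneg (inv_nonneg.2 hV.le)]
    at hbound
  rwa [inv_mul_le_iff₀ hV, mul_comm] at hbound

theorem norm_sum_bilin_le (V : 𝒜 →L[ℂ] ℬ →L[ℂ] ℂ) {ι : Type*} [Fintype ι] {a : ι → 𝒜} {b : ι → ℬ}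
    {r : ℝ} (hr : 0 < r)
    (ha : ‖∑ i, a i * star (a i)‖ ≤ r) (ha' : ‖∑ i, star (a i) * a i‖ ≤ r)
    (hb : ‖∑ i, b i * star (b i)‖ ≤ r) (hb' : ‖∑ i, star (b i) * b i‖ ≤ r) :
    ‖∑ i, V (a i) (b i)‖ ≤ 8200 * ‖V‖ * r := by
  let e := (Fintype.equivFin ι).symm
  set t : ℝ := (√r)⁻¹ with ht
  have htr : t ^ 2 = r⁻¹ := by rw [ht, inv_pow, Real.sq_sqrt hr.le]
  have hscale : ∀ {s : ℝ}, s ≤ r → t ^ 2 * s ≤ 1 := fun hs ↦ by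
    rwa [htr, inv_mul_le_one₀ hr]
  have hbound := norm_sum_le_unitaryNorm V (a := fun i ↦ t • a (e i)) (b := fun i ↦ t • b (e i))
  simp only [star_smul, star_trivial, norm_sum_smul_mul_smul,
    e.sum_comp (fun i ↦ a i * star (a i)), e.sum_comp (fun i ↦ star (a i) * a i),
    e.sum_comp (fun i ↦ b i * star (b i)), e.sum_comp (fun i ↦ star (b i) * b i)] at hbound
  have hsum : ∑ i, V (t • a (e i)) (t • b (e i)) = t ^ 2 • ∑ i, V (a i) (b i) := by
    simp only [ContinuousLinearMap.map_smul_of_tower, smul_apply, smul_smul, ← Finset.smul_sum, sq,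
      e.sum_comp fun i ↦ V (a i) (b i)]
  replace hbound := hbound (hscale ha) (hscale ha') (hscale hb) (hscale hb')
  rw [hsum, norm_smul, Real.norm_of_nonneg (sq_nonneg t), htr, inv_mul_le_iff₀ hr] at hbound
  calc _ ≤ r * (8200 * unitaryNorm V) := hbound
    _ ≤ r * (8200 * ‖V‖) := by gcongr; exact unitaryNorm_le V
    _ = 8200 * ‖V‖ * r := by ring

end GrothendieckUnital

namespace IsCStarNorm

section Basic

variable {M : Type*} [NonUnitalRing M] [StarRing M] [Module ℂ M] {N : M → ℝ}

lemma map_zero (h : IsCStarNorm N) : N 0 = 0 := by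
  simpa using h.smul_eq 0 0

lemma map_neg (h : IsCStarNorm N) (x : M) : N (-x) = N x := by
  simpa using h.smul_eq (-1) x

lemma nonneg (h : IsCStarNorm N) (x : M) : 0 ≤ N x := by
  have hadd := h.add_le x (-x)
  rw [add_neg_cancel, h.map_zero, h.map_neg] at hadd
  linarith

lemma eq_of_star_mul_self_eq (h : IsCStarNorm N) {x y : M} (hxy : star x * x = star y * y) :
    N x = N y := by
  rw [← mul_self_inj (h.nonneg x) (h.nonneg y), ← h.star_mul_self, hxy, h.star_mul_self]

lemma le_star (h : IsCStarNorm N) (x : M) : N x ≤ N (star x) := by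
  rcases (h.nonneg x).eq_or_lt with h0 | h0
  · exact h0 ▸ h.nonneg _
  · exact le_of_mul_le_mul_right (h.star_mul_self x ▸ h.mul_le (star x) x) h0

lemma map_star (h : IsCStarNorm N) (x : M) : N (star x) = N x :=
  le_antisymm ((h.le_star _).trans_eq (by rw [star_star])) (h.le_star x)

end Basic

section Unique

variable {𝒞 : Type*} [NonUnitalCStarAlgebra 𝒞] {N : 𝒞 → ℝ}

lemma snd_unitary_mul_inr (h : IsCStarNorm N) {u : Unitization ℂ 𝒞}
    (hu : u ∈ unitary (Unitization ℂ 𝒞)) (b : 𝒞) : N (u * (b : Unitization ℂ 𝒞)).snd = N b := by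
  refine h.eq_of_star_mul_self_eq (Unitization.inr_injective (R := ℂ) ?_)
  have hinr : ((u * (b : Unitization ℂ 𝒞)).snd : Unitization ℂ 𝒞) = u * b := by
    ext <;> simp
  rw [Unitization.inr_mul, Unitization.inr_star, hinr, star_mul, mul_assoc,
    ← mul_assoc (star u), Unitary.star_mul_self_of_mem hu, one_mul, Unitization.inr_mul,
    Unitization.inr_star]

/-- In the unitization a selfadjoint contraction is the average of two unitaries. -/
lemma mul_le_of_norm_le_one (h : IsCStarNorm N) {a : 𝒞} (ha : IsSelfAdjoint a) (ha1 : ‖a‖ ≤ 1)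
    (b : 𝒞) : N (a * b) ≤ N b := by
  let _ : PartialOrder (Unitization ℂ 𝒞) := CStarAlgebra.spectralOrder _
  have : StarOrderedRing (Unitization ℂ 𝒞) := CStarAlgebra.spectralOrderedRing _
  have hsa : IsSelfAdjoint (a : Unitization ℂ 𝒞) := ha.inr ℂ
  have hu := hsa.self_add_I_smul_cfcSqrt_sub_sq_mem_unitary _
    (by rwa [Unitization.norm_inr])
  set q := CFC.sqrt (1 - (a : Unitization ℂ 𝒞) ^ 2)
  have hqsa : star q = q := (CFC.sqrt_nonneg _).isSelfAdjoint
  have hsum : (((a : Unitization ℂ 𝒞) + Complex.I • q) * (b : Unitization ℂ 𝒞)).snd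
      + (star ((a : Unitization ℂ 𝒞) + Complex.I • q) * (b : Unitization ℂ 𝒞)).snd
      = (2 : ℂ) • (a * b) := by
    rw [← Unitization.snd_add, ← add_mul, star_add, star_smul, hsa.star_eq, hqsa,
      Complex.star_def, Complex.conj_I, neg_smul, add_add_add_comm, add_neg_cancel, add_zero,
      ← two_smul ℂ, smul_mul_assoc, Unitization.snd_smul, ← Unitization.inr_mul,
      Unitization.snd_inr]
  have hadd := h.add_le
    (((a : Unitization ℂ 𝒞) + Complex.I • q) * (b : Unitization ℂ 𝒞)).snd
    (star ((a : Unitization ℂ 𝒞) + Complex.I • q) * (b : Unitization ℂ 𝒞)).snd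
  rw [hsum, h.smul_eq, h.snd_unitary_mul_inr hu, h.snd_unitary_mul_inr (Unitary.star_mem hu),
    Complex.norm_ofNat] at hadd
  linarith

lemma le_norm_of_isSelfAdjoint (h : IsCStarNorm N) {a : 𝒞} (ha : IsSelfAdjoint a) :
    N a ≤ ‖a‖ := by
  rcases eq_or_ne a 0 with rfl | ha0
  · rw [h.map_zero, norm_zero]
  have hn : ‖((‖a‖⁻¹ : ℝ) : ℂ)‖ = ‖a‖⁻¹ := by simp
  have hle := h.mul_le_of_norm_le_one (a := ((‖a‖⁻¹ : ℝ) : ℂ) • a)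
    (IsSelfAdjoint.smul (Complex.conj_ofReal _) ha) (by
      rw [norm_smul, hn, inv_mul_cancel₀ (norm_ne_zero_iff.2 ha0)]) a
  have hsq := h.star_mul_self a
  rw [ha.star_eq] at hsq
  rw [smul_mul_assoc, h.smul_eq, hsq, hn, inv_mul_le_iff₀ (norm_pos_iff.2 ha0)] at hle
  rcases (h.nonneg a).eq_or_lt with h0 | h0
  · exact h0 ▸ norm_nonneg a
  · exact le_of_mul_le_mul_right hle h0

lemma le_norm (h : IsCStarNorm N) (x : 𝒞) : N x ≤ ‖x‖ := by
  have hle := h.le_norm_of_isSelfAdjoint (IsSelfAdjoint.star_mul_self x)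
  rw [h.star_mul_self, CStarRing.norm_star_mul_self] at hle
  exact (mul_self_le_mul_self_iff (h.nonneg x) (norm_nonneg x)).2 hle

end Unique

end IsCStarNorm

section LocalInverse

variable {𝒞 : Type*} [NonUnitalCStarAlgebra 𝒞]

lemma cfcₙ_max_abs_sub_ne_zero {a : 𝒞} (ha : IsSelfAdjoint a) {ρ : ℝ} (hρ : 0 < ρ)
    (hρa : ρ < ‖a‖) : cfcₙ (fun t : ℝ ↦ max (|t| - ρ) 0) a ≠ 0 := by
  intro hb
  refine hρa.not_ge ?_
  rw [← cfcₙ_id' ℝ a]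
  refine norm_cfcₙ_le fun t ht ↦ ?_
  have hle := norm_apply_le_norm_cfcₙ (fun t : ℝ ↦ max (|t| - ρ) 0) a ht
    (by fun_prop) (by simp [hρ.le])
  rw [hb, norm_zero, norm_le_zero_iff, max_eq_right_iff] at hle
  simpa using hle

lemma exists_mul_mul_eq_of_lt_norm {a : 𝒞} (ha : IsSelfAdjoint a) {ρ : ℝ} (hρ : 0 < ρ)
    (hρa : ρ < ‖a‖) : ∃ b ≠ 0, ∃ c : 𝒞, ‖c‖ ≤ ρ⁻¹ ∧ c * (a * b) = b := by
  have hmax : ∀ t : ℝ, 0 < max ρ |t| := fun t ↦ lt_max_of_lt_left hρ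
  have hf : Continuous fun t : ℝ ↦ t / max ρ |t| ^ 2 :=
    continuous_id.div (by fun_prop) fun t ↦ (pow_pos (hmax t) 2).ne'
  refine ⟨_, cfcₙ_max_abs_sub_ne_zero ha hρ hρa, cfcₙ (fun t : ℝ ↦ t / max ρ |t| ^ 2) a,
    norm_cfcₙ_le fun t _ ↦ ?_, ?_⟩
  · rw [norm_div, norm_pow, Real.norm_eq_abs, Real.norm_of_nonneg (hmax t).le, sq,
      div_mul_eq_div_div, div_eq_mul_inv]
    exact (mul_le_of_le_one_left (inv_nonneg.2 (hmax t).le)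
      ((div_le_one (hmax t)).2 (le_max_right _ _))).trans (inv_anti₀ hρ (le_max_left _ _))
  · nth_rw 2 [← cfcₙ_id' ℝ a]
    rw [← cfcₙ_mul _ _ a (by fun_prop) rfl (by fun_prop) (by simp [hρ.le]),
      ← cfcₙ_mul _ _ a hf.continuousOn (by simp) (by fun_prop) (by simp)]
    refine congrArg (cfcₙ · a) (funext fun t ↦ ?_)
    rcases le_total |t| ρ with ht | ht
    · simp [max_eq_right (sub_nonpos.2 ht)]
    · have ht0 : t ≠ 0 := abs_pos.1 (hρ.trans_le ht)
      rw [max_eq_right ht, sq_abs]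
      field_simp

end LocalInverse

theorem IsCStarNorm.eq_norm {𝒞 : Type*} [NonUnitalCStarAlgebra 𝒞] {N : 𝒞 → ℝ}
    (h : IsCStarNorm N) (x : 𝒞) : N x = ‖x‖ := by
  refine (h.le_norm x).antisymm ?_
  by_contra! hlt
  obtain ⟨ρ, hNρ, hρ⟩ : ∃ ρ, N (star x * x) < ρ ∧ ρ < ‖star x * x‖ := by
    refine exists_between ?_
    rw [h.star_mul_self, CStarRing.norm_star_mul_self]
    exact mul_self_lt_mul_self (h.nonneg x) hlt
  have hρ0 : 0 < ρ := (h.nonneg _).trans_lt hNρ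
  obtain ⟨b, hb, c, hc, hcb⟩ :=
    exists_mul_mul_eq_of_lt_norm (IsSelfAdjoint.star_mul_self x) hρ0 hρ
  have hNb : 0 < N b := (h.nonneg b).lt_of_ne' (mt (h.eq_zero_of b) hb)
  refine lt_irrefl (N b) ?_
  calc N b = N (c * (star x * x * b)) := by rw [hcb]
    _ ≤ N c * (N (star x * x) * N b) :=
      (h.mul_le _ _).trans (mul_le_mul_of_nonneg_left (h.mul_le _ _) (h.nonneg c))
    _ ≤ ρ⁻¹ * (N (star x * x) * N b) :=
      mul_le_mul_of_nonneg_right ((h.le_norm c).trans hc) (mul_nonneg (h.nonneg _) hNb.le)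
    _ < N b := by
      rw [inv_mul_lt_iff₀ hρ0]
      exact mul_lt_mul_of_pos_right hNρ hNb

section ColumnMatrix

open Matrix

variable {n R : Type*} [Fintype n] [DecidableEq n] [NonUnitalSemiring R]

lemma mul_updateCol_zero (v : Matrix n n R) (x : n → R) (k : n) :
    v * updateCol 0 k x = updateCol 0 k (v *ᵥ x) := by
  ext i j
  rcases eq_or_ne j k with rfl | hj
  · simp [Matrix.mul_apply, Matrix.mulVec, dotProduct]
  · simp [Matrix.mul_apply, hj]

lemma star_updateCol_zero_mul_self [StarRing R] (x : n → R) (k : n) :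
    star (updateCol 0 k x) * updateCol 0 k x = single k k (∑ i, star (x i) * x i) := by
  ext i j
  simp only [mul_apply, star_apply, updateCol_apply, single_apply, Matrix.zero_apply]
  rcases eq_or_ne i k with rfl | hi
  · rcases eq_or_ne j i with rfl | hj <;> simp [*, Ne.symm]
  · simp [hi, hi.symm]

end ColumnMatrix

section MatrixNorm

open Matrix

variable {A : Type*} [NonUnitalCStarAlgebra A]

lemma norm_pow_three_le_of_isSelfAdjoint {s : A} (hs : IsSelfAdjoint s) :
    ‖s‖ ^ 3 ≤ ‖s * s * s‖ := by
  rcases (norm_nonneg s).eq_or_lt with h0 | h0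
  · simp [← h0]
  refine le_of_mul_le_mul_right ?_ h0
  calc ‖s‖ ^ 3 * ‖s‖ = ‖s * s‖ * ‖s * s‖ := by rw [hs.norm_mul_self]; ring
    _ = ‖s * s * s * s‖ := by
      have hss : IsSelfAdjoint (s * s) := by rw [IsSelfAdjoint, star_mul, hs.star_eq]
      rw [← sq, ← hss.norm_mul_self, mul_assoc (s * s)]
    _ ≤ ‖s * s * s‖ * ‖s‖ := norm_mul_le _ _

namespace IsCStarNorm

variable {n : Type*} [Fintype n] [DecidableEq n] {N : Matrix n n A → ℝ}

lemma apply_single_eq_norm (h : IsCStarNorm N) (k : n) (a : A) : N (single k k a) = ‖a‖ := by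
  refine eq_norm (N := fun a ↦ N (single k k a)) ⟨fun x y ↦ ?_, fun c x ↦ ?_, fun x hx ↦ ?_,
    fun x y ↦ ?_, fun x ↦ ?_⟩ a
  · simpa only [single_add] using h.add_le _ _
  · simpa only [smul_single] using h.smul_eq c (single k k x)
  · simpa using congrFun (congrFun (h.eq_zero_of _ hx) k) k
  · simpa only [single_mul_single_same] using h.mul_le (single k k x) (single k k y)
  · simpa only [star_eq_conjTranspose, conjTranspose_single, single_mul_single_same] using
      h.star_mul_self (single k k x)

omit [DecidableEq n] in
lemma norm_sum_star_mulVec_mul_mulVec_le (h : IsCStarNorm N) (v : Matrix n n A) (x : n → A) :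
    ‖∑ i, star ((v *ᵥ x) i) * (v *ᵥ x) i‖ ≤ N v ^ 2 * ‖∑ i, star (x i) * x i‖ := by
  classical
  rcases isEmpty_or_nonempty n with _ | ⟨⟨k⟩⟩
  · simp
  have hcol (y : n → A) : ‖∑ i, star (y i) * y i‖ = N (updateCol 0 k y) ^ 2 := by
    rw [← h.apply_single_eq_norm k, ← star_updateCol_zero_mul_self, h.star_mul_self, sq]
  rw [hcol, hcol, ← mul_updateCol_zero, ← mul_pow]
  exact pow_le_pow_left₀ (h.nonneg _) (h.mul_le _ _) 2

omit [DecidableEq n] in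
/-- Apply the bound for `v *ᵥ x` to `x j = β j • s`, where `s` is the sum to be estimated: this
gives `‖s‖³ ≤ N(v)² ‖β‖² ‖s‖²`. -/
theorem norm_sum_star_mul_le (h : IsCStarNorm N) (v : Matrix n n A) (β : n → ℂ) :
    ‖∑ i, star (∑ j, β j • v i j) * ∑ j, β j • v i j‖ ≤ N v ^ 2 * ∑ j, ‖β j‖ ^ 2 := by
  set a : n → A := fun i ↦ ∑ j, β j • v i j with ha
  set s := ∑ i, star (a i) * a i with hs
  have hsa : IsSelfAdjoint s := by simp [IsSelfAdjoint, hs, star_sum]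
  have hcol := h.norm_sum_star_mulVec_mul_mulVec_le v fun j ↦ β j • s
  have hleft : ∑ i, star ((v *ᵥ fun j ↦ β j • s) i) * (v *ᵥ fun j ↦ β j • s) i = s * s * s := by
    have hvec (i : n) : (v *ᵥ fun j ↦ β j • s) i = a i * s := by
      simp only [ha, mulVec, dotProduct, mul_smul_comm, Finset.sum_mul, smul_mul_assoc]
    calc _ = s * (∑ i, star (a i) * a i) * s := by
          simp only [hvec, star_mul, hsa.star_eq, Finset.mul_sum, Finset.sum_mul, mul_assoc]
      _ = s * s * s := by rw [← hs]
  have hright : ∑ j, star (β j • s) * β j • s = (∑ j, ‖β j‖ ^ 2 : ℝ) • (s * s) := by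
    simp only [star_smul, smul_mul_smul_comm, hsa.star_eq, ← Finset.sum_smul, Complex.star_def,
      Complex.conj_mul', ← Complex.ofReal_pow, Complex.coe_smul]
  rw [hleft, hright, norm_smul, hsa.norm_mul_self, Real.norm_of_nonneg (by positivity)] at hcol
  rcases (norm_nonneg s).eq_or_lt with h0 | h0
  · rw [← h0]
    positivity
  · refine le_of_mul_le_mul_right ?_ (pow_pos h0 2)
    calc ‖s‖ * ‖s‖ ^ 2 = ‖s‖ ^ 3 := by ring
      _ ≤ N v ^ 2 * ((∑ j, ‖β j‖ ^ 2) * ‖s‖ ^ 2) :=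
        (norm_pow_three_le_of_isSelfAdjoint hsa).trans hcol
      _ = N v ^ 2 * (∑ j, ‖β j‖ ^ 2) * ‖s‖ ^ 2 := by ring

omit [DecidableEq n] in
theorem norm_sum_mul_star_le (h : IsCStarNorm N) (v : Matrix n n A) (α : n → ℂ) :
    ‖∑ j, (∑ i, α i • v i j) * star (∑ i, α i • v i j)‖ ≤ N v ^ 2 * ∑ i, ‖α i‖ ^ 2 := by
  simpa [h.map_star, star_sum] using h.norm_sum_star_mul_le (star v) fun i ↦ star (α i)

end IsCStarNorm

end MatrixNorm

section Haagerup

variable {A B : Type*} [NonUnitalCStarAlgebra A] [NonUnitalCStarAlgebra B]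

/-- `HaagerupLE z r` says that `z` has a representation `∑ aᵢ ⊗ bᵢ` witnessing that its Haagerup
norm `inf ‖∑ aᵢ aᵢ⋆‖ ^ (1/2) * ‖∑ bᵢ⋆ bᵢ‖ ^ (1/2)` is at most `r`, both factors being normalized
to the same size. The transposed Haagerup norm of `z` is that of `TensorProduct.comm ℂ A B z`. -/
def HaagerupLE (z : A ⊗[ℂ] B) (r : ℝ) : Prop :=
  ∃ (n : ℕ) (a : Fin n → A) (b : Fin n → B), z = ∑ i, a i ⊗ₜ[ℂ] b i ∧
    ‖∑ i, a i * star (a i)‖ ≤ r ∧ ‖∑ i, star (b i) * b i‖ ≤ r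

lemma exists_sq_mul_le_and_inv_sq_mul_le {p q r : ℝ} (hp : 0 ≤ p) (hq : 0 ≤ q) (hr : 0 < r)
    (hpq : p * q ≤ r ^ 2) : ∃ t : ℝ, 0 < t ∧ t ^ 2 * p ≤ r ∧ t⁻¹ ^ 2 * q ≤ r := by
  rcases hp.eq_or_lt with rfl | hp
  · refine ⟨√(q / r + 1), by positivity, by simp [hr.le], ?_⟩
    rw [inv_pow, Real.sq_sqrt (by positivity), inv_mul_le_iff₀ (by positivity), add_mul,
      div_mul_cancel₀ _ hr.ne']
    linarith
  · refine ⟨√(r / p), by positivity, ?_, ?_⟩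
    · rw [Real.sq_sqrt (by positivity), div_mul_cancel₀ _ hp.ne']
    · rw [inv_pow, Real.sq_sqrt (by positivity), inv_div, div_mul_eq_mul_div, div_le_iff₀ hr]
      linarith

lemma sum_equivFin_symm {κ M : Type*} [AddCommMonoid M] (s : Finset κ) (f : κ → M) :
    ∑ i, f (s.equivFin.symm i) = ∑ i ∈ s, f i := by
  rw [s.equivFin.symm.sum_comp fun i : s ↦ f i, Finset.sum_coe_sort]

lemma HaagerupLE.of_norm_mul_norm_le {κ : Type*} (s : Finset κ) (a : κ → A) (b : κ → B) {r : ℝ}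
    (hr : 0 < r)
    (hab : ‖∑ i ∈ s, a i * star (a i)‖ * ‖∑ i ∈ s, star (b i) * b i‖ ≤ r ^ 2) :
    HaagerupLE (∑ i ∈ s, a i ⊗ₜ[ℂ] b i) r := by
  obtain ⟨t, ht, hat, hbt⟩ :=
    exists_sq_mul_le_and_inv_sq_mul_le (norm_nonneg _) (norm_nonneg _) hr hab
  refine ⟨s.card, fun i ↦ (t : ℂ) • a (s.equivFin.symm i),
    fun i ↦ (t : ℂ)⁻¹ • b (s.equivFin.symm i), ?_, ?_, ?_⟩
  · have ht' : (t : ℂ) ≠ 0 := mod_cast ht.ne'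
    simp only [TensorProduct.smul_tmul_smul, mul_inv_cancel₀ ht', one_smul]
    exact (sum_equivFin_symm s fun i ↦ a i ⊗ₜ[ℂ] b i).symm
  · simp only [Complex.coe_smul, star_smul, star_trivial, norm_sum_smul_mul_smul]
    rwa [sum_equivFin_symm s fun i ↦ a i * star (a i)]
  · simp only [← Complex.ofReal_inv, Complex.coe_smul, star_smul, star_trivial,
      norm_sum_smul_mul_smul]
    rwa [sum_equivFin_symm s fun i ↦ star (b i) * b i]

lemma HaagerupLE.add {z z' : A ⊗[ℂ] B} {r r' : ℝ} (h : HaagerupLE z r) (h' : HaagerupLE z' r') :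
    HaagerupLE (z + z') (r + r') := by
  obtain ⟨n, a, b, rfl, ha, hb⟩ := h
  obtain ⟨n', a', b', rfl, ha', hb'⟩ := h'
  refine ⟨n + n', Fin.append a a', Fin.append b b', ?_, ?_, ?_⟩
  · simp [Fin.sum_univ_add]
  · simpa [Fin.sum_univ_add] using norm_add_le_of_le ha ha'
  · simpa [Fin.sum_univ_add] using norm_add_le_of_le hb hb'

lemma norm_sum_prod_sum_mul_star_le {m q : Type*} [Fintype m] [Fintype q]
    {N : Matrix m m A → ℝ} (hN : IsCStarNorm N) (v : Matrix m m A) (α : m × q → ℂ) :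
    ‖∑ x : q × m, (∑ i, α (i, x.1) • v i x.2) * star (∑ i, α (i, x.1) • v i x.2)‖
      ≤ N v ^ 2 * ∑ ik, ‖α ik‖ ^ 2 := by
  rw [Fintype.sum_prod_type, Fintype.sum_prod_type_right, Finset.mul_sum]
  exact norm_sum_le_of_le _ fun k _ ↦ hN.norm_sum_mul_star_le v fun i ↦ α (i, k)

lemma norm_sum_prod_star_sum_mul_le {m q : Type*} [Fintype m] [Fintype q]
    {N : Matrix q q B → ℝ} (hN : IsCStarNorm N) (w : Matrix q q B) (β : m × q → ℂ) :
    ‖∑ x : q × m, star (∑ l, β (x.2, l) • w x.1 l) * ∑ l, β (x.2, l) • w x.1 l‖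
      ≤ N w ^ 2 * ∑ jl, ‖β jl‖ ^ 2 := by
  rw [Fintype.sum_prod_type_right, Fintype.sum_prod_type, Finset.mul_sum]
  exact norm_sum_le_of_le _ fun j _ ↦ hN.norm_sum_star_mul_le w fun l ↦ β (j, l)

lemma HaagerupLE.of_matrix {m q : Type*} [Fintype m] [Fintype q]
    {N : Matrix m m A → ℝ} {N' : Matrix q q B → ℝ} (hN : IsCStarNorm N) (hN' : IsCStarNorm N')
    (α β : m × q → ℂ) (v : Matrix m m A) (w : Matrix q q B) {r : ℝ} (hr : 0 < r)
    (h : √(∑ ik, ‖α ik‖ ^ 2) * N v * N' w * √(∑ jl, ‖β jl‖ ^ 2) ≤ r) :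
    HaagerupLE (∑ ik : m × q, ∑ jl : m × q,
      (α ik * β jl) • (v ik.1 jl.1 ⊗ₜ[ℂ] w ik.2 jl.2)) r := by
  have hv := hN.nonneg v
  have hw := hN'.nonneg w
  have hrep : ∑ ik : m × q, ∑ jl : m × q, (α ik * β jl) • (v ik.1 jl.1 ⊗ₜ[ℂ] w ik.2 jl.2)
      = ∑ x : q × m, (∑ i, α (i, x.1) • v i x.2) ⊗ₜ[ℂ] ∑ l, β (x.2, l) • w x.1 l := by
    simp only [Fintype.sum_prod_type, TensorProduct.sum_tmul, TensorProduct.tmul_sum,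
      TensorProduct.smul_tmul_smul]
    rw [Finset.sum_comm]
    refine Finset.sum_congr rfl fun k _ ↦ ?_
    rw [Finset.sum_comm]
    exact Finset.sum_congr rfl fun j _ ↦ Finset.sum_comm
  rw [hrep]
  refine of_norm_mul_norm_le _ _ _ hr ?_
  calc _ ≤ (N v ^ 2 * ∑ ik, ‖α ik‖ ^ 2) * (N' w ^ 2 * ∑ jl, ‖β jl‖ ^ 2) :=
        mul_le_mul (norm_sum_prod_sum_mul_star_le hN v α) (norm_sum_prod_star_sum_mul_le hN' w β)
          (norm_nonneg _) (by positivity)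
    _ = (√(∑ ik, ‖α ik‖ ^ 2) * N v * N' w * √(∑ jl, ‖β jl‖ ^ 2)) ^ 2 := by
      simp only [mul_pow]
      rw [Real.sq_sqrt (by positivity), Real.sq_sqrt (by positivity)]
      ring
    _ ≤ r ^ 2 := pow_le_pow_left₀ (by positivity) h 2

lemma exists_eq_sum_smul_tmul (z : A ⊗[ℂ] B) :
    ∃ (p q : ℕ) (α : Fin p × Fin q → ℂ) (v : Matrix (Fin p) (Fin p) A)
      (w : Matrix (Fin q) (Fin q) B) (β : Fin p × Fin q → ℂ),
      z = ∑ ik : Fin p × Fin q, ∑ jl : Fin p × Fin q,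
        (α ik * β jl) • (v ik.1 jl.1 ⊗ₜ[ℂ] w ik.2 jl.2) := by
  obtain ⟨n, a, b, rfl⟩ := TensorProduct.exists_sum_tmul_eq z
  refine ⟨n, n, fun ik ↦ if ik.1 = ik.2 then 1 else 0, Matrix.diagonal a, Matrix.diagonal b,
    fun ik ↦ if ik.1 = ik.2 then 1 else 0, ?_⟩
  simp [Fintype.sum_prod_type, Matrix.diagonal_apply, TensorProduct.ite_tmul]

end Haagerup

section OsProjNorm

variable {A B : Type u} [NonUnitalCStarAlgebra A] [NonUnitalCStarAlgebra B]
  {NA : ∀ p : ℕ, Matrix (Fin p) (Fin p) A → ℝ} {NB : ∀ q : ℕ, Matrix (Fin q) (Fin q) B → ℝ}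

theorem HaagerupLE.of_osProjNorm_lt (hNA : ∀ p, IsCStarNorm (NA p)) (hNB : ∀ q, IsCStarNorm (NB q))
    {z : A ⊗[ℂ] B} {r : ℝ} (hr : 0 < r) (hz : osProjNorm NA NB z < r) :
    HaagerupLE z r ∧ HaagerupLE (TensorProduct.comm ℂ A B z) r := by
  obtain ⟨p₀, q₀, α₀, v₀, w₀, β₀, h₀⟩ := exists_eq_sum_smul_tmul z
  obtain ⟨_, ⟨p, q, α, v, w, β, rfl, rfl⟩, hlt⟩ :=
    exists_lt_of_csInf_lt (by exact ⟨_, p₀, q₀, α₀, v₀, w₀, β₀, h₀, rfl⟩) hz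
  refine ⟨of_matrix (hNA p) (hNB q) α β v w hr hlt.le, ?_⟩
  have hswap {γ : Fin p × Fin q → ℂ} : ∑ ki, ‖γ (Prod.swap ki)‖ ^ 2 = ∑ ik, ‖γ ik‖ ^ 2 :=
    (Equiv.prodComm _ _).sum_comp fun ik ↦ ‖γ ik‖ ^ 2
  have hcomm := of_matrix (hNB q) (hNA p) (α ∘ Prod.swap) (β ∘ Prod.swap) w v hr <| by
    simp only [Function.comp_apply, hswap]
    linarith
  convert hcomm using 1
  simp only [map_sum, map_smul, TensorProduct.comm_tmul]
  rw [← (Equiv.prodComm _ _).sum_comp]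
  exact Finset.sum_congr rfl fun ki _ ↦ ((Equiv.prodComm _ _).sum_comp _).symm

lemma osProjNorm_sum_sum_smul_tmul_le (hNA : ∀ p, IsCStarNorm (NA p))
    (hNB : ∀ q, IsCStarNorm (NB q)) {p : ℕ} (v : Matrix (Fin p) (Fin p) A)
    (w : Matrix (Fin p) (Fin p) B) (ψ : Fin p → ℝ) (hψ : ∑ i, ψ i ^ 2 ≤ 1) :
    osProjNorm NA NB (∑ i, ∑ j, (ψ i * ψ j : ℂ) • (v i j ⊗ₜ[ℂ] w i j)) ≤ NA p v * NB p w := by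
  have hNA₀ {p} := (hNA p).nonneg
  have hNB₀ {q} := (hNB q).nonneg
  let α : Fin p × Fin p → ℂ := fun ik ↦ if ik.1 = ik.2 then (ψ ik.1 : ℂ) else 0
  have hα : √(∑ ik, ‖α ik‖ ^ 2) ≤ 1 := by
    simpa [α, Fintype.sum_prod_type, apply_ite, ite_pow] using hψ
  refine le_trans (csInf_le ⟨0, ?_⟩ ⟨p, p, α, v, w, α, ?_, rfl⟩) ?_
  · rintro _ ⟨p, q, α, v, w, β, -, rfl⟩
    have := hNA₀ v
    have := hNB₀ w
    positivity
  · simp [α, Fintype.sum_prod_type, ite_smul]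
  · have := hNA₀ v
    have := hNB₀ w
    calc _ ≤ 1 * NA p v * NB p w * 1 := by gcongr
      _ = _ := by ring

end OsProjNorm

section SchurWeight

/-- `IsSchurWeight ψ s G` says that the nonnegative kernel `G` has row sums at most `s` and column
sums at most `s⁻¹`, and yet, up to the factor `1 / 4`, has the largest value at `(ψ, ψ)` that the
Schur test allows for a unit vector `ψ`. -/
structure IsSchurWeight {P : Type*} [Fintype P] (ψ : P → ℝ) (s : ℝ) (G : P → P → ℝ) : Prop where
  nonneg : ∀ a b, 0 ≤ G a b
  sum_right_le : ∀ a, ∑ b, G a b ≤ s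
  sum_left_le : ∀ b, ∑ a, G a b ≤ s⁻¹
  sum_sum_mul_eq : ∑ a, ∑ b, G a b * (ψ a * ψ b) = 1 / 4

lemma IsSchurWeight.comp_equiv {P Q : Type*} [Fintype P] [Fintype Q] {ψ : P → ℝ} {s : ℝ}
    {G : P → P → ℝ} (h : IsSchurWeight ψ s G) (e : Q ≃ P) :
    IsSchurWeight (ψ ∘ e) s fun a b ↦ G (e a) (e b) where
  nonneg a b := h.nonneg _ _
  sum_right_le a := (e.sum_comp (G (e a))).trans_le (h.sum_right_le _)
  sum_left_le b := (e.sum_comp (G · (e b))).trans_le (h.sum_left_le _)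
  sum_sum_mul_eq := by
    rw [← h.sum_sum_mul_eq, ← e.sum_comp]
    exact Finset.sum_congr rfl fun a _ ↦ e.sum_comp fun b ↦ G (e a) b * (ψ (e a) * ψ b)

/-- The index set on which a vector can have equal `ℓ²`-mass on each of `2 * n + 1` dyadic levels:
the level `l` consists of `4 ^ l` points, on which `levelVector` takes a value proportional
to `2 ^ (-l)`. -/
abbrev LevelIndex (n : ℕ) : Type := Σ l : Fin (2 * n + 1), Fin (4 ^ (l : ℕ))

/-- The unit vector on `LevelIndex n` with equal mass on all levels. -/
def levelVector (n : ℕ) (x : LevelIndex n) : ℝ := (2 ^ (x.1 : ℕ) * √(2 * n + 1))⁻¹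

/-- The kernel on `LevelIndex n` joining each level `l` to the level `l + k`, with total mass
`2 ^ k` in each nonzero row and `2 ^ (-k)` in each nonzero column. -/
def levelShift (n : ℕ) (k : ℤ) (x y : LevelIndex n) : ℝ :=
  if (y.1 : ℤ) = x.1 + k then 2 ^ k / 4 ^ (y.1 : ℕ) else 0

/-- The number of pairs of levels joined by `levelShift n k`. -/
def levelShiftCount (n : ℕ) (k : ℤ) : ℕ :=
  Finset.card {l : Fin (2 * n + 1) × Fin (2 * n + 1) | (l.2 : ℤ) = l.1 + k}

lemma sum_levelIndex (n : ℕ) (f : Fin (2 * n + 1) → ℝ) :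
    ∑ x : LevelIndex n, f x.1 = ∑ l : Fin (2 * n + 1), 4 ^ (l : ℕ) * f l := by
  simp [Fintype.sum_sigma]

lemma sum_ite_le_of_subsingleton {α : Type*} [Fintype α] {p : α → Prop} [DecidablePred p]
    (hp : ∀ a b, p a → p b → a = b) {c : ℝ} (hc : 0 ≤ c) : ∑ a, (if p a then c else 0) ≤ c := by
  have hcard : Finset.card {a | p a} ≤ 1 := by
    simpa [Finset.card_le_one] using fun a ha b ↦ hp a b ha
  rw [← Finset.sum_filter, Finset.sum_const, nsmul_eq_mul]
  exact mul_le_of_le_one_left hc (mod_cast hcard)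

lemma sum_levelVector_sq (n : ℕ) : ∑ x, levelVector n x ^ 2 = 1 := by
  have hmass (l : ℕ) : (4 : ℝ) ^ l * (2 ^ l * √(2 * n + 1))⁻¹ ^ 2 = (2 * n + 1 : ℝ)⁻¹ := by
    rw [inv_pow, mul_pow, Real.sq_sqrt (by positivity), ← pow_mul, mul_comm l, pow_mul]
    norm_num [mul_left_comm]
  have hpos : (2 * n + 1 : ℝ) ≠ 0 := by positivity
  refine (sum_levelIndex n fun l ↦ (2 ^ (l : ℕ) * √(2 * n + 1))⁻¹ ^ 2).trans ?_
  simp only [hmass]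
  simp [hpos]

lemma levelShift_nonneg (n : ℕ) (k : ℤ) (x y : LevelIndex n) : 0 ≤ levelShift n k x y := by
  rw [levelShift]
  positivity

lemma sum_levelShift_right_le (n : ℕ) (k : ℤ) (x : LevelIndex n) :
    ∑ y, levelShift n k x y ≤ 2 ^ k := by
  refine (sum_levelIndex n fun l ↦ if (l : ℤ) = x.1 + k then 2 ^ k / 4 ^ (l : ℕ) else 0).trans_le ?_
  simp only [mul_ite, mul_zero, mul_div_cancel₀ _ (pow_ne_zero _ (four_ne_zero' ℝ))]
  exact sum_ite_le_of_subsingleton (fun l l' hl hl' ↦ by ext; omega) (by positivity)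

lemma four_pow_eq_of_eq_add {l l' : ℕ} {k : ℤ} (h : (l' : ℤ) = l + k) :
    (4 : ℝ) ^ l' = 4 ^ l * (2 ^ k) ^ 2 := by
  rw [← zpow_natCast, h, zpow_add₀ four_ne_zero, zpow_natCast, sq, ← mul_zpow]
  norm_num

lemma sum_levelShift_left_le (n : ℕ) (k : ℤ) (y : LevelIndex n) :
    ∑ x, levelShift n k x y ≤ (2 ^ k)⁻¹ := by
  have hterm (l : Fin (2 * n + 1)) :
      4 ^ (l : ℕ) * (if (y.1 : ℤ) = l + k then 2 ^ k / 4 ^ (y.1 : ℕ) else 0)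
        = if (y.1 : ℤ) = l + k then (2 ^ k : ℝ)⁻¹ else 0 := by
    split_ifs with h
    · rw [four_pow_eq_of_eq_add h]
      field_simp
    · simp
  refine (sum_levelIndex n fun l ↦
    if (y.1 : ℤ) = l + k then 2 ^ k / 4 ^ (y.1 : ℕ) else 0).trans_le ?_
  simp only [hterm]
  exact sum_ite_le_of_subsingleton (fun l l' hl hl' ↦ by ext; omega) (by positivity)

lemma sum_levelShift_mul_levelVector (n : ℕ) (k : ℤ) :
    ∑ x, ∑ y, levelShift n k x y * (levelVector n x * levelVector n y)
      = levelShiftCount n k / (2 * n + 1) := by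
  let F (l l' : Fin (2 * n + 1)) : ℝ := (if (l' : ℤ) = l + k then 2 ^ k / 4 ^ (l' : ℕ) else 0)
    * ((2 ^ (l : ℕ) * √(2 * n + 1))⁻¹ * (2 ^ (l' : ℕ) * √(2 * n + 1))⁻¹)
  have hF (l l' : Fin (2 * n + 1)) :
      4 ^ (l : ℕ) * (4 ^ (l' : ℕ) * F l l')
        = if (l' : ℤ) = l + k then (2 * n + 1 : ℝ)⁻¹ else 0 := by
    dsimp only [F]
    split_ifs with h
    · have hl' : (2 : ℝ) ^ (l' : ℕ) = 2 ^ (l : ℕ) * 2 ^ k := by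
        rw [← zpow_natCast, h, zpow_add₀ two_ne_zero, zpow_natCast]
      have hl : (4 : ℝ) ^ (l : ℕ) = 2 ^ (l : ℕ) * 2 ^ (l : ℕ) := by rw [← mul_pow]; norm_num
      rw [hl', hl]
      field_simp
      rw [Real.sq_sqrt (by positivity)]
    · simp
  calc _ = ∑ l : Fin (2 * n + 1), 4 ^ (l : ℕ) * ∑ y : LevelIndex n, F l y.1 :=
        sum_levelIndex n fun l ↦ ∑ y : LevelIndex n, F l y.1
    _ = ∑ l : Fin (2 * n + 1), ∑ l' : Fin (2 * n + 1),
        if (l' : ℤ) = l + k then (2 * n + 1 : ℝ)⁻¹ else 0 := by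
      simp only [sum_levelIndex, Finset.mul_sum, hF]
    _ = _ := by
      rw [← Fintype.sum_prod_type', ← Finset.sum_filter, Finset.sum_const, nsmul_eq_mul,
        div_eq_mul_inv, levelShiftCount]

lemma lt_levelShiftCount {n : ℕ} {k : ℤ} (hk : k.natAbs ≤ n) : n < levelShiftCount n k := by
  have hinj : Fintype.card (Fin (n + 1)) ≤ levelShiftCount n k :=
    Finset.card_le_card_of_injOn (fun l ↦ (⟨l + (-k).toNat, by omega⟩, ⟨l + k.toNat, by omega⟩))
      (fun l _ ↦ by simp; omega) (fun l _ l' _ h ↦ by ext; simpa using congr_arg Prod.fst h)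
  simpa using hinj

lemma exists_isSchurWeight_levelVector {n : ℕ} {k : ℤ} {s : ℝ} (hk : k.natAbs ≤ n)
    (hs : s ∈ Set.Ico ((2 : ℝ) ^ k) (2 ^ (k + 1))) :
    ∃ G, IsSchurWeight (levelVector n) s G := by
  obtain ⟨hks, hsk⟩ := hs
  have hcount : (n + 1 : ℝ) ≤ levelShiftCount n k := mod_cast lt_levelShiftCount hk
  have hpow : (0 : ℝ) < 2 ^ k := by positivity
  set c : ℝ := (2 * n + 1) / (4 * levelShiftCount n k) with hc
  have hc₀ : 0 ≤ c := by positivity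
  have hc₁ : c ≤ 1 / 2 := by
    rw [hc, div_le_div_iff₀ (by linarith) two_pos]
    linarith
  refine ⟨fun x y ↦ c * levelShift n k x y, fun x y ↦ mul_nonneg hc₀ (levelShift_nonneg ..),
    fun x ↦ ?_, fun y ↦ ?_, ?_⟩
  · rw [← Finset.mul_sum]
    calc _ ≤ c * 2 ^ k := mul_le_mul_of_nonneg_left (sum_levelShift_right_le n k x) hc₀
      _ ≤ 2 ^ k := mul_le_of_le_one_left hpow.le (by linarith)
      _ ≤ s := hks
  · rw [← Finset.mul_sum]
    calc _ ≤ c * (2 ^ k)⁻¹ := mul_le_mul_of_nonneg_left (sum_levelShift_left_le n k y) hc₀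
      _ ≤ 1 / 2 * (2 ^ k)⁻¹ := by gcongr
      _ = (2 ^ (k + 1))⁻¹ := by rw [zpow_add_one₀ two_ne_zero, mul_inv]; ring
      _ ≤ s⁻¹ := inv_anti₀ (hpow.trans_le hks) hsk.le
  · simp only [mul_assoc, ← Finset.mul_sum, sum_levelShift_mul_levelVector]
    have : (levelShiftCount n k : ℝ) ≠ 0 := by linarith
    rw [hc]
    field_simp

theorem exists_isSchurWeight {κ : Type*} [Finite κ] {s : κ → ℝ} (hs : ∀ i, 0 < s i) :
    ∃ (p : ℕ) (ψ : Fin p → ℝ), ∑ a, ψ a ^ 2 = 1 ∧ ∀ i, ∃ G, IsSchurWeight ψ (s i) G := by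
  choose k hk using fun i ↦ exists_mem_Ico_zpow (hs i) (one_lt_two (α := ℝ))
  obtain ⟨n, hkn⟩ := Finite.exists_le fun i ↦ (k i).natAbs
  let e := (Fintype.equivFin (LevelIndex n)).symm
  refine ⟨_, levelVector n ∘ e, (e.sum_comp _).trans (sum_levelVector_sq n), fun i ↦ ?_⟩
  obtain ⟨G, hG⟩ := exists_isSchurWeight_levelVector (hkn i) (hk i)
  exact ⟨_, hG.comp_equiv e⟩

end SchurWeight

section Compression

open Filter Topology

variable {𝒜 ℬ : Type*} [NonUnitalCStarAlgebra 𝒜] [NonUnitalCStarAlgebra ℬ]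

/-- The compression `x ↦ e * x * e` of the unitization to the algebra. -/
def unitizationCompression (e : 𝒜) : Unitization ℂ 𝒜 →ₗ[ℂ] 𝒜 where
  toFun x := x.fst • (e * e) + e * x.snd * e
  map_add' x y := by
    simp only [Unitization.fst_add, Unitization.snd_add, add_smul, mul_add, add_mul]
    abel
  map_smul' c x := by simp [smul_smul, smul_mul_assoc, mul_smul_comm]

lemma inr_unitizationCompression (e : 𝒜) (x : Unitization ℂ 𝒜) :
    (unitizationCompression e x : Unitization ℂ 𝒜) = e * x * e := by
  induction x with
  | inl_add_inr r a => ext <;> simp [unitizationCompression, mul_add, add_mul, smul_mul_assoc]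

lemma unitizationCompression_inr (e a : 𝒜) :
    unitizationCompression e (a : Unitization ℂ 𝒜) = e * a * e := by
  simp [unitizationCompression]

lemma norm_unitizationCompression_le {e : 𝒜} (he : ‖e‖ ≤ 1) (x : Unitization ℂ 𝒜) :
    ‖unitizationCompression e x‖ ≤ ‖x‖ := by
  rw [← Unitization.norm_inr (𝕜 := ℂ), inr_unitizationCompression]
  have he' : ‖(e : Unitization ℂ 𝒜)‖ ≤ 1 := by rwa [Unitization.norm_inr]
  calc _ ≤ ‖(e : Unitization ℂ 𝒜)‖ * ‖x‖ * ‖(e : Unitization ℂ 𝒜)‖ := norm_mul₃_le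
    _ ≤ 1 * ‖x‖ * 1 := by gcongr
    _ = ‖x‖ := by rw [one_mul, mul_one]

lemma norm_sum_inr {ι : Type*} [Fintype ι] (a : ι → 𝒜) :
    ‖∑ i, (a i : Unitization ℂ 𝒜)‖ = ‖∑ i, a i‖ := by
  rw [← Unitization.norm_inr (𝕜 := ℂ) (∑ i, a i)]
  exact congr_arg norm (map_sum (Unitization.inrHom ℂ ℂ 𝒜) a Finset.univ).symm

lemma exists_neBot_tendsto_mul_mul (𝒜 : Type*) [NonUnitalCStarAlgebra 𝒜] :
    ∃ l : Filter 𝒜, l.NeBot ∧ (∀ᶠ e in l, ‖e‖ ≤ 1) ∧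
      ∀ a : 𝒜, Tendsto (fun e ↦ e * a * e) l (𝓝 a) := by
  let _ := CStarAlgebra.spectralOrder 𝒜
  let _ := CStarAlgebra.spectralOrderedRing 𝒜
  have h := CStarAlgebra.increasingApproximateUnit 𝒜
  refine ⟨CStarAlgebra.approximateUnit 𝒜, inferInstance, h.eventually_norm, fun a ↦ ?_⟩
  have hleft := tendsto_iff_norm_sub_tendsto_zero.1 (h.tendsto_mul_left a)
  have hright := tendsto_iff_norm_sub_tendsto_zero.1 (h.tendsto_mul_right a)
  refine tendsto_iff_norm_sub_tendsto_zero.2 <| squeeze_zero' (.of_forall fun _ ↦ norm_nonneg _) ?_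
    (by simpa using hright.add hleft)
  filter_upwards [h.eventually_norm] with e he
  calc ‖e * a * e - a‖ = ‖(e * a - a) * e + (a * e - a)‖ := by congr 1; noncomm_ring
    _ ≤ ‖(e * a - a) * e‖ + ‖a * e - a‖ := norm_add_le _ _
    _ ≤ ‖e * a - a‖ * 1 + ‖a * e - a‖ := by
      gcongr
      exact (norm_mul_le _ _).trans (by gcongr)
    _ = ‖e * a - a‖ + ‖a * e - a‖ := by rw [mul_one]

lemma norm_sum_bilin_mul_mul_le (V : 𝒜 →L[ℂ] ℬ →L[ℂ] ℂ) {ι : Type*} [Fintype ι]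
    {a : ι → 𝒜} {b : ι → ℬ} {r : ℝ} (hr : 0 < r)
    (ha : ‖∑ i, a i * star (a i)‖ ≤ r) (ha' : ‖∑ i, star (a i) * a i‖ ≤ r)
    (hb : ‖∑ i, b i * star (b i)‖ ≤ r) (hb' : ‖∑ i, star (b i) * b i‖ ≤ r)
    {e : 𝒜} (he : ‖e‖ ≤ 1) {f : ℬ} (hf : ‖f‖ ≤ 1) :
    ‖∑ i, V (e * a i * e) (f * b i * f)‖ ≤ 8200 * ‖V‖ * r := by
  let W : Unitization ℂ 𝒜 →L[ℂ] Unitization ℂ ℬ →L[ℂ] ℂ :=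
    LinearMap.mkContinuous₂
      (V.toLinearMap₁₂.compl₁₂ (unitizationCompression e) (unitizationCompression f)) ‖V‖
      fun x y ↦ (V.le_opNorm₂ _ _).trans <| by
        gcongr
        · exact norm_unitizationCompression_le he x
        · exact norm_unitizationCompression_le hf y
  have hW : ‖W‖ ≤ ‖V‖ := LinearMap.mkContinuous₂_norm_le _ (norm_nonneg V) _
  have hWab (i) : W (a i) (b i) = V (e * a i * e) (f * b i * f) := by
    rw [← unitizationCompression_inr, ← unitizationCompression_inr]
    rfl
  simp only [← hWab]
  refine (norm_sum_bilin_le W hr ?_ ?_ ?_ ?_).trans (by gcongr)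
  all_goals
    simp only [← Unitization.inr_star, ← Unitization.inr_mul]
    rwa [norm_sum_inr]

theorem norm_sum_bilin_le_of_nonUnital (V : 𝒜 →L[ℂ] ℬ →L[ℂ] ℂ) {ι : Type*} [Fintype ι]
    {a : ι → 𝒜} {b : ι → ℬ} {r : ℝ} (hr : 0 < r)
    (ha : ‖∑ i, a i * star (a i)‖ ≤ r) (ha' : ‖∑ i, star (a i) * a i‖ ≤ r)
    (hb : ‖∑ i, b i * star (b i)‖ ≤ r) (hb' : ‖∑ i, star (b i) * b i‖ ≤ r) :
    ‖∑ i, V (a i) (b i)‖ ≤ 8200 * ‖V‖ * r := by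
  obtain ⟨l, _, hl, hla⟩ := exists_neBot_tendsto_mul_mul 𝒜
  obtain ⟨l', _, hl', hlb⟩ := exists_neBot_tendsto_mul_mul ℬ
  have hlim : Tendsto (fun ef : 𝒜 × ℬ ↦ ∑ i, V (ef.1 * a i * ef.1) (ef.2 * b i * ef.2))
      (l ×ˢ l') (𝓝 (∑ i, V (a i) (b i))) := by
    have hV : Continuous fun z : 𝒜 × ℬ ↦ V z.1 z.2 := by fun_prop
    exact tendsto_finsetSum _ fun i _ ↦ (hV.tendsto (a i, b i)).comp
      (((hla (a i)).comp tendsto_fst).prodMk_nhds ((hlb (b i)).comp tendsto_snd))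
  refine le_of_tendsto hlim.norm ?_
  filter_upwards [hl.prod_mk hl'] with ef hef
  exact norm_sum_bilin_mul_mul_le V hr ha ha' hb hb' hef.1 hef.2

end Compression

section DiagonalMatrix

variable {A : Type*} [NonUnitalCStarAlgebra A]

/-- `CStarMatrix n n A` is a C⋆-algebra; Mathlib's instances assume an order on `A`, for which
the spectral order is chosen here. -/
@[reducible] def cstarMatrixAlgebra (p : ℕ) (A : Type*) [NonUnitalCStarAlgebra A] :
    NonUnitalCStarAlgebra (CStarMatrix (Fin p) (Fin p) A) :=
  letI := CStarAlgebra.spectralOrder A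
  letI := CStarAlgebra.spectralOrderedRing A
  inferInstance

attribute [local instance] cstarMatrixAlgebra

/-- The diagonal embedding of `A ^ p` in `M_p(A)`; it is a `⋆`-homomorphism of C⋆-algebras and
hence contractive. -/
def diagonalStarHom (p : ℕ) (A : Type*) [NonUnitalCStarAlgebra A] :
    (Fin p → A) →⋆ₙₐ[ℂ] CStarMatrix (Fin p) (Fin p) A where
  toFun d := CStarMatrix.ofMatrix (Matrix.diagonal d)
  map_smul' c d := congrArg CStarMatrix.ofMatrix (Matrix.diagonal_smul c d)
  map_zero' := congrArg CStarMatrix.ofMatrix Matrix.diagonal_zero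
  map_add' c d := congrArg CStarMatrix.ofMatrix (Matrix.diagonal_add c d).symm
  map_mul' c d := congrArg CStarMatrix.ofMatrix (Matrix.diagonal_mul_diagonal c d).symm
  map_star' c := congrArg CStarMatrix.ofMatrix (Matrix.diagonal_conjTranspose c).symm

lemma norm_diagonalStarHom_le {p : ℕ} {d : Fin p → A} {r : ℝ} (hr : 0 ≤ r)
    (h : ∀ i, ‖d i‖ ≤ r) : ‖diagonalStarHom p A d‖ ≤ r :=
  (NonUnitalStarAlgHom.norm_apply_le (diagonalStarHom p A) d).trans
    ((pi_norm_le_iff_of_nonneg hr).2 h)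

lemma IsCStarNorm.eq_cstarMatrix_norm {p : ℕ} {N : Matrix (Fin p) (Fin p) A → ℝ}
    (h : IsCStarNorm N) (v : CStarMatrix (Fin p) (Fin p) A) :
    N (CStarMatrix.ofMatrix.symm v) = ‖v‖ :=
  IsCStarNorm.eq_norm (N := fun v : CStarMatrix (Fin p) (Fin p) A ↦ N (CStarMatrix.ofMatrix.symm v))
    ⟨h.add_le, h.smul_eq, h.eq_zero_of, h.mul_le, h.star_mul_self⟩ v

lemma norm_sum_smul_mul_star_mono {κ : Type*} [Fintype κ] (x : κ → A) {c s : κ → ℝ}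
    (hc : ∀ i, 0 ≤ c i) (hcs : ∀ i, c i ≤ s i) :
    ‖∑ i, c i • (x i * star (x i))‖ ≤ ‖∑ i, s i • (x i * star (x i))‖ := by
  let _ := CStarAlgebra.spectralOrder A
  let _ := CStarAlgebra.spectralOrderedRing A
  refine CStarAlgebra.norm_le_norm_of_nonneg_of_le
    (Finset.sum_nonneg fun i _ ↦ smul_nonneg (hc i) (mul_star_self_nonneg _))
    (Finset.sum_le_sum fun i _ ↦ smul_le_smul_of_nonneg_right (hcs i) (mul_star_self_nonneg _))

end DiagonalMatrix

section SchurFamily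

attribute [local instance] cstarMatrixAlgebra

variable {A : Type*} [NonUnitalCStarAlgebra A] {κ : Type*} {p : ℕ}

/-- The matrices `√(G i a b) x i ⊗ e_{ab}`, indexed by the triples `(i, a, b)`. -/
def schurFamily (x : κ → A) (G : κ → Fin p → Fin p → ℝ) (k : κ × Fin p × Fin p) :
    CStarMatrix (Fin p) (Fin p) A :=
  CStarMatrix.ofMatrix (Matrix.single k.2.1 k.2.2 (√(G k.1 k.2.1 k.2.2) • x k.1))

lemma star_schurFamily (x : κ → A) (G : κ → Fin p → Fin p → ℝ) (i : κ) (a b : Fin p) :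
    star (schurFamily x G (i, a, b)) =
      schurFamily (fun i ↦ star (x i)) (fun i a b ↦ G i b a) (i, b, a) := by
  change (Matrix.single a b (√(G i a b) • x i)).conjTranspose = _
  rw [Matrix.conjTranspose_single, star_smul, star_trivial]
  rfl

lemma schurFamily_mul_star (x : κ → A) {G : κ → Fin p → Fin p → ℝ} (hG : ∀ i a b, 0 ≤ G i a b)
    (i : κ) (a b : Fin p) :
    schurFamily x G (i, a, b) * star (schurFamily x G (i, a, b)) =
      diagonalStarHom p A (Pi.single a (G i a b • (x i * star (x i)))) := by
  let m : Matrix (Fin p) (Fin p) A := Matrix.single a b (√(G i a b) • x i)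
  have : m * m.conjTranspose = Matrix.diagonal (Pi.single a (G i a b • (x i * star (x i)))) := by
    rw [Matrix.conjTranspose_single, Matrix.single_mul_single_same, star_smul, star_trivial,
      smul_mul_smul_comm, Real.mul_self_sqrt (hG i a b), Matrix.diagonal_single]
  exact congrArg CStarMatrix.ofMatrix this

lemma schurFamily_apply (x : κ → A) (G : κ → Fin p → Fin p → ℝ) (i : κ) (a b : Fin p) :
    schurFamily x G (i, a, b) a b = √(G i a b) • x i :=
  Matrix.single_apply_same ..

lemma schurFamily_apply_of_ne (x : κ → A) (G : κ → Fin p → Fin p → ℝ) (i : κ) {a b a' b' : Fin p}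
    (h : ¬(a = a' ∧ b = b')) : schurFamily x G (i, a, b) a' b' = 0 :=
  Matrix.single_apply_of_ne _ _ _ _ _ h

variable [Fintype κ]

lemma sum_schurFamily_mul_star (x : κ → A) {G : κ → Fin p → Fin p → ℝ}
    (hG : ∀ i a b, 0 ≤ G i a b) :
    ∑ k, schurFamily x G k * star (schurFamily x G k) =
      diagonalStarHom p A fun a ↦ ∑ i, (∑ b, G i a b) • (x i * star (x i)) := by
  simp only [Fintype.sum_prod_type, schurFamily_mul_star x hG, ← map_sum]
  congr 1
  ext a
  simp only [Finset.sum_apply, Finset.sum_smul]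
  refine Finset.sum_congr rfl fun i _ ↦ ?_
  rw [Finset.sum_comm]
  simp only [Finset.sum_pi_single, Finset.mem_univ, if_true]

lemma norm_sum_schurFamily_mul_star_le {x : κ → A} {G : κ → Fin p → Fin p → ℝ} {s : κ → ℝ} {r : ℝ}
    (hG : ∀ i a b, 0 ≤ G i a b) (hGs : ∀ i a, ∑ b, G i a b ≤ s i)
    (hx : ‖∑ i, s i • (x i * star (x i))‖ ≤ r) :
    ‖∑ k, schurFamily x G k * star (schurFamily x G k)‖ ≤ r := by
  rw [sum_schurFamily_mul_star x hG]
  exact norm_diagonalStarHom_le ((norm_nonneg _).trans hx) fun a ↦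
    (norm_sum_smul_mul_star_mono x (fun i ↦ Finset.sum_nonneg fun b _ ↦ hG i a b)
      fun i ↦ hGs i a).trans hx

lemma norm_sum_star_schurFamily_mul_le {x : κ → A} {G : κ → Fin p → Fin p → ℝ} {s : κ → ℝ} {r : ℝ}
    (hG : ∀ i a b, 0 ≤ G i a b) (hGs : ∀ i b, ∑ a, G i a b ≤ s i)
    (hx : ‖∑ i, s i • (star (x i) * x i)‖ ≤ r) :
    ‖∑ k, star (schurFamily x G k) * schurFamily x G k‖ ≤ r := by
  have transposed := norm_sum_schurFamily_mul_star_le (x := fun i ↦ star (x i))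
    (G := fun i a b ↦ G i b a) (fun i a b ↦ hG i b a) hGs (by simpa only [star_star] using hx)
  convert transposed using 2
  simp only [Fintype.sum_prod_type]
  refine Finset.sum_congr rfl fun i _ ↦ ?_
  rw [Finset.sum_comm]
  simp only [star_schurFamily, star_star]

end SchurFamily

section SchurForm

attribute [local instance] cstarMatrixAlgebra

variable {A B : Type*} [NonUnitalCStarAlgebra A] [NonUnitalCStarAlgebra B] {p : ℕ}

/-- The bilinear form `(v, w) ↦ ∑ₐ ∑_b ψ a ψ b U (v a b) (w a b)` on `M_p(A) × M_p(B)`, the value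
of the functional `U` on the Schur product of `v` and `w` compressed by `ψ`. -/
def schurForm (U : A →ₗ[ℂ] B →ₗ[ℂ] ℂ) (ψ : Fin p → ℝ) :
    CStarMatrix (Fin p) (Fin p) A →ₗ[ℂ] CStarMatrix (Fin p) (Fin p) B →ₗ[ℂ] ℂ :=
  ∑ a, ∑ b, (ψ a * ψ b : ℂ) •
    U.compl₁₂ (Matrix.entryLinearMap ℂ A a b ∘ₗ CStarMatrix.ofMatrixₗ.symm.toLinearMap)
      (Matrix.entryLinearMap ℂ B a b ∘ₗ CStarMatrix.ofMatrixₗ.symm.toLinearMap)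

lemma schurForm_apply (U : A →ₗ[ℂ] B →ₗ[ℂ] ℂ) (ψ : Fin p → ℝ) (v : CStarMatrix (Fin p) (Fin p) A)
    (w : CStarMatrix (Fin p) (Fin p) B) :
    schurForm U ψ v w = ∑ a, ∑ b, (ψ a * ψ b : ℂ) * U (v a b) (w a b) := by
  simp only [schurForm, LinearMap.sum_apply, LinearMap.smul_apply, smul_eq_mul]
  rfl

lemma schurForm_schurFamily (U : A →ₗ[ℂ] B →ₗ[ℂ] ℂ) (ψ : Fin p → ℝ) {κ : Type*} (x : κ → A)
    (y : κ → B) {G : κ → Fin p → Fin p → ℝ} (hG : ∀ i a b, 0 ≤ G i a b) (i : κ) (a b : Fin p) :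
    schurForm U ψ (schurFamily x G (i, a, b)) (schurFamily y G (i, a, b)) =
      (G i a b * (ψ a * ψ b) : ℝ) * U (x i) (y i) := by
  have hsqrt : (√(G i a b) : ℂ) * √(G i a b) = G i a b := by
    rw [← Complex.ofReal_mul, Real.mul_self_sqrt (hG i a b)]
  rw [schurForm_apply, Finset.sum_eq_single a, Finset.sum_eq_single b, schurFamily_apply,
    schurFamily_apply]
  · rw [← Complex.coe_smul, ← Complex.coe_smul, LinearMap.map_smul₂, map_smul, smul_eq_mul,
      smul_eq_mul, Complex.ofReal_mul, ← hsqrt]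
    push_cast
    ring
  · intro b' _ hb
    rw [schurFamily_apply_of_ne x G i (by simp [hb.symm]), LinearMap.map_zero₂, mul_zero]
  · simp
  · refine fun a' _ ha ↦ Finset.sum_eq_zero fun b' _ ↦ ?_
    rw [schurFamily_apply_of_ne x G i (by simp [ha.symm]), LinearMap.map_zero₂, mul_zero]
  · simp

theorem norm_sum_le_of_schurForm_le (U : A →ₗ[ℂ] B →ₗ[ℂ] ℂ) {M : ℝ} (hM : 0 ≤ M)
    (hU : ∀ (p : ℕ) (ψ : Fin p → ℝ) (v : CStarMatrix (Fin p) (Fin p) A)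
      (w : CStarMatrix (Fin p) (Fin p) B), ∑ a, ψ a ^ 2 ≤ 1 →
      ‖schurForm U ψ v w‖ ≤ M * ‖v‖ * ‖w‖)
    {κ : Type*} [Fintype κ] {x : κ → A} {y : κ → B} {s : κ → ℝ} (hs : ∀ i, 0 < s i)
    {r : ℝ} (hr : 0 < r)
    (hx : ‖∑ i, s i • (x i * star (x i))‖ ≤ r) (hx' : ‖∑ i, (s i)⁻¹ • (star (x i) * x i)‖ ≤ r)
    (hy : ‖∑ i, s i • (y i * star (y i))‖ ≤ r) (hy' : ‖∑ i, (s i)⁻¹ • (star (y i) * y i)‖ ≤ r) :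
    ‖∑ i, U (x i) (y i)‖ ≤ 32800 * M * r := by
  obtain ⟨p, ψ, hψ, hG⟩ := exists_isSchurWeight hs
  choose G hG using hG
  have nonneg i a b := (hG i).nonneg a b
  let V := (schurForm U ψ).mkContinuous₂ M fun v w ↦ hU p ψ v w hψ.le
  have hV : ‖V‖ ≤ M := LinearMap.mkContinuous₂_norm_le _ hM _
  have quarter : ∑ k, V (schurFamily x G k) (schurFamily y G k) = 1 / 4 * ∑ i, U (x i) (y i) := by
    simp only [V, LinearMap.mkContinuous₂_apply, Fintype.sum_prod_type,
      schurForm_schurFamily U ψ x y nonneg, ← Finset.sum_mul, ← Complex.ofReal_sum,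
      (hG _).sum_sum_mul_eq, ← Finset.mul_sum]
    norm_num
  have bound := norm_sum_bilin_le_of_nonUnital V hr
    (norm_sum_schurFamily_mul_star_le nonneg (fun i ↦ (hG i).sum_right_le) hx)
    (norm_sum_star_schurFamily_mul_le nonneg (fun i ↦ (hG i).sum_left_le) hx')
    (norm_sum_schurFamily_mul_star_le nonneg (fun i ↦ (hG i).sum_right_le) hy)
    (norm_sum_star_schurFamily_mul_le nonneg (fun i ↦ (hG i).sum_left_le) hy')
  rw [quarter, norm_mul] at bound
  have : 8200 * ‖V‖ * r ≤ 8200 * M * r := by gcongr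
  norm_num at bound
  linarith

end SchurForm

section MatrixAct

open Matrix
open scoped ComplexOrder MatrixOrder Matrix.Norms.L2Operator

/-- The family `W a` obtained by letting a scalar matrix act on a finite family of vectors; it is
used to change the representation `∑ aᵢ ⊗ bᵢ` of a tensor. -/
def matrixAct {E : Type*} [AddCommGroup E] [Module ℂ E] {m n : Type*} [Fintype n]
    (W : Matrix m n ℂ) (a : n → E) (i : m) : E :=
  ∑ k, W i k • a k

section Module

variable {E F : Type*} [AddCommGroup E] [Module ℂ E] [AddCommGroup F] [Module ℂ F]
variable {m n l : Type*} [Fintype n]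

lemma matrixAct_matrixAct [Fintype l] (W : Matrix m n ℂ) (V : Matrix n l ℂ) (a : l → E) :
    matrixAct W (matrixAct V a) = matrixAct (W * V) a := by
  funext i
  simp only [matrixAct, Finset.smul_sum, smul_smul, mul_apply, Finset.sum_smul]
  exact Finset.sum_comm

lemma matrixAct_one [DecidableEq n] (a : n → E) : matrixAct (1 : Matrix n n ℂ) a = a := by
  funext i
  simp [matrixAct, one_apply]

lemma sum_smul_matrixAct [Fintype m] (c : m → ℂ) (W : Matrix m n ℂ) (a : n → E) :
    ∑ i, c i • matrixAct W a i = ∑ k, (Wᵀ *ᵥ c) k • a k := by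
  simp only [matrixAct, mulVec, dotProduct, Finset.smul_sum, Finset.sum_smul, smul_smul,
    transpose_apply, mul_comm (c _)]
  exact Finset.sum_comm

lemma sum_tmul_matrixAct [Fintype m] (W : Matrix m n ℂ) (a : m → E) (b : n → F) :
    ∑ i, a i ⊗ₜ[ℂ] matrixAct W b i = ∑ k, matrixAct Wᵀ a k ⊗ₜ[ℂ] b k := by
  simp only [matrixAct, TensorProduct.sum_tmul, TensorProduct.tmul_sum, TensorProduct.smul_tmul,
    transpose_apply]
  exact Finset.sum_comm

lemma sum_matrixAct_tmul [Fintype m] (W : Matrix m n ℂ) (a : n → E) (b : m → F) :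
    ∑ i, matrixAct W a i ⊗ₜ[ℂ] b i = ∑ k, a k ⊗ₜ[ℂ] matrixAct Wᵀ b k := by
  rw [sum_tmul_matrixAct, transpose_transpose]

lemma exists_dual_of_linearIndependent {n : Type*} [Finite n] [DecidableEq n] {a : n → E}
    (h : LinearIndependent ℂ a) :
    ∃ g : n → E →ₗ[ℂ] ℂ, ∀ i j, g i (a j) = if i = j then 1 else 0 := by
  have := Fintype.ofFinite n
  obtain ⟨f, hf⟩ := LinearMap.exists_leftInverse_of_injective (Fintype.linearCombination ℂ a)
    (LinearMap.ker_eq_bot.2 (linearIndependent_iff_injective_fintypeLinearCombination.1 h))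
  refine ⟨fun i ↦ LinearMap.proj i ∘ₗ f, fun i j ↦ ?_⟩
  have hfj := LinearMap.congr_fun hf (Pi.single j 1)
  rw [LinearMap.comp_apply, Fintype.linearCombination_apply_single, one_smul] at hfj
  simp [hfj, Pi.single_apply]

lemma linearIndependent_matrixAct [Finite m] [DecidableEq m] {a : n → E}
    (ha : LinearIndependent ℂ a) {W : Matrix m n ℂ} (hW : W * Wᴴ = 1) :
    LinearIndependent ℂ (matrixAct W a) := by
  have := Fintype.ofFinite m
  rw [Fintype.linearIndependent_iff] at ha ⊢
  intro c hc
  have hWc : Wᵀ *ᵥ c = 0 := funext (ha _ (sum_smul_matrixAct c W a ▸ hc))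
  have hWc' : c = (Wᴴ)ᵀ *ᵥ (Wᵀ *ᵥ c) := by
    rw [mulVec_mulVec, ← transpose_mul, hW, transpose_one, one_mulVec]
  rw [hWc', hWc, mulVec_zero]
  exact fun _ ↦ rfl

lemma transpose_conjTranspose_mul_conjTranspose [DecidableEq m] {W : Matrix m n ℂ}
    (hW : W * Wᴴ = 1) : Wᴴᵀ * Wᴴᵀᴴ = 1 := by
  have h : Wᴴᵀᴴ = Wᵀ := by ext; simp
  rw [h, ← transpose_mul, hW, transpose_one]

/-- The rows of `W` form an orthonormal basis of the orthogonal complement of the relations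
between the `a i`. -/
lemma exists_linearIndependent_matrixAct (a : n → E) :
    ∃ (p : ℕ) (W : Matrix (Fin p) n ℂ), W * Wᴴ = 1 ∧ matrixAct (Wᴴ * W) a = a ∧
      LinearIndependent ℂ (matrixAct W a) := by
  classical
  let T : EuclideanSpace ℂ n →ₗ[ℂ] E :=
    Fintype.linearCombination ℂ a ∘ₗ (WithLp.linearEquiv 2 ℂ (n → ℂ)).toLinearMap
  let u := stdOrthonormalBasis ℂ (T.kerᗮ : Submodule ℂ (EuclideanSpace ℂ n))
  let W : Matrix (Fin _) n ℂ := .of fun i k ↦ (u i : EuclideanSpace ℂ n) k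
  have hTu (i) : T (u i) = matrixAct W a i := rfl
  refine ⟨_, W, ?_, ?_, ?_⟩
  · ext i j
    rw [one_apply, ← if_congr (eq_comm (a := j) (b := i)) rfl rfl,
      ← orthonormal_iff_ite.1 u.orthonormal j i, Submodule.coe_inner, PiLp.inner_apply]
    rfl
  · funext k
    let e : EuclideanSpace ℂ n := EuclideanSpace.single k 1
    have hTe : T e = a k := Fintype.linearCombination_apply_single ℂ a k 1 |>.trans (one_smul ℂ _)
    have hker : e - (T.kerᗮ).starProjection e ∈ T.ker := by
      simp
    have hproj : (T.kerᗮ).starProjection e = ∑ i, star (W i k) • (u i : EuclideanSpace ℂ n) := by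
      rw [Submodule.starProjection_apply, u.orthogonalProjectionOnto_apply_eq_sum]
      simp [e, W, EuclideanSpace.inner_single_right]
    rw [LinearMap.mem_ker, map_sub, sub_eq_zero, hTe, hproj, map_sum] at hker
    simp only [map_smul, hTu] at hker
    rw [← matrixAct_matrixAct, hker]
    rfl
  · have hinj : Function.Injective (T.domRestrict T.kerᗮ) :=
      LinearMap.injective_domRestrict_iff.2 T.ker.orthogonal_disjoint.symm
    exact u.toBasis.linearIndependent.map' (T.domRestrict T.kerᗮ) (LinearMap.ker_eq_bot.2 hinj)

lemma eq_of_sum_tmul_eq {a : n → E} (ha : LinearIndependent ℂ a) {b b' : n → F}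
    (h : ∑ i, a i ⊗ₜ[ℂ] b i = ∑ i, a i ⊗ₜ[ℂ] b' i) : b = b' := by
  classical
  obtain ⟨g, hg⟩ := exists_dual_of_linearIndependent ha
  funext j
  simpa [hg] using congrArg ((TensorProduct.lid ℂ F).toLinearMap ∘ₗ (g j).rTensor F) h

lemma exists_matrixAct_of_sum_tmul_eq [Fintype m] {a : n → E} {b : n → F} {a' : m → E} {b' : m → F}
    (ha : LinearIndependent ℂ a) (hb' : LinearIndependent ℂ b')
    (h : ∑ i, a i ⊗ₜ[ℂ] b i = ∑ i, a' i ⊗ₜ[ℂ] b' i) :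
    ∃ S : Matrix m n ℂ, a' = matrixAct S a ∧ b = matrixAct Sᵀ b' := by
  classical
  obtain ⟨g, hg⟩ := exists_dual_of_linearIndependent hb'
  have ha' : a' = matrixAct (.of fun j i ↦ g j (b i)) a := by
    funext j
    simpa [hg, matrixAct] using
      (congrArg ((TensorProduct.rid ℂ E).toLinearMap ∘ₗ (g j).lTensor E) h).symm
  refine ⟨_, ha', eq_of_sum_tmul_eq ha ?_⟩
  rw [h, sum_tmul_matrixAct, transpose_transpose, ← ha']

lemma injective_mulVec_of_linearIndependent [Fintype m] {S : Matrix m n ℂ} {b : m → E}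
    (h : LinearIndependent ℂ (matrixAct Sᵀ b)) : Function.Injective S.mulVec := by
  rw [← coe_mulVecLin, ← LinearMap.ker_eq_bot, LinearMap.ker_eq_bot']
  intro c (hc : S *ᵥ c = 0)
  refine funext (Fintype.linearIndependent_iff.1 h c ?_)
  simp [sum_smul_matrixAct, hc]

end Module

lemma exists_unitary_conjTranspose_mul_eq_diagonal {m n : Type*} [Fintype m] [Fintype n]
    [DecidableEq n] {S : Matrix m n ℂ} (hS : Function.Injective S.mulVec) :
    ∃ (W : Matrix n n ℂ) (d : n → ℝ), W * Wᴴ = 1 ∧ (∀ i, 0 < d i) ∧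
      (S * W)ᴴ * (S * W) = diagonal fun i ↦ (d i : ℂ) := by
  have hpd : (Sᴴ * S).PosDef := .conjTranspose_mul_self S hS
  refine ⟨hpd.1.eigenvectorUnitary, hpd.1.eigenvalues, Unitary.coe_mul_star_self _,
    hpd.eigenvalues_pos, ?_⟩
  have h := hpd.1.conjStarAlgAut_star_eigenvectorUnitary
  rw [Unitary.conjStarAlgAut_star_apply] at h
  rw [conjTranspose_mul, Matrix.mul_assoc, ← Matrix.mul_assoc Sᴴ, ← Matrix.mul_assoc]
  exact h

section CStar

variable {A : Type*} [NonUnitalCStarAlgebra A] {m n : Type*} [Fintype m] [Fintype n]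

lemma sum_matrixAct_mul_star (W : Matrix m n ℂ) (a : n → A) :
    ∑ i, matrixAct W a i * star (matrixAct W a i) =
      ∑ k, ∑ l, (Wᴴ * W) l k • (a k * star (a l)) := by
  simp only [matrixAct, star_sum, Finset.sum_mul_sum, star_smul, smul_mul_smul_comm, mul_apply,
    Finset.sum_smul, conjTranspose_apply, mul_comm (star _)]
  rw [Finset.sum_comm]
  exact Finset.sum_congr rfl fun _ _ ↦ Finset.sum_comm

lemma sum_star_mul_matrixAct (W : Matrix m n ℂ) (a : n → A) :
    ∑ i, star (matrixAct W a i) * matrixAct W a i =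
      ∑ k, ∑ l, (Wᴴ * W) k l • (star (a k) * a l) := by
  simp only [matrixAct, star_sum, Finset.sum_mul_sum, star_smul, smul_mul_smul_comm, mul_apply,
    Finset.sum_smul, conjTranspose_apply]
  rw [Finset.sum_comm]
  exact Finset.sum_congr rfl fun _ _ ↦ Finset.sum_comm

variable [DecidableEq n]

/-- With `1 - TᴴT = RᴴR`, the defect `∑ aₖaₖ⋆ - ∑ (Ta)ᵢ(Ta)ᵢ⋆` is `∑ (Ra)ᵢ(Ra)ᵢ⋆ ≥ 0`. -/
lemma norm_sum_matrixAct_mul_star_le {T : Matrix m n ℂ} (hT : (1 - Tᴴ * T).PosSemidef)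
    (a : n → A) :
    ‖∑ i, matrixAct T a i * star (matrixAct T a i)‖ ≤ ‖∑ k, a k * star (a k)‖ := by
  let _ := CStarAlgebra.spectralOrder A
  let _ := CStarAlgebra.spectralOrderedRing A
  obtain ⟨R, hR⟩ := CStarAlgebra.nonneg_iff_eq_star_mul_self.mp hT.nonneg
  rw [star_eq_conjTranspose] at hR
  have hsum : ∑ k, a k * star (a k) = ∑ i, matrixAct T a i * star (matrixAct T a i) +
      ∑ i, matrixAct R a i * star (matrixAct R a i) := by
    simp only [sum_matrixAct_mul_star, ← hR, ← Finset.sum_add_distrib, ← add_smul,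
      ← Matrix.add_apply]
    simp [one_apply]
  rw [hsum]
  exact CStarAlgebra.norm_le_norm_of_nonneg_of_le
    (Finset.sum_nonneg fun i _ ↦ mul_star_self_nonneg _)
    (le_add_of_nonneg_right <| Finset.sum_nonneg fun i _ ↦ mul_star_self_nonneg _)

lemma norm_sum_star_mul_matrixAct_le {T : Matrix m n ℂ} (hT : (1 - Tᴴ * T).PosSemidef)
    (a : n → A) :
    ‖∑ i, star (matrixAct T a i) * matrixAct T a i‖ ≤ ‖∑ k, star (a k) * a k‖ := by
  have hT' : (1 - Tᴴᵀᴴ * Tᴴᵀ).PosSemidef := by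
    have h : 1 - Tᴴᵀᴴ * Tᴴᵀ = (1 - Tᴴ * T)ᵀ := by
      rw [transpose_sub, transpose_one, transpose_mul]
      congr 2
      ext
      simp
    exact h ▸ hT.transpose
  simpa [matrixAct] using norm_sum_matrixAct_mul_star_le hT' fun k ↦ star (a k)

lemma posSemidef_one_sub_conjTranspose_mul [DecidableEq m] {T : Matrix m n ℂ} (hT : T * Tᴴ = 1) :
    (1 - Tᴴ * T).PosSemidef :=
  have hproj : IsStarProjection (Tᴴ * T) :=
    ⟨by simp [IsIdempotentElem, Matrix.mul_assoc, ← Matrix.mul_assoc T, hT],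
      isHermitian_conjTranspose_mul_self T⟩
  hproj.one_sub_nonneg.posSemidef

lemma norm_sum_inv_smul_matrixAct_mul_star_le {Q : Matrix m n ℂ} {d : n → ℝ} (hd : ∀ i, 0 < d i)
    (hQ : Qᴴ * Q = diagonal fun i ↦ (d i : ℂ)) (b : m → A) :
    ‖∑ i, (d i)⁻¹ • (matrixAct Qᵀ b i * star (matrixAct Qᵀ b i))‖ ≤ ‖∑ k, b k * star (b k)‖ := by
  classical
  let T : Matrix n m ℂ := diagonal (fun i ↦ ((√(d i))⁻¹ : ℂ)) * Qᵀ
  have hT : T * Tᴴ = 1 := by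
    have hQ' : Qᵀ * Qᵀᴴ = diagonal fun i ↦ (d i : ℂ) := by
      rw [← diagonal_transpose, ← hQ, transpose_mul]
      rfl
    rw [conjTranspose_mul, Matrix.mul_assoc, ← Matrix.mul_assoc Qᵀ, hQ', diagonal_conjTranspose,
      diagonal_mul_diagonal, diagonal_mul_diagonal, ← diagonal_one]
    congr 1
    funext i
    have hi : (√(d i) : ℂ) ≠ 0 := mod_cast (Real.sqrt_pos.2 (hd i)).ne'
    have hdi : (√(d i) : ℂ) * √(d i) = d i := mod_cast Real.mul_self_sqrt (hd i).le
    simp [← hdi, hi]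
  have hTb (i) : matrixAct T b i = (√(d i))⁻¹ • matrixAct Qᵀ b i := by
    rw [← matrixAct_matrixAct]
    simp [matrixAct, diagonal_apply, ← Complex.coe_smul]
  have h := norm_sum_matrixAct_mul_star_le (posSemidef_one_sub_conjTranspose_mul hT) b
  simpa only [hTb, star_smul, star_trivial, smul_mul_smul_comm, ← mul_inv,
    Real.mul_self_sqrt (hd _).le] using h

end CStar

section Haagerup

variable {A B : Type*} [NonUnitalCStarAlgebra A] [NonUnitalCStarAlgebra B]

lemma HaagerupLE.exists_linearIndependent {z : A ⊗[ℂ] B} {r : ℝ} (h : HaagerupLE z r) :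
    ∃ (n : ℕ) (a : Fin n → A) (b : Fin n → B), z = ∑ i, a i ⊗ₜ[ℂ] b i ∧
      LinearIndependent ℂ a ∧ LinearIndependent ℂ b ∧
      ‖∑ i, a i * star (a i)‖ ≤ r ∧ ‖∑ i, star (b i) * b i‖ ≤ r := by
  obtain ⟨n, a, b, rfl, ha, hb⟩ := h
  obtain ⟨p, W, hW, hWa, hlia⟩ := exists_linearIndependent_matrixAct a
  obtain ⟨q, V, hV, hVb, hlib⟩ := exists_linearIndependent_matrixAct (matrixAct Wᴴᵀ b)
  have hW' := transpose_conjTranspose_mul_conjTranspose hW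
  have hV' := transpose_conjTranspose_mul_conjTranspose hV
  refine ⟨q, matrixAct Vᴴᵀ (matrixAct W a), matrixAct V (matrixAct Wᴴᵀ b), ?_,
    linearIndependent_matrixAct hlia hV', hlib, ?_, ?_⟩
  · rw [sum_matrixAct_tmul, transpose_transpose, matrixAct_matrixAct, hVb, sum_tmul_matrixAct,
      transpose_transpose, matrixAct_matrixAct, hWa]
  · exact (norm_sum_matrixAct_mul_star_le (posSemidef_one_sub_conjTranspose_mul hV') _).trans <|
      (norm_sum_matrixAct_mul_star_le (posSemidef_one_sub_conjTranspose_mul hW) _).trans ha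
  · exact (norm_sum_star_mul_matrixAct_le (posSemidef_one_sub_conjTranspose_mul hV) _).trans <|
      (norm_sum_star_mul_matrixAct_le (posSemidef_one_sub_conjTranspose_mul hW') _).trans hb

/-- The change of basis `S` between a representation optimal for the Haagerup norm and one optimal
for its transpose is brought to the form `S W = (isometry) * √d`. -/
lemma HaagerupLE.exists_pos_weights {z : A ⊗[ℂ] B} {r : ℝ} (h : HaagerupLE z r)
    (h' : HaagerupLE (TensorProduct.comm ℂ A B z) r) :
    ∃ (n : ℕ) (a : Fin n → A) (b : Fin n → B) (d : Fin n → ℝ), (∀ i, 0 < d i) ∧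
      z = ∑ i, a i ⊗ₜ[ℂ] b i ∧
      ‖∑ i, a i * star (a i)‖ ≤ r ∧ ‖∑ i, d i • (star (a i) * a i)‖ ≤ r ∧
      ‖∑ i, (d i)⁻¹ • (b i * star (b i))‖ ≤ r ∧ ‖∑ i, star (b i) * b i‖ ≤ r := by
  obtain ⟨n, a, b, hz, hlia, hlib, ha, hb⟩ := h.exists_linearIndependent
  obtain ⟨m, b', a', hz', hlib', -, hb', ha'⟩ := h'.exists_linearIndependent
  have hab : ∑ i, a i ⊗ₜ[ℂ] b i = ∑ i, a' i ⊗ₜ[ℂ] b' i := by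
    rw [← hz, ← (TensorProduct.comm ℂ A B).symm_apply_apply z, hz']
    simp
  obtain ⟨S, rfl, rfl⟩ := exists_matrixAct_of_sum_tmul_eq hlia hlib' hab
  obtain ⟨W, d, hW, hd, hQ⟩ := exists_unitary_conjTranspose_mul_eq_diagonal
    (injective_mulVec_of_linearIndependent hlib)
  have hW' : Wᴴ * W = 1 := mul_eq_one_comm.1 hW
  have ha'' : matrixAct S a = matrixAct (S * W) (matrixAct Wᴴ a) := by
    rw [matrixAct_matrixAct, Matrix.mul_assoc, hW, Matrix.mul_one]
  refine ⟨n, matrixAct Wᴴ a, matrixAct (S * W)ᵀ b', d, hd, ?_, ?_, ?_, ?_, ?_⟩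
  · rw [hz, transpose_mul, ← matrixAct_matrixAct, sum_tmul_matrixAct Wᵀ, transpose_transpose,
      matrixAct_matrixAct, hW, matrixAct_one]
  · refine (norm_sum_matrixAct_mul_star_le ?_ a).trans ha
    simp [hW, PosSemidef.zero]
  · rw [ha'', sum_star_mul_matrixAct, hQ] at ha'
    simpa [diagonal_apply] using ha'
  · exact (norm_sum_inv_smul_matrixAct_mul_star_le hd hQ b').trans hb'
  · rw [transpose_mul, ← matrixAct_matrixAct]
    refine (norm_sum_star_mul_matrixAct_le (posSemidef_one_sub_conjTranspose_mul ?_) _).trans hb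
    rw [← transpose_one, ← hW', transpose_mul]
    rfl

/-- Replacing `a` by `√(√d) a` and `b` by `√(√d)⁻¹ b` makes the weights of the two families
agree. -/
theorem HaagerupLE.exists_common_weights {z : A ⊗[ℂ] B} {r : ℝ} (h : HaagerupLE z r)
    (h' : HaagerupLE (TensorProduct.comm ℂ A B z) r) :
    ∃ (n : ℕ) (x : Fin n → A) (y : Fin n → B) (s : Fin n → ℝ), (∀ i, 0 < s i) ∧
      z = ∑ i, x i ⊗ₜ[ℂ] y i ∧
      ‖∑ i, s i • (x i * star (x i))‖ ≤ r ∧ ‖∑ i, (s i)⁻¹ • (star (x i) * x i)‖ ≤ r ∧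
      ‖∑ i, s i • (y i * star (y i))‖ ≤ r ∧ ‖∑ i, (s i)⁻¹ • (star (y i) * y i)‖ ≤ r := by
  obtain ⟨n, a, b, d, hd, rfl, h₁, h₂, h₃, h₄⟩ := h.exists_pos_weights h'
  let q (i) : ℝ := √(√(d i))
  have hq (i) : 0 < q i := Real.sqrt_pos.2 (Real.sqrt_pos.2 (hd i))
  have hq2 (i) : q i ^ 2 ≠ 0 := (pow_pos (hq i) 2).ne'
  have hd' (i) : d i = q i ^ 2 * q i ^ 2 := by
    rw [Real.sq_sqrt (Real.sqrt_nonneg _), Real.mul_self_sqrt (hd i).le]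
  refine ⟨n, fun i ↦ q i • a i, fun i ↦ (q i)⁻¹ • b i, fun i ↦ (q i ^ 2)⁻¹,
    fun i ↦ inv_pos.2 (pow_pos (hq i) 2), ?_, ?_, ?_, ?_, ?_⟩
  · simp [TensorProduct.smul_tmul, (hq _).ne']
  all_goals simp only [star_smul, star_trivial, smul_mul_smul_comm, smul_smul, ← pow_two, inv_pow,
    inv_inv, inv_mul_cancel₀ (hq2 _), mul_inv_cancel₀ (hq2 _), one_smul]
  · exact h₁
  · simpa only [hd', ← pow_two] using h₂
  · simpa only [hd', mul_inv, ← pow_two] using h₃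
  · exact h₄

end Haagerup

end MatrixAct

section FunctionalBound

attribute [local instance] cstarMatrixAlgebra

variable {A B : Type u} [NonUnitalCStarAlgebra A] [NonUnitalCStarAlgebra B]
  {NA : ∀ p : ℕ, Matrix (Fin p) (Fin p) A → ℝ} {NB : ∀ q : ℕ, Matrix (Fin q) (Fin q) B → ℝ}
  {X : Type*} [SeminormedAddCommGroup X] [NormedSpace ℂ X]

theorem norm_apply_le_of_haagerupLE (hNA : ∀ p, IsCStarNorm (NA p)) (hNB : ∀ q, IsCStarNorm (NB q))
    {ι : A ⊗[ℂ] B →ₗ[ℂ] X} (hι : ∀ z, ‖ι z‖ ≤ osProjNorm NA NB z) (u : X →L[ℂ] ℂ)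
    {z : A ⊗[ℂ] B} {r : ℝ} (hr : 0 < r) (h : HaagerupLE z r)
    (h' : HaagerupLE (TensorProduct.comm ℂ A B z) r) : ‖u (ι z)‖ ≤ 32800 * ‖u‖ * r := by
  obtain ⟨n, x, y, s, hs, rfl, hx, hx', hy, hy'⟩ := h.exists_common_weights h'
  let U := (TensorProduct.mk ℂ A B).compr₂ (u.toLinearMap ∘ₗ ι)
  have hU (p : ℕ) (ψ : Fin p → ℝ) (v : CStarMatrix (Fin p) (Fin p) A)
      (w : CStarMatrix (Fin p) (Fin p) B) (hψ : ∑ a, ψ a ^ 2 ≤ 1) :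
      ‖schurForm U ψ v w‖ ≤ ‖u‖ * ‖v‖ * ‖w‖ := by
    let t := ∑ a, ∑ b, (ψ a * ψ b : ℂ) • (v a b ⊗ₜ[ℂ] w a b)
    have hUt : schurForm U ψ v w = u (ι t) := by
      simp only [schurForm_apply, t, map_sum, map_smul]
      rfl
    calc ‖schurForm U ψ v w‖ ≤ ‖u‖ * ‖ι t‖ := hUt ▸ u.le_opNorm _
      _ ≤ ‖u‖ * (NA p (CStarMatrix.ofMatrix.symm v) * NB p (CStarMatrix.ofMatrix.symm w)) := by
        gcongr
        exact (hι t).trans (osProjNorm_sum_sum_smul_tmul_le hNA hNB _ _ ψ hψ)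
      _ = ‖u‖ * ‖v‖ * ‖w‖ := by
        rw [(hNA p).eq_cstarMatrix_norm, (hNB p).eq_cstarMatrix_norm, mul_assoc]
  rw [map_sum, map_sum]
  exact norm_sum_le_of_schurForm_le U (norm_nonneg u) hU hs hr hx hx' hy hy'

end FunctionalBound

section Contractive

open Matrix
open scoped ComplexOrder

variable {A I J : Type*} [NonUnitalCStarAlgebra A]

theorem star_dotProduct_self_eq_sum_norm_sq {n : Type*} [Fintype n] (x : n → ℂ) :
    star x ⬝ᵥ x = ((∑ i, ‖x i‖ ^ 2 : ℝ) : ℂ) := by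
  simp [dotProduct, Complex.conj_mul']

theorem posSemidef_one_sub_of_sum_norm_sq_le {m n : Type*} [Fintype m] [Fintype n] [DecidableEq n]
    {T : Matrix m n ℂ} (hT : ∀ x : n → ℂ, ∑ j, ‖(T *ᵥ x) j‖ ^ 2 ≤ ∑ i, ‖x i‖ ^ 2) :
    (1 - Tᴴ * T).PosSemidef := by
  refine .of_dotProduct_mulVec_nonneg
    (isHermitian_one.sub (isHermitian_conjTranspose_mul_self T)) fun x ↦ ?_
  rw [sub_mulVec, one_mulVec, dotProduct_sub, ← mulVec_mulVec, dotProduct_mulVec, ← star_mulVec,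
    star_dotProduct_self_eq_sum_norm_sq, star_dotProduct_self_eq_sum_norm_sq, ← Complex.ofReal_sub,
    Complex.zero_le_real, sub_nonneg]
  exact hT x

/-- A possibly infinite matrix all of whose finite sections are contractions between Euclidean
spaces, i.e. the matrix of a contraction `ℓ²(I) → ℓ²(J)`. -/
def IsContractive (T : J → I → ℂ) : Prop :=
  ∀ (G : Finset J) (F : Finset I) (x : I → ℂ),
    ∑ j ∈ G, ‖∑ i ∈ F, T j i * x i‖ ^ 2 ≤ ∑ i ∈ F, ‖x i‖ ^ 2

theorem IsContractive.posSemidef_one_sub_section [DecidableEq I] {T : J → I → ℂ}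
    (hT : IsContractive T) (G : Finset J) (F : Finset I) :
    (1 - (Matrix.of fun (j : G) (i : F) ↦ T j i)ᴴ *
      (Matrix.of fun (j : G) (i : F) ↦ T j i)).PosSemidef := by
  refine posSemidef_one_sub_of_sum_norm_sq_le fun x ↦ ?_
  let y : I → ℂ := fun i ↦ if h : i ∈ F then x ⟨i, h⟩ else 0
  have hy (i : F) : y i = x i := by simp [y]
  have hTy := hT G F y
  rw [← Finset.sum_coe_sort G, ← Finset.sum_coe_sort F (fun i ↦ ‖y i‖ ^ 2)] at hTy
  simp only [← Finset.sum_coe_sort F, hy] at hTy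
  exact hTy

theorem IsContractive.norm_sum_mul_star_le {T : J → I → ℂ} (hT : IsContractive T) (G : Finset J)
    (F : Finset I) (a : I → A) :
    ‖∑ j ∈ G, (∑ i ∈ F, T j i • a i) * star (∑ i ∈ F, T j i • a i)‖ ≤
      ‖∑ i ∈ F, a i * star (a i)‖ := by
  classical
  have h := norm_sum_matrixAct_mul_star_le (hT.posSemidef_one_sub_section G F) (fun i : F ↦ a i)
  rw [← Finset.sum_coe_sort G, ← Finset.sum_coe_sort F (fun i ↦ a i * star (a i))]
  simp only [← Finset.sum_coe_sort F (fun i ↦ T _ i • a i)]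
  exact h

theorem IsContractive.norm_sum_smul_sq_le {T : J → I → ℂ} (hT : IsContractive T) (j : J)
    (F : Finset I) (a : I → A) :
    ‖∑ i ∈ F, T j i • a i‖ ^ 2 ≤ ‖∑ i ∈ F, a i * star (a i)‖ := by
  simpa only [Finset.sum_singleton, CStarRing.norm_self_mul_star, ← sq]
    using hT.norm_sum_mul_star_le {j} F a

theorem norm_sum_smul_sq_le_mul_norm_sum_mul_star (F : Finset I) (c : I → ℂ) (a : I → A) :
    ‖∑ i ∈ F, c i • a i‖ ^ 2 ≤ (∑ i ∈ F, ‖c i‖ ^ 2) * ‖∑ i ∈ F, a i * star (a i)‖ := by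
  classical
  set S := ∑ i ∈ F, ‖c i‖ ^ 2 with hS
  have hS_nonneg : 0 ≤ S := Finset.sum_nonneg fun i _ ↦ by positivity
  rcases hS_nonneg.eq_or_lt with h0 | hS_pos
  · have hc : ∀ i ∈ F, c i = 0 := fun i hi ↦ by
      simpa using (Finset.sum_eq_zero_iff_of_nonneg fun i _ ↦ by positivity).1 h0.symm i hi
    rw [Finset.sum_eq_zero fun i hi ↦ by rw [hc i hi, zero_smul], ← h0]
    simp
  let T : Matrix Unit F ℂ := Matrix.of fun _ i ↦ ((√S)⁻¹ : ℝ) • c i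
  have hT : T * Tᴴ = 1 := by
    ext i j
    have hsum : ∑ i : F, c i * star (c i) = (S : ℂ) := by
      rw [hS, ← Finset.sum_coe_sort F]
      simp [Complex.mul_conj']
    simp only [Matrix.mul_apply, T, conjTranspose_apply, of_apply, star_smul, smul_mul_smul_comm,
      ← Finset.smul_sum, hsum, ← mul_inv, Real.mul_self_sqrt hS_nonneg, star_trivial]
    simp [hS_pos.ne']
  have h := norm_sum_matrixAct_mul_star_le (posSemidef_one_sub_conjTranspose_mul hT)
    (fun i : F ↦ a i)
  have hTa (i : Unit) : matrixAct T (fun i : F ↦ a i) i = ((√S)⁻¹ : ℝ) • ∑ i ∈ F, c i • a i := by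
    simp only [matrixAct, T, of_apply, smul_assoc, ← Finset.smul_sum]
    rw [Finset.sum_coe_sort F (fun i ↦ c i • a i)]
  simp only [hTa, Finset.univ_unique, Finset.sum_singleton, CStarRing.norm_self_mul_star,
    norm_smul, norm_inv, Real.norm_of_nonneg (Real.sqrt_nonneg S)] at h
  rw [Finset.sum_coe_sort F (fun i ↦ a i * star (a i)), mul_mul_mul_comm, ← mul_inv,
    Real.mul_self_sqrt hS_nonneg, inv_mul_le_iff₀ hS_pos, ← sq] at h
  exact h

theorem norm_sum_smul_sq_le_mul_norm_sum_star_mul (F : Finset I) (c : I → ℂ) (a : I → A) :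
    ‖∑ i ∈ F, c i • a i‖ ^ 2 ≤ (∑ i ∈ F, ‖c i‖ ^ 2) * ‖∑ i ∈ F, star (a i) * a i‖ := by
  simpa only [Pi.star_apply, ← star_smul, ← star_sum, norm_star, star_star]
    using norm_sum_smul_sq_le_mul_norm_sum_mul_star F (star c) (star a)

theorem sum_norm_apply_sq_le {a : I → A} {C : ℝ} {F : Finset I}
    (ha : ‖∑ i ∈ F, a i * star (a i)‖ ≤ C ^ 2) (φ : A →L[ℂ] ℂ) :
    ∑ i ∈ F, ‖φ (a i)‖ ^ 2 ≤ (‖φ‖ * C) ^ 2 := by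
  set S := ∑ i ∈ F, ‖φ (a i)‖ ^ 2 with hS
  set y := ∑ i ∈ F, star (φ (a i)) • a i with hy
  have hS_nonneg : 0 ≤ S := Finset.sum_nonneg fun i _ ↦ by positivity
  have hφy : φ y = (S : ℂ) := by simp [hy, hS, Complex.conj_mul']
  have hy_le : ‖y‖ ^ 2 ≤ S * C ^ 2 :=
    calc ‖y‖ ^ 2 ≤ S * ‖∑ i ∈ F, a i * star (a i)‖ := by
          simpa only [norm_star] using
            norm_sum_smul_sq_le_mul_norm_sum_mul_star F (fun i ↦ star (φ (a i))) a
      _ ≤ S * C ^ 2 := by gcongr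
  have hS_le : S ≤ ‖φ‖ * ‖y‖ := by
    simpa only [hφy, Complex.norm_real, Real.norm_of_nonneg hS_nonneg] using φ.le_opNorm y
  rcases hS_nonneg.eq_or_lt with h0 | hS_pos
  · rw [← h0]
    positivity
  · refine le_of_mul_le_mul_left ?_ hS_pos
    calc S * S ≤ (‖φ‖ * ‖y‖) * (‖φ‖ * ‖y‖) := by gcongr
      _ = ‖φ‖ ^ 2 * ‖y‖ ^ 2 := by ring
      _ ≤ ‖φ‖ ^ 2 * (S * C ^ 2) := by gcongr
      _ = S * (‖φ‖ * C) ^ 2 := by ring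

end Contractive

section SquareSummable

variable {I : Type*}

/-- The Hilbert space `ℓ²(I)` of square-summable complex families indexed by `I`. -/
abbrev EllTwo (I : Type*) : Type _ := lp (fun _ : I ↦ ℂ) 2

theorem sum_norm_sq_le_norm_sq (c : EllTwo I) (F : Finset I) : ∑ i ∈ F, ‖c i‖ ^ 2 ≤ ‖c‖ ^ 2 := by
  simpa using lp.sum_rpow_le_norm_rpow (p := 2) (by norm_num) c F

theorem summable_norm_sq (c : EllTwo I) : Summable fun i ↦ ‖c i‖ ^ 2 := by
  simpa using (memℓp_gen_iff (p := 2) (by norm_num)).1 (lp.memℓp c)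

theorem single_eq_smul_single_one [DecidableEq I] (i : I) (c : ℂ) :
    lp.single 2 i c = c • (lp.single 2 i 1 : EllTwo I) := by
  rw [← lp.single_smul, smul_eq_mul, mul_one]

section Synthesis

variable {B : Type*} [NonUnitalCStarAlgebra B] {b : I → B} {C : ℝ}

theorem summable_smul_of_norm_sum_star_mul_le (hC : 0 < C)
    (hb : ∀ F : Finset I, ‖∑ i ∈ F, star (b i) * b i‖ ≤ C ^ 2) (c : EllTwo I) :
    Summable fun i ↦ c i • b i := by
  rw [summable_iff_vanishing_norm]
  intro ε hε
  obtain ⟨s, hs⟩ := summable_iff_vanishing_norm.1 (summable_norm_sq c) ((ε / C) ^ 2) (by positivity)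
  refine ⟨s, fun t ht ↦ lt_of_pow_lt_pow_left₀ 2 hε.le ?_⟩
  have hct := (le_abs_self _).trans_lt (hs t ht)
  calc ‖∑ i ∈ t, c i • b i‖ ^ 2 ≤ (∑ i ∈ t, ‖c i‖ ^ 2) * ‖∑ i ∈ t, star (b i) * b i‖ :=
        norm_sum_smul_sq_le_mul_norm_sum_star_mul t (c ·) b
    _ ≤ (∑ i ∈ t, ‖c i‖ ^ 2) * C ^ 2 := by gcongr; exact hb t
    _ < (ε / C) ^ 2 * C ^ 2 := by gcongr
    _ = ε ^ 2 := by field_simp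

theorem exists_synthesis_operator (hC : 0 < C)
    (hb : ∀ F : Finset I, ‖∑ i ∈ F, star (b i) * b i‖ ≤ C ^ 2) :
    ∃ T : EllTwo I →L[ℂ] B, ∀ c, HasSum (fun i ↦ c i • b i) (T c) := by
  have hs := summable_smul_of_norm_sum_star_mul_le hC hb
  let T₀ : EllTwo I →ₗ[ℂ] B :=
    { toFun := fun c ↦ ∑' i, c i • b i
      map_add' := fun c d ↦ by
        rw [← (hs c).tsum_add (hs d)]
        simp [add_smul]
      map_smul' := fun t c ↦ by
        rw [RingHom.id_apply, ← (hs c).tsum_const_smul]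
        simp [mul_smul] }
  refine ⟨T₀.mkContinuous C fun c ↦ ?_, fun c ↦ (hs c).hasSum⟩
  refine le_of_tendsto (hs c).hasSum.norm (.of_forall fun F ↦ ?_)
  refine le_of_pow_le_pow_left₀ two_ne_zero (by positivity) ?_
  calc ‖∑ i ∈ F, c i • b i‖ ^ 2 ≤ (∑ i ∈ F, ‖c i‖ ^ 2) * ‖∑ i ∈ F, star (b i) * b i‖ :=
        norm_sum_smul_sq_le_mul_norm_sum_star_mul F (c ·) b
    _ ≤ ‖c‖ ^ 2 * C ^ 2 := by
        gcongr
        · exact sum_norm_sq_le_norm_sq c F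
        · exact hb F
    _ = (C * ‖c‖) ^ 2 := by ring

end Synthesis

section KerProjection

variable {E : Type*} [NormedAddCommGroup E] [NormedSpace ℂ E] {b : I → E} (T : EllTwo I →L[ℂ] E)

/-- The orthogonal projection of `ℓ²(I)` onto `(ker T)ᗮ`. -/
def kerOrthogonalProj : EllTwo I →L[ℂ] EllTwo I := T.kerᗮ.starProjection

theorem kerOrthogonalProj_apply (v : EllTwo I) :
    kerOrthogonalProj T v = v - T.ker.starProjection v := by
  simp [kerOrthogonalProj, Submodule.starProjection_orthogonal']

theorem map_kerOrthogonalProj (v : EllTwo I) : T (kerOrthogonalProj T v) = T v := by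
  have h : T (T.ker.starProjection v) = 0 := T.ker.starProjection_apply_mem v
  rw [kerOrthogonalProj_apply, map_sub, h, sub_zero]

variable {T} in
theorem kerOrthogonalProj_eq_zero {v : EllTwo I} (hv : T v = 0) : kerOrthogonalProj T v = 0 := by
  rw [kerOrthogonalProj_apply, Submodule.starProjection_eq_self_iff.2 hv, sub_self]

open Classical in
/-- The matrix of the orthogonal projection of `ℓ²(I)` onto `(ker T)ᗮ` in the standard basis. -/
def kerOrthogonalMatrix (j i : I) : ℂ := kerOrthogonalProj T (lp.single 2 i 1) j

theorem hasSum_map_single_mul [DecidableEq I] (Q : EllTwo I →L[ℂ] EllTwo I) (w : EllTwo I) (j : I) :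
    HasSum (fun i ↦ Q (lp.single 2 i 1) j * w i) (Q w j) := by
  have h := ((lp.hasSum_single (p := 2) (by norm_num) w).mapL Q).mapL
    (lp.evalCLM ℂ (fun _ : I ↦ ℂ) 2 j)
  refine h.congr_fun fun i ↦ ?_
  rw [single_eq_smul_single_one i (w i), map_smul, map_smul, smul_eq_mul, mul_comm]
  rfl

theorem isContractive_kerOrthogonalMatrix : IsContractive (kerOrthogonalMatrix T) := by
  classical
  intro G F x
  let w : EllTwo I := ∑ i ∈ F, lp.single 2 i (x i)
  have hw : ‖w‖ ^ 2 = ∑ i ∈ F, ‖x i‖ ^ 2 := by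
    simpa using lp.norm_sum_single (p := 2) (E := fun _ : I ↦ ℂ) (by norm_num) x F
  have hQw (j : I) : ∑ i ∈ F, kerOrthogonalMatrix T j i * x i = kerOrthogonalProj T w j := by
    simp only [w, single_eq_smul_single_one _ (x _), map_sum, map_smul]
    rw [lp.coeFn_sum, Finset.sum_apply]
    exact Finset.sum_congr rfl fun i _ ↦ mul_comm _ _
  simp only [hQw, ← hw]
  refine (sum_norm_sq_le_norm_sq _ G).trans ?_
  gcongr
  exact Submodule.norm_starProjection_apply_le _ w

variable {T}

theorem hasSum_kerOrthogonalMatrix_mul {w : EllTwo I} (hw : T w = 0) (j : I) :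
    HasSum (fun i ↦ kerOrthogonalMatrix T j i * w i) 0 := by
  classical
  have h := hasSum_map_single_mul (kerOrthogonalProj T) w j
  rwa [kerOrthogonalProj_eq_zero hw] at h

theorem hasSum_kerOrthogonalMatrix_smul (hT : ∀ c, HasSum (fun i ↦ c i • b i) (T c)) (i : I) :
    HasSum (fun j ↦ kerOrthogonalMatrix T j i • b j) (b i) := by
  classical
  let δ : EllTwo I := lp.single 2 i 1
  have hTδ : T δ = b i := by
    refine (hT δ).unique ?_
    simpa [δ] using hasSum_single (f := fun j ↦ δ j • b j) i fun j hj ↦ by simp [δ, hj]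
  have h := hT (kerOrthogonalProj T δ)
  rwa [map_kerOrthogonalProj, hTδ] at h

end KerProjection

end SquareSummable

section HaagerupInjectivity

open Filter Topology

variable {A B I J : Type*} [NonUnitalCStarAlgebra A] [NonUnitalCStarAlgebra B]

theorem exists_norm_sum_le_sq_of_summable {E : Type*} [SeminormedAddCommGroup E] {f : I → E}
    (hf : Summable f) : ∃ C : ℝ, 0 < C ∧ ∀ F : Finset I, ‖∑ i ∈ F, f i‖ ≤ C ^ 2 := by
  classical
  obtain ⟨s, hs⟩ := eventually_atTop.1 (hf.hasSum.norm.eventually (gt_mem_nhds (lt_add_one _)))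
  refine ⟨‖∑' i, f i‖ + 1 + ∑ i ∈ s, ‖f i‖, by positivity, fun F ↦ ?_⟩
  have hF : ∑ i ∈ F, f i = ∑ i ∈ F ∪ s, f i - ∑ i ∈ s \ F, f i := by
    rw [← Finset.union_sdiff_self_eq_union, Finset.sum_union Finset.disjoint_sdiff,
      add_sub_cancel_right]
  calc ‖∑ i ∈ F, f i‖ ≤ ‖∑' i, f i‖ + 1 + ∑ i ∈ s, ‖f i‖ := by
        rw [hF]
        refine norm_sub_le_of_le (hs _ Finset.subset_union_right).le ((norm_sum_le _ _).trans ?_)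
        exact Finset.sum_le_sum_of_subset_of_nonneg Finset.sdiff_subset fun i _ _ ↦ norm_nonneg _
    _ ≤ (‖∑' i, f i‖ + 1 + ∑ i ∈ s, ‖f i‖) ^ 2 := by
        refine le_self_pow₀ ?_ two_ne_zero
        linarith [norm_nonneg (∑' i, f i), Finset.sum_nonneg fun i (_ : i ∈ s) ↦ norm_nonneg (f i)]

theorem IsContractive.summable_smul {T : J → I → ℂ} (hT : IsContractive T) {a : I → A}
    (ha : Summable fun i ↦ a i * star (a i)) (j : J) : Summable fun i ↦ T j i • a i := by
  rw [summable_iff_vanishing_norm]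
  intro ε hε
  obtain ⟨s, hs⟩ := summable_iff_vanishing_norm.1 ha (ε ^ 2) (by positivity)
  exact ⟨s, fun t ht ↦
    lt_of_pow_lt_pow_left₀ 2 hε.le ((hT.norm_sum_smul_sq_le j t a).trans_lt (hs t ht))⟩

theorem IsContractive.norm_sum_mul_star_le_of_hasSum_zero {T : J → I → ℂ} (hT : IsContractive T)
    {a : I → A} (hTa : ∀ j, HasSum (fun i ↦ T j i • a i) 0) {F : Finset I} {ε : ℝ}
    (hF : ∀ t, Disjoint t F → ‖∑ i ∈ t, a i * star (a i)‖ ≤ ε) (G : Finset J) :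
    ‖∑ j ∈ G, (∑ i ∈ F, T j i • a i) * star (∑ i ∈ F, T j i • a i)‖ ≤ ε := by
  classical
  have hcompl (j : J) :
      Tendsto (fun F' ↦ ∑ i ∈ F' \ F, T j i • a i) atTop (𝓝 (-∑ i ∈ F, T j i • a i)) := by
    have h := Tendsto.sub_const (hTa j) (∑ i ∈ F, T j i • a i)
    rw [zero_sub] at h
    refine h.congr' ?_
    filter_upwards [eventually_ge_atTop F] with F' hF'
    rw [← Finset.sum_sdiff hF', add_sub_cancel_right]
  have hlim := (tendsto_finsetSum G fun j _ ↦ (hcompl j).mul (hcompl j).star).norm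
  simp only [star_neg, neg_mul_neg] at hlim
  exact le_of_tendsto hlim (.of_forall fun F' ↦
    (hT.norm_sum_mul_star_le G (F' \ F) a).trans (hF _ Finset.sdiff_disjoint))

theorem exists_norm_sum_star_sub_mul_sub_le {T : J → I → ℂ} {b : J → B} {b' : I → B}
    (hb : ∀ i, HasSum (fun j ↦ T j i • b j) (b' i)) (F : Finset I) {ε : ℝ} (hε : 0 < ε) :
    ∃ G : Finset J, ‖∑ i ∈ F, star (b' i - ∑ j ∈ G, T j i • b j) *
      (b' i - ∑ j ∈ G, T j i • b j)‖ ≤ ε := by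
  have hsub (i : I) : Tendsto (fun G ↦ b' i - ∑ j ∈ G, T j i • b j) atTop (𝓝 0) := by
    have h := Tendsto.const_sub (b' i) (hb i)
    rwa [sub_self] at h
  have hlim := (tendsto_finsetSum F fun i _ ↦ (hsub i).star.mul (hsub i)).norm
  simp only [mul_zero, Finset.sum_const_zero, norm_zero] at hlim
  exact (hlim.eventually (gt_mem_nhds hε)).exists.imp fun _ h ↦ h.le

variable {a : I → A} {b : I → B}

theorem hasSum_kerOrthogonalMatrix_smul_zero {T : EllTwo I →L[ℂ] B}
    (hT : ∀ c, HasSum (fun i ↦ c i • b i) (T c)) (ha : Summable fun i ↦ a i * star (a i))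
    {κ : Type*} {l : Filter κ} [l.NeBot] {S : κ → Finset I} (hS : Tendsto S l atTop)
    (h0 : ∀ (φ : A →L[ℂ] ℂ) (ψ : B →L[ℂ] ℂ),
      Tendsto (fun k ↦ ∑ i ∈ S k, φ (a i) * ψ (b i)) l (𝓝 0)) (j : I) :
    HasSum (fun i ↦ kerOrthogonalMatrix T j i • a i) 0 := by
  have hsum := (isContractive_kerOrthogonalMatrix T).summable_smul ha j
  obtain ⟨C, -, hC⟩ := exists_norm_sum_le_sq_of_summable ha
  suffices hz : ∑' i, kerOrthogonalMatrix T j i • a i = 0 from hz ▸ hsum.hasSum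
  refine SeparatingDual.eq_zero_of_forall_dual_eq_zero (R := ℂ) fun φ ↦ ?_
  have hmem : Memℓp (fun i ↦ φ (a i)) 2 :=
    memℓp_gen' (C := (‖φ‖ * C) ^ 2) fun F ↦ by simpa using sum_norm_apply_sq_le (hC F) φ
  let w : EllTwo I := ⟨fun i ↦ φ (a i), hmem⟩
  have hTw : T w = 0 := SeparatingDual.eq_zero_of_forall_dual_eq_zero (R := ℂ) fun ψ ↦ by
    refine tendsto_nhds_unique (Tendsto.comp ((hT w).mapL ψ) hS) ?_
    simpa [Function.comp_def, w] using h0 φ ψ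
  refine (hsum.hasSum.mapL φ).unique ?_
  simpa only [map_smul, smul_eq_mul] using hasSum_kerOrthogonalMatrix_mul hTw j

theorem sum_tmul_eq_sum_tmul_add_sum_tmul_sub (q : J → I → ℂ) (d : J → B) (F : Finset I)
    (G : Finset J) :
    ∑ i ∈ F, a i ⊗ₜ[ℂ] b i = ∑ j ∈ G, (∑ i ∈ F, q j i • a i) ⊗ₜ[ℂ] d j +
      ∑ i ∈ F, a i ⊗ₜ[ℂ] (b i - ∑ j ∈ G, q j i • d j) := by
  simp only [TensorProduct.tmul_sub, Finset.sum_sub_distrib, TensorProduct.tmul_sum,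
    TensorProduct.sum_tmul, TensorProduct.tmul_smul, TensorProduct.smul_tmul']
  rw [Finset.sum_comm (s := G), add_sub_cancel]

/-- Injectivity of the Haagerup norm, in sequential form. -/
theorem eventually_haagerupLE_sum (ha : Summable fun i ↦ a i * star (a i)) {C : ℝ} (hC : 0 < C)
    (hb : ∀ F : Finset I, ‖∑ i ∈ F, star (b i) * b i‖ ≤ C ^ 2)
    {κ : Type*} {l : Filter κ} [l.NeBot] {S : κ → Finset I} (hS : Tendsto S l atTop)
    (h0 : ∀ (φ : A →L[ℂ] ℂ) (ψ : B →L[ℂ] ℂ),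
      Tendsto (fun k ↦ ∑ i ∈ S k, φ (a i) * ψ (b i)) l (𝓝 0)) {r : ℝ} (hr : 0 < r) :
    ∀ᶠ F in atTop, HaagerupLE (∑ i ∈ F, a i ⊗ₜ[ℂ] b i) r := by
  obtain ⟨T, hT⟩ := exists_synthesis_operator hC hb
  have hqb := hasSum_kerOrthogonalMatrix_smul hT
  have hqa := hasSum_kerOrthogonalMatrix_smul_zero hT ha hS h0
  obtain ⟨D, hD, haD⟩ := exists_norm_sum_le_sq_of_summable ha
  obtain ⟨s, hs⟩ := summable_iff_vanishing_norm.1 ha ((r / 2 / C) ^ 2) (by positivity)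
  filter_upwards [eventually_ge_atTop s] with F hsF
  have hε : 0 < (r / 2 / D) ^ 2 := by positivity
  obtain ⟨G, hG⟩ := exists_norm_sum_star_sub_mul_sub_le hqb F hε
  have hG' := (isContractive_kerOrthogonalMatrix T).norm_sum_mul_star_le_of_hasSum_zero hqa
    (fun t ht ↦ (hs t (ht.mono_right hsF)).le) G
  rw [sum_tmul_eq_sum_tmul_add_sum_tmul_sub (kerOrthogonalMatrix T) b F G, ← add_halves r]
  refine HaagerupLE.add ?_ ?_
  · refine .of_norm_mul_norm_le G _ _ (half_pos hr) ?_
    refine (mul_le_mul hG' (hb G) (norm_nonneg _) (by positivity)).trans_eq ?_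
    field_simp
  · refine .of_norm_mul_norm_le F _ _ (half_pos hr) ?_
    refine (mul_le_mul (haD F) hG (norm_nonneg _) (by positivity)).trans_eq ?_
    field_simp

end HaagerupInjectivity

section Blocks

open Filter Topology

theorem summable_sigma_of_nonneg_of_norm_sum_le {A : Type*} [NonUnitalCStarAlgebra A]
    [PartialOrder A] [StarOrderedRing A] {β : Type*} {γ : β → Type*} [∀ m, Fintype (γ m)]
    {f : (Σ m, γ m) → A} (hf : ∀ i, 0 ≤ f i) {ρ : β → ℝ} (hρ : Summable ρ)
    (h : ∀ m, ‖∑ k, f ⟨m, k⟩‖ ≤ ρ m) : Summable f := by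
  classical
  rw [summable_iff_vanishing_norm]
  intro ε hε
  obtain ⟨s, hs⟩ := summable_iff_vanishing_norm.1 hρ ε hε
  refine ⟨s.sigma fun _ ↦ Finset.univ, fun F hF ↦ ?_⟩
  have hFs : Disjoint (F.image Sigma.fst) s := by
    simpa [Finset.disjoint_left, Sigma.forall] using hF
  have hF_le : ∑ i ∈ F, f i ≤ ∑ m ∈ F.image Sigma.fst, ∑ k, f ⟨m, k⟩ := by
    rw [← Finset.sum_sigma]
    refine Finset.sum_le_sum_of_subset_of_nonneg (fun i hi ↦ ?_) fun i _ _ ↦ hf i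
    simpa using ⟨i.2, hi⟩
  calc ‖∑ i ∈ F, f i‖ ≤ ‖∑ m ∈ F.image Sigma.fst, ∑ k, f ⟨m, k⟩‖ :=
        CStarAlgebra.norm_le_norm_of_nonneg_of_le (Finset.sum_nonneg fun i _ ↦ hf i) hF_le
    _ ≤ ∑ m ∈ F.image Sigma.fst, ρ m := norm_sum_le_of_le _ fun m _ ↦ h m
    _ < ε := (le_abs_self _).trans_lt (hs _ hFs)

theorem tendsto_range_sigma_univ (γ : ℕ → Type*) [∀ m, Fintype (γ m)] :
    Tendsto (fun m ↦ (Finset.range m).sigma fun k ↦ (Finset.univ : Finset (γ k))) atTop atTop :=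
  tendsto_atTop_finset_of_monotone
    (fun _ _ h ↦ Finset.sigma_mono (Finset.range_mono h) fun _ ↦ le_rfl)
    fun i ↦ ⟨i.1 + 1, by simp⟩

variable {A B : Type*} [NonUnitalCStarAlgebra A] [NonUnitalCStarAlgebra B]

theorem eventually_haagerupLE_sum_range {w : ℕ → A ⊗[ℂ] B} {ρ : ℕ → ℝ} (hρ : Summable ρ)
    (hw : ∀ m, HaagerupLE (w m) (ρ m))
    (h0 : ∀ (φ : A →L[ℂ] ℂ) (ψ : B →L[ℂ] ℂ),
      Tendsto (fun m ↦ TensorProduct.dualDistrib ℂ A B (φ.toLinearMap ⊗ₜ ψ.toLinearMap)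
        (∑ k ∈ Finset.range m, w k)) atTop (𝓝 0)) {r : ℝ} (hr : 0 < r) :
    ∀ᶠ m in atTop, HaagerupLE (∑ k ∈ Finset.range m, w k) r := by
  choose n a b hab ha hb using hw
  have ha' : Summable fun i : Σ m, Fin (n m) ↦ a i.1 i.2 * star (a i.1 i.2) :=
    let _ := CStarAlgebra.spectralOrder A
    have := CStarAlgebra.spectralOrderedRing A
    summable_sigma_of_nonneg_of_norm_sum_le (fun _ ↦ mul_star_self_nonneg _) hρ ha
  have hb' : Summable fun i : Σ m, Fin (n m) ↦ star (b i.1 i.2) * b i.1 i.2 :=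
    let _ := CStarAlgebra.spectralOrder B
    have := CStarAlgebra.spectralOrderedRing B
    summable_sigma_of_nonneg_of_norm_sum_le (fun _ ↦ star_mul_self_nonneg _) hρ hb
  obtain ⟨C, hC, hbC⟩ := exists_norm_sum_le_sq_of_summable hb'
  have hS := tendsto_range_sigma_univ fun m ↦ Fin (n m)
  have hsum (m : ℕ) : ∑ k ∈ Finset.range m, w k =
      ∑ i ∈ (Finset.range m).sigma fun k ↦ (Finset.univ : Finset (Fin (n k))),
        a i.1 i.2 ⊗ₜ[ℂ] b i.1 i.2 := by
    rw [Finset.sum_sigma]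
    exact Finset.sum_congr rfl fun k _ ↦ hab k
  simp only [hsum] at h0 ⊢
  exact hS.eventually (eventually_haagerupLE_sum ha' hC hbC hS (fun φ ψ ↦ by simpa using h0 φ ψ) hr)

theorem eventually_haagerupLE_comm_sum_range {w : ℕ → A ⊗[ℂ] B} {ρ : ℕ → ℝ} (hρ : Summable ρ)
    (hw : ∀ m, HaagerupLE (TensorProduct.comm ℂ A B (w m)) (ρ m))
    (h0 : ∀ (φ : A →L[ℂ] ℂ) (ψ : B →L[ℂ] ℂ),
      Tendsto (fun m ↦ TensorProduct.dualDistrib ℂ A B (φ.toLinearMap ⊗ₜ ψ.toLinearMap)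
        (∑ k ∈ Finset.range m, w k)) atTop (𝓝 0)) {r : ℝ} (hr : 0 < r) :
    ∀ᶠ m in atTop, HaagerupLE (TensorProduct.comm ℂ A B (∑ k ∈ Finset.range m, w k)) r := by
  simp only [map_sum]
  refine eventually_haagerupLE_sum_range hρ hw (fun ψ φ ↦ ?_) hr
  simpa only [← map_sum, TensorProduct.dualDistrib_apply_comm, TensorProduct.comm_tmul]
    using h0 φ ψ

end Blocks

section SliceMaps

open Filter Topology

theorem exists_summable_norm_tendsto_of_denseRange {V X : Type*} [AddCommGroup V]
    [SeminormedAddCommGroup X] {ι : V →+ X} (hι : DenseRange ι) (x : X) :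
    ∃ w : ℕ → V, Summable (fun k ↦ ‖ι (w k)‖) ∧
      Tendsto (fun m ↦ ι (∑ k ∈ Finset.range m, w k)) atTop (𝓝 x) := by
  have hx : x ∈ closure (ι.range : Set X) := by
    rw [AddMonoidHom.coe_range]
    exact hι x
  obtain ⟨y, hlim, hy, -, hlt⟩ := controlled_sum_of_mem_closure hx
    (b := fun k ↦ (1 / 2) ^ k) fun k ↦ by positivity
  choose w hw using hy
  refine ⟨w, ?_, ?_⟩
  · rw [← summable_nat_add_iff 1]
    have hle (k : ℕ) : ‖ι (w (k + 1))‖ ≤ (1 / 2) ^ (k + 1) :=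
      (hw (k + 1) ▸ hlt (k + 1) k.succ_pos).le
    exact ((summable_nat_add_iff 1).2 summable_geometric_two).of_nonneg_of_le
      (fun _ ↦ norm_nonneg _) hle
  · rw [← tendsto_add_atTop_iff_nat 1]
    simpa only [map_sum, hw] using hlim

variable {A B : Type u} [NonUnitalCStarAlgebra A] [NonUnitalCStarAlgebra B]
  {NA : ∀ p : ℕ, Matrix (Fin p) (Fin p) A → ℝ} {NB : ∀ q : ℕ, Matrix (Fin q) (Fin q) B → ℝ}

theorem exists_tendsto_sum_range_haagerupLE {X : Type*} [SeminormedAddCommGroup X]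
    [NormedSpace ℂ X] (hNA : ∀ p, IsCStarNorm (NA p)) (hNB : ∀ q, IsCStarNorm (NB q))
    {ι : A ⊗[ℂ] B →ₗ[ℂ] X} (hι : ∀ z, ‖ι z‖ = osProjNorm NA NB z) (hι_dense : DenseRange ι)
    (x : X) :
    ∃ (w : ℕ → A ⊗[ℂ] B) (ρ : ℕ → ℝ), Summable ρ ∧
      (∀ k, HaagerupLE (w k) (ρ k) ∧ HaagerupLE (TensorProduct.comm ℂ A B (w k)) (ρ k)) ∧
      Tendsto (fun m ↦ ι (∑ k ∈ Finset.range m, w k)) atTop (𝓝 x) := by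
  obtain ⟨w, hw, hlim⟩ :=
    exists_summable_norm_tendsto_of_denseRange (ι := ι.toAddMonoidHom) hι_dense x
  refine ⟨w, fun k ↦ ‖ι (w k)‖ + (1 / 2) ^ k, hw.add summable_geometric_two, fun k ↦ ?_, hlim⟩
  refine HaagerupLE.of_osProjNorm_lt hNA hNB (by positivity) ?_
  rw [← hι]
  exact lt_add_of_pos_right _ (by positivity)

theorem eq_zero_of_tendsto_of_eventually_haagerupLE {X : Type*} [NormedAddCommGroup X]
    [NormedSpace ℂ X] (hNA : ∀ p, IsCStarNorm (NA p)) (hNB : ∀ q, IsCStarNorm (NB q))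
    {ι : A ⊗[ℂ] B →ₗ[ℂ] X} (hι : ∀ z, ‖ι z‖ ≤ osProjNorm NA NB z) {κ : Type*} {l : Filter κ}
    [l.NeBot] {z : κ → A ⊗[ℂ] B} {x : X} (hz : Tendsto (fun k ↦ ι (z k)) l (𝓝 x))
    (h : ∀ r > 0, ∀ᶠ k in l, HaagerupLE (z k) r)
    (h' : ∀ r > 0, ∀ᶠ k in l, HaagerupLE (TensorProduct.comm ℂ A B (z k)) r) : x = 0 := by
  refine SeparatingDual.eq_zero_of_forall_dual_eq_zero (R := ℂ) fun u ↦ norm_le_zero_iff.1 ?_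
  have hux (r : ℝ) (hr : 0 < r) : ‖u x‖ ≤ 32800 * ‖u‖ * r := by
    refine le_of_tendsto ((u.continuous.tendsto x).comp hz).norm ?_
    filter_upwards [h r hr, h' r hr] with k hk hk'
    exact norm_apply_le_of_haagerupLE hNA hNB hι u hr hk hk'
  have hlim : Tendsto (fun r : ℝ ↦ 32800 * ‖u‖ * r) (𝓝[>] 0) (𝓝 0) :=
    (Continuous.tendsto' (by fun_prop) 0 0 (mul_zero _)).mono_left nhdsWithin_le_nhds
  exact ge_of_tendsto hlim (eventually_nhdsWithin_of_forall hux)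

theorem sliceMaps_total_general {X : Type*} [NormedAddCommGroup X] [NormedSpace ℂ X]
    (hNA : ∀ p, IsCStarNorm (NA p)) (hNB : ∀ q, IsCStarNorm (NB q))
    {ι : A ⊗[ℂ] B →ₗ[ℂ] X} (hι : ∀ z, ‖ι z‖ = osProjNorm NA NB z) (hι_dense : DenseRange ι)
    {R : (A →L[ℂ] ℂ) → X →L[ℂ] B} (hR : ∀ φ a b, R φ (ι (a ⊗ₜ[ℂ] b)) = φ a • b)
    {x : X} (hx : ∀ φ, R φ x = 0) : x = 0 := by
  obtain ⟨w, ρ, hρ, hw, hlim⟩ := exists_tendsto_sum_range_haagerupLE hNA hNB hι hι_dense x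
  have hslice (φ : A →L[ℂ] ℂ) (ψ : B →L[ℂ] ℂ) :
      Tendsto (fun m ↦ TensorProduct.dualDistrib ℂ A B (φ.toLinearMap ⊗ₜ ψ.toLinearMap)
        (∑ k ∈ Finset.range m, w k)) atTop (𝓝 0) := by
    have hψR : TensorProduct.dualDistrib ℂ A B (φ.toLinearMap ⊗ₜ ψ.toLinearMap) =
        (ψ ∘L R φ).toLinearMap ∘ₗ ι := TensorProduct.ext' fun a b ↦ by simp [hR]
    have h := ((ψ ∘L R φ).continuous.tendsto x).comp hlim
    rw [ContinuousLinearMap.comp_apply, hx, map_zero] at h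
    rwa [hψR]
  exact eq_zero_of_tendsto_of_eventually_haagerupLE hNA hNB (fun z ↦ (hι z).le) hlim
    (fun _ hr ↦ eventually_haagerupLE_sum_range hρ (fun k ↦ (hw k).1) hslice hr)
    (fun _ hr ↦ eventually_haagerupLE_comm_sum_range hρ (fun k ↦ (hw k).2) hslice hr)

end SliceMaps

/-- For C⋆-algebras `A`, `B`: if `x ∈ A ⊗̂ B` satisfies `R_φ x = 0` for
every `φ ∈ A*`, then `x = 0`; i.e. the right slice maps `{R_φ : φ ∈ A*}` are total on the
operator space projective tensor product `A ⊗̂ B`.  Here `X`, together with the dense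
isometric embedding `ι` of the algebraic tensor product equipped with the `∧`-norm
(relative to the canonical matrix C⋆-norms `NA`, `NB`), realizes `A ⊗̂ B`, and
`R φ` is the right slice map determined by `R_φ(a ⊗ b) = φ(a) b`. -/
theorem sliceMaps_total {A B X : Type u} [NonUnitalCStarAlgebra A] [NonUnitalCStarAlgebra B]
    [NonUnitalNormedRing X] [StarRing X] [NormedSpace ℂ X] [CompleteSpace X]
    [IsScalarTower ℂ X X] [SMulCommClass ℂ X X]
    (NA : ∀ p : ℕ, Matrix (Fin p) (Fin p) A → ℝ)
    (NB : ∀ q : ℕ, Matrix (Fin q) (Fin q) B → ℝ)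
    (hNA : ∀ p, IsCStarNorm (NA p)) (hNB : ∀ q, IsCStarNorm (NB q))
    (ι : A ⊗[ℂ] B →ₗ[ℂ] X) (hX : IsTensorCompletion (osProjNorm NA NB) X ι)
    (R : (A →L[ℂ] ℂ) → X →L[ℂ] B)
    (hR : ∀ (φ : A →L[ℂ] ℂ) (a : A) (b : B), R φ (ι (a ⊗ₜ[ℂ] b)) = φ a • b)
    (x : X) (hx : ∀ φ : A →L[ℂ] ℂ, R φ x = 0) : x = 0 :=
  sliceMaps_total_general hNA hNB hX.norm_eq hX.dense hR hx

end
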